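/- arXiv:2003.08083 — 4 statements merged into one kernel-verified Lean document; each statement's English description precedes it below -/
import Mathlib

section
/- The series ∑_{a ≥ 1} μ²(a)/φ(a²) over all positive integers a converges and its sum is at most 1.95. -/
theorem aux_term (a : ℕ) (h : Squarefree a) :
    (1 : ℝ) / (Nat.totient (a ^ 2)) = ∏ p ∈ a.primeFactors, (1 : ℝ) / (p * (p - 1)) := by
  have h1 : Nat.totient (a ^ 2) = a * ∏ p ∈ a.primeFactors, (p - 1) := by
    rw [Nat.totient_eq_div_primeFactors_mul, Nat.primeFactors_pow a two_ne_zero,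
      Nat.prod_primeFactors_of_squarefree h, pow_two,
      Nat.mul_div_cancel _ (Nat.pos_of_ne_zero h.ne_zero)]
  have h3 : (Nat.totient (a ^ 2) : ℝ) = ∏ p ∈ a.primeFactors, ((p : ℝ) * (p - 1)) := by
    rw [h1, Finset.prod_mul_distrib, Nat.cast_mul]
    congr 1
    · rw [← Nat.cast_prod, Nat.prod_primeFactors_of_squarefree h]
    · rw [Nat.cast_prod]
      refine Finset.prod_congr rfl fun p hp => ?_
      rw [Nat.cast_sub (Nat.prime_of_mem_primeFactors hp).one_le, Nat.cast_one]
  rw [h3, Finset.prod_div_distrib, Finset.prod_const_one]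

/-- The Euler product over the primes below `n`. -/
noncomputable def eulerPart (n : ℕ) : ℝ :=
  ∏ i ∈ Finset.range n, if Nat.Prime i then 1 + (1 : ℝ) / (i * (i - 1)) else 1

theorem aux_nonneg (p : ℕ) : (0 : ℝ) ≤ (1 : ℝ) / (p * (p - 1)) := by
  rcases Nat.eq_zero_or_pos p with rfl | hp
  · simp
  · have : (1 : ℝ) ≤ p := by exact_mod_cast hp
    exact div_nonneg zero_le_one (mul_nonneg (by linarith) (by linarith))

theorem aux_sum (n : ℕ) :
    ∑ a ∈ Finset.range n, (if Squarefree a then (1 : ℝ) / (Nat.totient (a ^ 2)) else 0)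
      ≤ eulerPart n := by
  unfold eulerPart
  rw [← Finset.prod_filter, Finset.prod_one_add, ← Finset.sum_filter,
    Finset.sum_congr rfl (fun a ha => aux_term a (Finset.mem_filter.1 ha).2)]
  have hinj : Set.InjOn Nat.primeFactors
      ((Finset.range n).filter Squarefree : Finset ℕ) := by
    intro a ha b hb hab
    have ha := (Finset.mem_filter.1 ha).2
    have hb := (Finset.mem_filter.1 hb).2
    rw [← Nat.prod_primeFactors_of_squarefree ha, ← Nat.prod_primeFactors_of_squarefree hb, hab]
  rw [← Finset.sum_image (f := fun s : Finset ℕ => ∏ p ∈ s, (1 : ℝ) / (p * (p - 1))) hinj]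
  apply Finset.sum_le_sum_of_subset_of_nonneg
  · intro s hs
    obtain ⟨a, ha, rfl⟩ := Finset.mem_image.1 hs
    obtain ⟨ha, hsq⟩ := Finset.mem_filter.1 ha
    rw [Finset.mem_powerset]
    intro p hp
    have hp' := Nat.le_of_mem_primeFactors hp
    rw [Finset.mem_filter, Finset.mem_range]
    exact ⟨lt_of_le_of_lt hp' (Finset.mem_range.1 ha), Nat.prime_of_mem_primeFactors hp⟩
  · intro s _ _
    exact Finset.prod_nonneg fun p _ => aux_nonneg p

theorem euler_nonneg (n : ℕ) : 0 ≤ eulerPart n := by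
  unfold eulerPart
  refine Finset.prod_nonneg fun p _ => ?_
  have := aux_nonneg p
  split_ifs <;> linarith

theorem euler_base : eulerPart 151 ≤ 1.95 * (1 - 1 / (4 * 75 - 2)) := by
  unfold eulerPart
  simp only [Finset.prod_range_succ, Finset.prod_range_zero]
  norm_num

theorem euler_odd (k : ℕ) (hk : 75 ≤ k) :
    eulerPart (2 * k + 1) ≤ 1.95 * (1 - 1 / (4 * k - 2)) := by
  induction k, hk using Nat.le_induction with
  | base => exact_mod_cast euler_base
  | succ k hk ih =>
    have hk' : (75 : ℝ) ≤ k := by exact_mod_cast hk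
    have e : eulerPart (2 * (k + 1) + 1) ≤
        eulerPart (2 * k + 1) * (1 + 1 / ((2 * k + 1) * (2 * k))) := by
      have h0 := euler_nonneg (2 * k + 1)
      have hnp : ¬ Nat.Prime (2 * k + 1 + 1) := by
        intro h
        rcases h.eq_one_or_self_of_dvd 2 ⟨k + 1, by ring⟩ with h | h <;> omega
      rw [show 2 * (k + 1) + 1 = 2 * k + 1 + 1 + 1 by ring]
      have : eulerPart (2 * k + 1 + 1 + 1) = eulerPart (2 * k + 1) *
          (if Nat.Prime (2 * k + 1) then 1 + (1 : ℝ) / ((2 * k + 1) * (2 * k)) else 1) := by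
        unfold eulerPart
        rw [Finset.prod_range_succ, Finset.prod_range_succ, if_neg hnp, mul_one]
        push_cast
        simp
      rw [this]
      refine mul_le_mul_of_nonneg_left ?_ h0
      have : (0 : ℝ) ≤ 1 / ((2 * k + 1) * (2 * k)) := by positivity
      split_ifs <;> linarith
    refine e.trans ((mul_le_mul_of_nonneg_right ih (by positivity)).trans ?_)
    rw [mul_assoc]
    refine mul_le_mul_of_nonneg_left ?_ (by norm_num)
    push_cast
    obtain ⟨t, rfl⟩ : ∃ t : ℝ, (k : ℝ) = t := ⟨_, rfl⟩
    have a1 : (0 : ℝ) < 4 * k - 2 := by linarith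
    have a2 : (0 : ℝ) < 4 * (k + 1) - 2 := by linarith
    have a3 : (0 : ℝ) < k := by linarith
    have hd : 1 / (4 * (k : ℝ) - 2) - 1 / (4 * (k + 1) - 2)
        = 1 / ((2 * k + 1) * (2 * k - 1)) := by
      have : (2 * (k : ℝ) - 1) ≠ 0 := by linarith
      have : (2 * (k : ℝ) + 1) ≠ 0 := by linarith
      rw [show 4 * (k : ℝ) - 2 = 2 * (2 * k - 1) by ring,
        show 4 * ((k : ℝ) + 1) - 2 = 2 * (2 * k + 1) by ring]
      field_simp
      ring
    have hle : 1 / ((2 * (k : ℝ) + 1) * (2 * k)) ≤ 1 / ((2 * k + 1) * (2 * k - 1)) := by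
      apply one_div_le_one_div_of_le
      · exact mul_pos (by linarith) (by linarith)
      · exact mul_le_mul_of_nonneg_left (by linarith) (by linarith)
    have hx : 0 ≤ 1 / (4 * (k : ℝ) - 2) * (1 / ((2 * (k : ℝ) + 1) * (2 * k))) :=
      mul_nonneg (one_div_nonneg.2 a1.le) (by positivity)
    linarith

theorem aux_bound (n : ℕ) :
    ∑ a ∈ Finset.range n, (if Squarefree a then (1 : ℝ) / (Nat.totient (a ^ 2)) else 0)
      ≤ 1.95 := by
  have h1 : n ≤ 2 * (n + 75) + 1 := by omega
  refine (Finset.sum_le_sum_of_subset_of_nonneg (Finset.range_mono h1) ?_).trans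
    ((aux_sum _).trans ((euler_odd (n + 75) (by omega)).trans ?_))
  · intro i _ _
    split_ifs <;> positivity
  · have : (0 : ℝ) ≤ 1 / (4 * ((n + 75 : ℕ) : ℝ) - 2) := by
      apply one_div_nonneg.2
      push_cast
      have : (0 : ℝ) ≤ n := Nat.cast_nonneg n
      linarith
    linarith

/-- The series `∑_{a ≥ 1} μ²(a)/φ(a²)` over all positive integers `a` converges and
its sum is at most `1.95`. -/
theorem tsum_squarefree_inv_totient_sq_le :
    Summable (fun a : ℕ => if Squarefree a then (1 : ℝ) / (Nat.totient (a ^ 2)) else 0) ∧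
    (∑' a : ℕ, if Squarefree a then (1 : ℝ) / (Nat.totient (a ^ 2)) else 0) ≤ 1.95 := by
  have h0 : ∀ a : ℕ, (0 : ℝ) ≤ if Squarefree a then (1 : ℝ) / (Nat.totient (a ^ 2)) else 0 := by
    intro i
    split_ifs <;> positivity
  exact ⟨summable_of_sum_range_le h0 aux_bound, Real.tsum_le_of_sum_range_le h0 aux_bound⟩
end

section
/- For every integer n ≥ 3, one has ∑_{p ≤ n, p ≡ n (mod 3)} μ²(n−p)·log p ≤ θ(n;3,n) − θ(n;9,n) − θ(n;12,n) − θ(n;75,n) + θ(n;36,n) + θ(n;225,n) + θ(n;300,n) − θ(n;900,n), where the left-hand sum runs over primes p ≤ n with p ≡ n (mod 3). -/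
open Finset

/-- The Chebyshev theta function for the arithmetic progression `a mod q`:
`θ(x; q, a) = ∑_{p ≤ x, p ≡ a (mod q)} log p`, the sum running over primes. -/
noncomputable def chebyshevThetaAP (x : ℝ) (q a : ℕ) : ℝ :=
  ∑ p ∈ (Finset.range (⌊x⌋₊ + 1)).filter (fun p => p.Prime ∧ p % q = a % q),
    Real.log p

theorem thetaAP_eq_sum_ite (n q : ℕ) : chebyshevThetaAP n q n =
    ∑ p ∈ (Finset.range (n + 1)).filter (fun p => p.Prime),
      (if q ∣ n - p then Real.log p else 0) := by
  unfold chebyshevThetaAP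
  rw [Nat.floor_natCast, ← Finset.filter_filter, Finset.sum_filter]
  refine Finset.sum_congr rfl fun p hp => ?_
  have hpn : p ≤ n := by
    have := (Finset.mem_filter.1 hp).1
    rw [Finset.mem_range] at this
    omega
  have : p % q = n % q ↔ q ∣ n - p := Nat.modEq_iff_dvd' hpn
  simp only [this]

/-- For `n ≥ 3`, `∑_{p ≤ n, p ≡ n (3)} μ²(n−p) log p ≤ θ(n;3,n) − θ(n;9,n) − θ(n;12,n)
− θ(n;75,n) + θ(n;36,n) + θ(n;225,n) + θ(n;300,n) − θ(n;900,n)`. -/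
theorem sum_squarefree_log_le_theta_combination (n : ℕ) (hn : 3 ≤ n) :
    ∑ p ∈ (Finset.range (n + 1)).filter (fun p => p.Prime ∧ p % 3 = n % 3),
        (if Squarefree (n - p) then Real.log p else 0) ≤
      chebyshevThetaAP n 3 n - chebyshevThetaAP n 9 n - chebyshevThetaAP n 12 n
        - chebyshevThetaAP n 75 n + chebyshevThetaAP n 36 n + chebyshevThetaAP n 225 n
        + chebyshevThetaAP n 300 n - chebyshevThetaAP n 900 n := by
  simp only [thetaAP_eq_sum_ite]
  rw [← Finset.filter_filter, Finset.sum_filter]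
  simp only [← Finset.sum_sub_distrib, ← Finset.sum_add_distrib]
  refine Finset.sum_le_sum fun p hp => ?_
  have hpn : p ≤ n := by
    have := (Finset.mem_filter.1 hp).1
    rw [Finset.mem_range] at this
    omega
  have hl : 0 ≤ Real.log p := Real.log_natCast_nonneg p
  have h3 : p % 3 = n % 3 ↔ 3 ∣ n - p := Nat.modEq_iff_dvd' hpn
  simp only [h3]
  generalize n - p = m
  have s4 : Squarefree m → ¬ 4 ∣ m := fun h h' => by
    have := Nat.isUnit_iff.1 (h 2 (by simpa using h'))
    omega
  have s9 : Squarefree m → ¬ 9 ∣ m := fun h h' => by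
    have := Nat.isUnit_iff.1 (h 3 (by simpa using h'))
    omega
  have s25 : Squarefree m → ¬ 25 ∣ m := fun h h' => by
    have := Nat.isUnit_iff.1 (h 5 (by simpa using h'))
    omega
  have e9 : 9 ∣ m ↔ 3 ∣ m ∧ 9 ∣ m := by omega
  have e12 : 12 ∣ m ↔ 3 ∣ m ∧ 4 ∣ m := by omega
  have e75 : 75 ∣ m ↔ 3 ∣ m ∧ 25 ∣ m := by omega
  have e36 : 36 ∣ m ↔ 9 ∣ m ∧ 4 ∣ m := by omega
  have e225 : 225 ∣ m ↔ 9 ∣ m ∧ 25 ∣ m := by omega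
  have e300 : 300 ∣ m ↔ 3 ∣ m ∧ 4 ∣ m ∧ 25 ∣ m := by omega
  have e900 : 900 ∣ m ↔ 9 ∣ m ∧ 4 ∣ m ∧ 25 ∣ m := by omega
  simp only [e12, e75, e36, e225, e300, e900]
  by_cases a3 : 3 ∣ m
  · clear e9 e12 e75 e36 e225 e300 e900 h3
    by_cases a4 : 4 ∣ m <;> by_cases a9 : 9 ∣ m <;> by_cases a25 : 25 ∣ m <;>
      by_cases a : Squarefree m <;> simp_all
  · have a9 : ¬ 9 ∣ m := fun h => a3 (e9.1 h).1
    simp [a3, a9]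
end

section
/- For every real A with 0 < A < 1/2, every integer n ≥ 2, and every integer a with 316 < a ≤ n^A and gcd(a, n) = 1, one has |θ(n; a², n) − n/φ(a²)| ≤ ((1+2A)/(1−2A)) · n/φ(a²). -/
open Finset

/-- Squarefree integers up to `D` coprime to `6`. -/
def BTP (D : ℕ) : Finset ℕ := (Icc 1 D).filter (fun m => Squarefree m ∧ Nat.Coprime m 6)

noncomputable def BTS (D : ℕ) : ℝ := ∑ m ∈ BTP D, 1 / (Nat.totient m : ℝ)

noncomputable def BTH (D : ℕ) : ℝ :=
  ∑ m ∈ BTP D, (∑ d ∈ m.divisors, (d : ℝ)) / (Nat.totient m : ℝ)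

noncomputable def BTlam (D d : ℕ) : ℝ :=
  (ArithmeticFunction.moebius d : ℝ) * d / BTS D *
    ∑ m ∈ BTP D with d ∣ m, 1 / (Nat.totient m : ℝ)

noncomputable def BTkap (Q : ℕ) : ℝ :=
  ∑ s ∈ Q.divisors with (Squarefree s ∧ Nat.Coprime s 6), 1 / (Nat.totient s : ℝ)

lemma mem_BTP {D m : ℕ} : m ∈ BTP D ↔ (1 ≤ m ∧ m ≤ D) ∧ Squarefree m ∧ Nat.Coprime m 6 := by
  simp [BTP]

lemma BTP_dvd {D m d : ℕ} (hm : m ∈ BTP D) (hd : d ∣ m) : d ∈ BTP D := by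
  rw [mem_BTP] at *
  obtain ⟨⟨h1, h2⟩, h3, h4⟩ := hm
  exact ⟨⟨Nat.pos_of_dvd_of_pos hd h1, (Nat.le_of_dvd h1 hd).trans h2⟩,
    h3.squarefree_of_dvd hd, h4.coprime_dvd_left hd⟩

lemma one_mem_BTP {D : ℕ} (hD : 1 ≤ D) : 1 ∈ BTP D := by
  rw [mem_BTP]; exact ⟨⟨le_rfl, hD⟩, squarefree_one, by norm_num⟩

lemma tot_pos {D m : ℕ} (hm : m ∈ BTP D) : (0 : ℝ) < Nat.totient m := by
  rw [mem_BTP] at hm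
  exact_mod_cast Nat.totient_pos.2 hm.1.1

lemma BTS_pos {D : ℕ} (hD : 1 ≤ D) : 0 < BTS D :=
  Finset.sum_pos (fun m hm => by have := tot_pos hm; positivity) ⟨1, one_mem_BTP hD⟩

lemma bt_count (Q d c n : ℕ) (hQ : 0 < Q) (hd : 0 < d) (hQd : Nat.Coprime Q d) :
    |(((Ioc 0 n).filter (fun x => x ≡ c [MOD Q] ∧ d ∣ x)).card : ℝ) - (n : ℝ) / (Q * d)| ≤ 1 := by
  obtain ⟨v, hv1, hv2⟩ := Nat.chineseRemainder hQd c 0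
  have hset : (Ioc 0 n).filter (fun x => x ≡ c [MOD Q] ∧ d ∣ x)
      = (Ioc 0 n).filter (fun x => x ≡ v [MOD (Q * d)]) := by
    apply Finset.filter_congr
    intro x _
    rw [← Nat.modEq_and_modEq_iff_modEq_mul hQd]
    constructor
    · rintro ⟨h1, h2⟩
      exact ⟨h1.trans hv1.symm, ((Nat.modEq_zero_iff_dvd.2 h2).trans hv2.symm)⟩
    · rintro ⟨h1, h2⟩
      exact ⟨h1.trans hv1, Nat.modEq_zero_iff_dvd.1 (h2.trans hv2)⟩
  rw [hset]
  have hpos : 0 < Q * d := Nat.mul_pos hQ hd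
  have h := Nat.Ioc_filter_modEq_card 0 n hpos v
  set K := ((Ioc 0 n).filter (fun x => x ≡ v [MOD (Q * d)])).card with hK
  have hposq : (0 : ℚ) < ((Q * d : ℕ) : ℚ) := by exact_mod_cast hpos
  have hle : (((0 : ℕ) : ℚ) - v) / ((Q * d : ℕ) : ℚ) ≤ ((n : ℚ) - v) / ((Q * d : ℕ) : ℚ) := by
    gcongr; exact Nat.zero_le n
  rw [max_eq_left (sub_nonneg.2 (Int.floor_le_floor hle))] at h
  have h1 := Int.floor_le (((n : ℚ) - v) / ((Q * d : ℕ) : ℚ))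
  have h2 := Int.lt_floor_add_one (((n : ℚ) - v) / ((Q * d : ℕ) : ℚ))
  have h3 := Int.floor_le ((((0 : ℕ) : ℚ) - v) / ((Q * d : ℕ) : ℚ))
  have h4 := Int.lt_floor_add_one ((((0 : ℕ) : ℚ) - v) / ((Q * d : ℕ) : ℚ))
  have hq : (K : ℚ) = (⌊((n : ℚ) - v) / ((Q * d : ℕ) : ℚ)⌋ : ℚ)
      - (⌊(((0 : ℕ) : ℚ) - v) / ((Q * d : ℕ) : ℚ)⌋ : ℚ) := by exact_mod_cast h
  have he : ((n : ℚ) - v) / ((Q * d : ℕ) : ℚ) - (((0 : ℕ) : ℚ) - v) / ((Q * d : ℕ) : ℚ)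
      = (n : ℚ) / (Q * d) := by
    push_cast; ring
  have key : |(K : ℚ) - (n : ℚ) / (Q * d)| ≤ 1 := by
    rw [abs_le]; constructor <;> linarith
  have hr := (Rat.cast_le (K := ℝ)).2 key
  push_cast at hr
  exact hr

lemma bt_moebius (R r : ℕ) (hR : Squarefree R) (hr : r ∣ R) :
    ∑ d ∈ R.divisors with r ∣ d, (ArithmeticFunction.moebius d : ℝ)
      = if r = R then (ArithmeticFunction.moebius r : ℝ) else 0 := by
  obtain ⟨e, rfl⟩ := hr
  have hne : r * e ≠ 0 := hR.ne_zero
  have hr0 : r ≠ 0 := left_ne_zero_of_mul hne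
  have he0 : e ≠ 0 := right_ne_zero_of_mul hne
  have h1 : ∑ d ∈ (r * e).divisors with r ∣ d, (ArithmeticFunction.moebius d : ℝ)
      = ∑ k ∈ e.divisors, (ArithmeticFunction.moebius (r * k) : ℝ) := by
    symm
    apply Finset.sum_bij (fun k _ => r * k)
    · intro k hk
      simp only [mem_filter, Nat.mem_divisors] at *
      exact ⟨⟨Nat.mul_dvd_mul_left r hk.1, hne⟩, dvd_mul_right _ _⟩
    · intro a _ b _ h
      exact Nat.eq_of_mul_eq_mul_left (Nat.pos_of_ne_zero hr0) h
    · intro d hd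
      simp only [mem_filter, Nat.mem_divisors] at hd
      obtain ⟨k, rfl⟩ := hd.2
      exact ⟨k, Nat.mem_divisors.2 ⟨Nat.dvd_of_mul_dvd_mul_left (Nat.pos_of_ne_zero hr0) hd.1.1, he0⟩, rfl⟩
    · intros; rfl
  have h2 : ∀ k ∈ e.divisors, (ArithmeticFunction.moebius (r * k) : ℝ)
      = (ArithmeticFunction.moebius r : ℝ) * (ArithmeticFunction.moebius k : ℝ) := by
    intro k hk
    have hco : Nat.Coprime r k := (Nat.coprime_of_squarefree_mul hR).coprime_dvd_right
      (Nat.dvd_of_mem_divisors hk)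
    rw [ArithmeticFunction.isMultiplicative_moebius.map_mul_of_coprime hco]
    push_cast; ring
  rw [h1, Finset.sum_congr rfl h2, ← Finset.mul_sum]
  have h3 : (∑ k ∈ e.divisors, (ArithmeticFunction.moebius k : ℝ)) = if e = 1 then 1 else 0 := by
    have := congrArg (fun f => f e) ArithmeticFunction.moebius_mul_coe_zeta
    simp only [ArithmeticFunction.coe_mul_zeta_apply, ArithmeticFunction.one_apply] at this
    rw [← Int.cast_sum, this]
    split_ifs <;> simp
  rw [h3]
  by_cases h : e = 1
  · subst h; simp
  · have : r ≠ r * e := by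
      intro h'
      apply h
      exact Nat.eq_of_mul_eq_mul_left (Nat.pos_of_ne_zero hr0) (by rw [mul_one]; exact h'.symm)
    simp [h, this]

lemma bt_lam_one {D : ℕ} (hD : 1 ≤ D) : BTlam D 1 = 1 := by
  have h := (BTS_pos hD).ne'
  have : (∑ m ∈ BTP D with 1 ∣ m, 1 / (Nat.totient m : ℝ)) = BTS D := by
    simp [BTS]
  rw [BTlam, this]; simp; field_simp

lemma bt_sum_abs_lam {D : ℕ} (hD : 1 ≤ D) : ∑ d ∈ BTP D, |BTlam D d| ≤ BTH D / BTS D := by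
  have hS := BTS_pos hD
  have h1 : ∀ d ∈ BTP D, |BTlam D d| ≤
      (∑ m ∈ BTP D, if d ∣ m then (d : ℝ) / Nat.totient m else 0) / BTS D := by
    intro d _
    have hmu : |(ArithmeticFunction.moebius d : ℝ)| ≤ 1 := by
      exact_mod_cast ArithmeticFunction.abs_moebius_le_one
    have hnn : 0 ≤ ∑ m ∈ BTP D with d ∣ m, 1 / (Nat.totient m : ℝ) :=
      Finset.sum_nonneg fun _ _ => by positivity
    rw [BTlam, abs_mul, abs_div, abs_mul, abs_of_pos hS, abs_of_nonneg hnn, Nat.abs_cast,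
      ← Finset.sum_filter]
    have : (∑ m ∈ BTP D with d ∣ m, (d : ℝ) / (Nat.totient m : ℝ))
      = d * ∑ m ∈ BTP D with d ∣ m, 1 / (Nat.totient m : ℝ) := by
      rw [Finset.mul_sum]; exact Finset.sum_congr rfl fun _ _ => by ring
    rw [this]
    have h0 : (0 : ℝ) ≤ d / BTS D * ∑ m ∈ BTP D with d ∣ m, 1 / (Nat.totient m : ℝ) := by positivity
    calc _ = |(ArithmeticFunction.moebius d : ℝ)| * (d / BTS D * ∑ m ∈ BTP D with d ∣ m, 1 / (Nat.totient m : ℝ)) := by ring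
      _ ≤ 1 * (d / BTS D * ∑ m ∈ BTP D with d ∣ m, 1 / (Nat.totient m : ℝ)) := by gcongr
      _ = _ := by ring
  refine (Finset.sum_le_sum h1).trans ?_
  rw [← Finset.sum_div, Finset.sum_comm]
  gcongr
  rw [BTH]
  apply Finset.sum_le_sum
  intro m hm
  rw [Finset.sum_div, ← Finset.sum_filter]
  apply Finset.sum_le_sum_of_subset_of_nonneg
  · intro d hd
    rw [mem_filter] at hd
    exact Nat.mem_divisors.2 ⟨hd.2, by rw [mem_BTP] at hm; omega⟩
  · intros; positivity

/-- the key diagonalised quantity -/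
lemma bt_y {D Q r : ℕ} (hQ : 0 < Q) (hr : r ∈ BTP D) :
    ∑ d ∈ (BTP D).filter (fun d => Nat.Coprime d Q) with r ∣ d, BTlam D d / d
      = (ArithmeticFunction.moebius r : ℝ) / BTS D *
        ∑ m ∈ BTP D with m / Nat.gcd m Q = r, 1 / (Nat.totient m : ℝ) := by
  have h1 : ∀ d ∈ ((BTP D).filter (fun d => Nat.Coprime d Q)).filter (fun d => r ∣ d),
      BTlam D d / d = ∑ m ∈ BTP D, if d ∣ m then
        (ArithmeticFunction.moebius d : ℝ) * (1 / BTS D * (1 / (Nat.totient m : ℝ))) else 0 := by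
    intro d hd
    simp only [mem_filter, mem_BTP] at hd
    have hd0 : (d : ℝ) ≠ 0 := by
      have : d ≠ 0 := by omega
      exact_mod_cast this
    rw [BTlam, ← Finset.sum_filter, Finset.mul_sum, Finset.sum_div]
    exact Finset.sum_congr rfl fun m _ => by field_simp
  rw [Finset.sum_congr rfl h1, Finset.sum_comm]
  have h2 : ∀ m ∈ BTP D, (∑ d ∈ ((BTP D).filter (fun d => Nat.Coprime d Q)).filter (fun d => r ∣ d),
      if d ∣ m then (ArithmeticFunction.moebius d : ℝ) * (1 / BTS D * (1 / (Nat.totient m : ℝ))) else 0)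
      = if m / Nat.gcd m Q = r then
        (ArithmeticFunction.moebius r : ℝ) * (1 / BTS D * (1 / (Nat.totient m : ℝ))) else 0 := by
    intro m hm
    have hm' := mem_BTP.1 hm
    have hm0 : m ≠ 0 := by omega
    have hgd : m.gcd Q ∣ m := Nat.gcd_dvd_left _ _
    have hRm : m / m.gcd Q ∣ m := Nat.div_dvd_of_dvd hgd
    have hRco : Nat.Coprime (m / m.gcd Q) Q := by
      have hmul : m.gcd Q * (m / m.gcd Q) = m := Nat.mul_div_cancel' hgd
      have hc : Nat.Coprime (m.gcd Q) (m / m.gcd Q) := by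
        apply Nat.coprime_of_squarefree_mul; rw [hmul]; exact hm'.2.1
      have h5 : (m / m.gcd Q).gcd Q ∣ m.gcd Q :=
        Nat.dvd_gcd ((Nat.gcd_dvd_left _ _).trans hRm) (Nat.gcd_dvd_right _ _)
      have h6 := Nat.eq_one_of_dvd_coprimes hc h5 (Nat.gcd_dvd_left _ _)
      exact h6
    have hiff : ∀ d, (d ∣ m ∧ Nat.Coprime d Q) ↔ d ∣ m / m.gcd Q := by
      intro d
      constructor
      · rintro ⟨ha, hb⟩
        have hmul : m.gcd Q * (m / m.gcd Q) = m := Nat.mul_div_cancel' hgd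
        rw [← hmul] at ha
        exact (hb.coprime_dvd_right (Nat.gcd_dvd_right _ _)).dvd_of_dvd_mul_left ha
      · intro h
        exact ⟨h.trans hRm, hRco.coprime_dvd_left h⟩
    have hsq : Squarefree (m / m.gcd Q) := hm'.2.1.squarefree_of_dvd hRm
    rw [← Finset.sum_filter]
    have hset : (((BTP D).filter (fun d => Nat.Coprime d Q)).filter (fun d => r ∣ d)).filter (fun d => d ∣ m)
        = (m / m.gcd Q).divisors.filter (fun d => r ∣ d) := by
      ext d
      simp only [mem_filter, Nat.mem_divisors]
      constructor
      · rintro ⟨⟨⟨h1, h2⟩, h3⟩, h4⟩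
        exact ⟨⟨(hiff d).1 ⟨h4, h2⟩, hsq.ne_zero⟩, h3⟩
      · rintro ⟨⟨h1, _⟩, h3⟩
        have := (hiff d).2 h1
        exact ⟨⟨⟨BTP_dvd hm this.1, this.2⟩, h3⟩, this.1⟩
    rw [hset, ← Finset.sum_mul]
    by_cases hrR : r ∣ m / m.gcd Q
    · rw [bt_moebius _ _ hsq hrR]
      by_cases he : r = m / m.gcd Q
      · rw [if_pos he, if_pos he.symm]
      · rw [if_neg he, if_neg (fun h => he h.symm), zero_mul]
    · have : (m / m.gcd Q).divisors.filter (fun d => r ∣ d) = ∅ := by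
        apply Finset.filter_eq_empty_iff.2
        intro d hd h
        exact hrR (h.trans (Nat.dvd_of_mem_divisors hd))
      rw [this, Finset.sum_empty, zero_mul, if_neg]
      intro h; exact hrR (h ▸ dvd_rfl)
  rw [Finset.sum_congr rfl h2, ← Finset.sum_filter, Finset.mul_sum]
  exact Finset.sum_congr rfl fun m _ => by ring

lemma bt_T_le {D Q r : ℕ} (hQ : 0 < Q) (hr : r ∈ BTP D) :
    ∑ m ∈ BTP D with m / Nat.gcd m Q = r, 1 / (Nat.totient m : ℝ) ≤ BTkap Q / Nat.totient r := by
  rw [BTkap, Finset.sum_div]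
  have hinj : Set.InjOn (fun m => Nat.gcd m Q) ((BTP D).filter (fun m => m / Nat.gcd m Q = r) : Finset ℕ) := by
    intro a ha b hb h
    simp only [coe_filter, Set.mem_ofPred_eq] at ha hb
    have h1 := Nat.mul_div_cancel' (Nat.gcd_dvd_left a Q)
    have h2 := Nat.mul_div_cancel' (Nat.gcd_dvd_left b Q)
    simp only at h
    rw [← h1, ← h2, ha.2, hb.2, h]
  have h1 : ∀ m ∈ (BTP D).filter (fun m => m / Nat.gcd m Q = r),
      1 / (Nat.totient m : ℝ) = (fun s => 1 / (Nat.totient s : ℝ) / Nat.totient r) (Nat.gcd m Q) := by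
    intro m hm
    rw [mem_filter] at hm
    have hm' := mem_BTP.1 hm.1
    have h1 := Nat.mul_div_cancel' (Nat.gcd_dvd_left m Q)
    have hc : Nat.Coprime (m.gcd Q) (m / m.gcd Q) := by
      apply Nat.coprime_of_squarefree_mul; rw [h1]; exact hm'.2.1
    have : (Nat.totient m : ℝ) = Nat.totient (m.gcd Q) * Nat.totient r := by
      rw [hm.2] at h1 hc
      conv_lhs => rw [← h1]
      rw [Nat.totient_mul hc]; push_cast; ring
    simp only [this]
    rw [div_div]
  rw [Finset.sum_congr rfl h1, ← Finset.sum_image (f := fun s => 1 / (Nat.totient s : ℝ) / Nat.totient r) hinj]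
  apply Finset.sum_le_sum_of_subset_of_nonneg
  · intro s hs
    rw [mem_image] at hs
    obtain ⟨m, hm, rfl⟩ := hs
    rw [mem_filter] at hm
    have hg := mem_BTP.1 (BTP_dvd hm.1 (Nat.gcd_dvd_left m Q))
    simp only [mem_filter, Nat.mem_divisors]
    exact ⟨⟨Nat.gcd_dvd_right _ _, hQ.ne'⟩, hg.2⟩
  · intros; positivity

lemma bt_inv_lcm (d e : ℕ) (hd : 0 < d) (he : 0 < e) :
    (1 : ℝ) / Nat.lcm d e = ∑ r ∈ (Nat.gcd d e).divisors, (Nat.totient r : ℝ) * (1 / d) * (1 / e) := by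
  rw [← Finset.sum_mul, ← Finset.sum_mul]
  have h1 : (∑ r ∈ (Nat.gcd d e).divisors, (Nat.totient r : ℝ)) = Nat.gcd d e := by
    exact_mod_cast Nat.sum_totient (Nat.gcd d e)
  have h2 : (Nat.gcd d e : ℝ) * Nat.lcm d e = d * e := by exact_mod_cast Nat.gcd_mul_lcm d e
  have h3 : (Nat.lcm d e : ℝ) ≠ 0 := by exact_mod_cast (Nat.lcm_pos hd he).ne'
  have : (d : ℝ) ≠ 0 := by exact_mod_cast hd.ne'
  have : (e : ℝ) ≠ 0 := by exact_mod_cast he.ne'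
  rw [h1]
  field_simp
  linarith

lemma bt_quad {D Q : ℕ} (hD : 1 ≤ D) (hQ : 0 < Q) :
    ∑ d ∈ (BTP D).filter (fun d => Nat.Coprime d Q), ∑ e ∈ (BTP D).filter (fun d => Nat.Coprime d Q),
      BTlam D d * BTlam D e * (1 / (Nat.lcm d e : ℝ)) ≤ BTkap Q / BTS D := by
  set PQ := (BTP D).filter (fun d => Nat.Coprime d Q) with hPQ
  have hS := BTS_pos hD
  have hpos : ∀ d ∈ PQ, 0 < d := fun d hd => by
    rw [hPQ, mem_filter, mem_BTP] at hd; omega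
  have h1 : ∀ d ∈ PQ, ∀ e ∈ PQ, BTlam D d * BTlam D e * (1 / (Nat.lcm d e : ℝ))
      = ∑ r ∈ PQ, (Nat.totient r : ℝ) * ((if r ∣ d then BTlam D d / d else 0) *
          (if r ∣ e then BTlam D e / e else 0)) := by
    intro d hd e he
    rw [bt_inv_lcm d e (hpos d hd) (hpos e he), Finset.mul_sum]
    have hset : (Nat.gcd d e).divisors = PQ.filter (fun r => r ∣ d ∧ r ∣ e) := by
      ext r
      rw [Nat.mem_divisors, mem_filter, Nat.dvd_gcd_iff]
      constructor
      · rintro ⟨⟨h1, h2⟩, _⟩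
        refine ⟨?_, h1, h2⟩
        rw [hPQ, mem_filter] at hd ⊢
        exact ⟨BTP_dvd hd.1 h1, hd.2.coprime_dvd_left h1⟩
      · rintro ⟨_, h1, h2⟩
        exact ⟨⟨h1, h2⟩, (Nat.gcd_pos_of_pos_left _ (hpos d hd)).ne'⟩
    rw [hset, Finset.sum_filter]
    apply Finset.sum_congr rfl
    intro r _
    by_cases ha : r ∣ d <;> by_cases hb : r ∣ e <;> simp [ha, hb]
    ring
  have h2 : ∑ d ∈ PQ, ∑ e ∈ PQ, BTlam D d * BTlam D e * (1 / (Nat.lcm d e : ℝ))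
      = ∑ r ∈ PQ, (Nat.totient r : ℝ) * (∑ d ∈ PQ with r ∣ d, BTlam D d / d) ^ 2 := by
    rw [Finset.sum_congr rfl fun d hd => Finset.sum_congr rfl (h1 d hd)]
    rw [Finset.sum_congr rfl fun d hd => Finset.sum_comm, Finset.sum_comm]
    apply Finset.sum_congr rfl
    intro r _
    have hfe : (∑ d ∈ PQ with r ∣ d, BTlam D d / d) = ∑ d ∈ PQ, if r ∣ d then BTlam D d / d else 0 :=
      Finset.sum_filter _ _
    rw [hfe, sq, Finset.sum_mul_sum, Finset.mul_sum]
    exact Finset.sum_congr rfl fun d _ => by rw [Finset.mul_sum]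
  rw [h2]
  set T : ℕ → ℝ := fun r => ∑ m ∈ BTP D with m / Nat.gcd m Q = r, 1 / (Nat.totient m : ℝ) with hT
  have hT0 : ∀ r, 0 ≤ T r := fun r => Finset.sum_nonneg fun _ _ => by positivity
  have h3 : ∀ r ∈ PQ, (Nat.totient r : ℝ) * (∑ d ∈ PQ with r ∣ d, BTlam D d / d) ^ 2
      ≤ BTkap Q / BTS D ^ 2 * T r := by
    intro r hr
    have hrP : r ∈ BTP D := (mem_filter.1 hr).1
    have hy := bt_y hQ hrP
    rw [← hPQ] at hy
    rw [hy]
    have hmu : (ArithmeticFunction.moebius r : ℝ) ^ 2 ≤ 1 := by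
      have : |(ArithmeticFunction.moebius r : ℝ)| ≤ 1 := by
        exact_mod_cast ArithmeticFunction.abs_moebius_le_one
      exact (sq_le_one_iff_abs_le_one _).2 this
    have hle := bt_T_le hQ hrP
    have ht := tot_pos hrP
    change T r ≤ _ at hle
    change (Nat.totient r : ℝ) * (_ / BTS D * T r) ^ 2 ≤ _
    rw [le_div_iff₀ ht] at hle
    calc (Nat.totient r : ℝ) * ((ArithmeticFunction.moebius r : ℝ) / BTS D * T r) ^ 2
        = (ArithmeticFunction.moebius r : ℝ) ^ 2 * ((T r * Nat.totient r) * T r / BTS D ^ 2) := by ring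
      _ ≤ 1 * (BTkap Q * T r / BTS D ^ 2) := by
          have := hT0 r
          gcongr
      _ = _ := by ring
  refine (Finset.sum_le_sum h3).trans ?_
  rw [← Finset.mul_sum]
  have hk : 0 ≤ BTkap Q := Finset.sum_nonneg fun _ _ => by positivity
  have h4 : ∑ r ∈ PQ, T r ≤ BTS D := by
    calc ∑ r ∈ PQ, T r ≤ ∑ r ∈ BTP D, T r :=
          Finset.sum_le_sum_of_subset_of_nonneg (Finset.filter_subset _ _) fun r _ _ => hT0 r
      _ = BTS D := by
          apply Finset.sum_fiberwise_of_maps_to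
          intro m hm
          exact BTP_dvd hm (Nat.div_dvd_of_dvd (Nat.gcd_dvd_left _ _))
  calc _ ≤ BTkap Q / BTS D ^ 2 * BTS D := by gcongr
    _ = _ := by field_simp

lemma bt_sieve {D Q c n : ℕ} (hD : 1 ≤ D) (hQ : 0 < Q) :
    (((Ioc 0 n).filter (fun p => p.Prime ∧ p ≡ c [MOD Q] ∧ D < p)).card : ℝ)
      ≤ (n : ℝ) / Q * (BTkap Q / BTS D) + (BTH D / BTS D) ^ 2 := by
  set PQ := (BTP D).filter (fun d => Nat.Coprime d Q) with hPQ
  have hpos : ∀ d ∈ PQ, 0 < d := fun d hd => by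
    rw [hPQ, mem_filter, mem_BTP] at hd; omega
  set X := (Ioc 0 n).filter (fun x => x ≡ c [MOD Q]) with hX
  have h1 : (((Ioc 0 n).filter (fun p => p.Prime ∧ p ≡ c [MOD Q] ∧ D < p)).card : ℝ)
      ≤ ∑ x ∈ X, (∑ d ∈ PQ with d ∣ x, BTlam D d) ^ 2 := by
    rw [Finset.card_eq_sum_ones, Nat.cast_sum]
    have hsub : (Ioc 0 n).filter (fun p => p.Prime ∧ p ≡ c [MOD Q] ∧ D < p) ⊆ X := by
      intro p hp
      rw [mem_filter] at hp
      exact mem_filter.2 ⟨hp.1, hp.2.2.1⟩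
    refine le_trans (Finset.sum_le_sum ?_)
      (Finset.sum_le_sum_of_subset_of_nonneg hsub fun _ _ _ => sq_nonneg _)
    intro p hp
    simp only [mem_filter] at hp
    have : PQ.filter (fun d => d ∣ p) = {1} := by
      ext d
      simp only [mem_filter, mem_singleton, hPQ]
      constructor
      · rintro ⟨⟨h1, _⟩, h2⟩
        rcases (Nat.dvd_prime hp.2.1).1 h2 with h | h
        · exact h
        · rw [mem_BTP] at h1; omega
      · rintro rfl
        exact ⟨⟨one_mem_BTP hD, Nat.coprime_one_left _⟩, one_dvd _⟩
    rw [this, Finset.sum_singleton, bt_lam_one hD]; simp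
  have h2 : ∑ x ∈ X, (∑ d ∈ PQ with d ∣ x, BTlam D d) ^ 2
      = ∑ d ∈ PQ, ∑ e ∈ PQ, BTlam D d * BTlam D e *
        ((Ioc 0 n).filter (fun x => x ≡ c [MOD Q] ∧ Nat.lcm d e ∣ x)).card := by
    have : ∀ x ∈ X, (∑ d ∈ PQ with d ∣ x, BTlam D d) ^ 2
        = ∑ d ∈ PQ, ∑ e ∈ PQ, BTlam D d * BTlam D e * (if Nat.lcm d e ∣ x then 1 else 0) := by
      intro x _
      have hfe : (∑ d ∈ PQ with d ∣ x, BTlam D d) = ∑ d ∈ PQ, if d ∣ x then BTlam D d else 0 :=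
        Finset.sum_filter _ _
      rw [hfe, sq, Finset.sum_mul_sum]
      refine Finset.sum_congr rfl fun d _ => Finset.sum_congr rfl fun e _ => ?_
      by_cases ha : d ∣ x <;> by_cases hb : e ∣ x <;> simp [Nat.lcm_dvd_iff, ha, hb]
    rw [Finset.sum_congr rfl this, Finset.sum_comm]
    refine Finset.sum_congr rfl fun d _ => ?_
    rw [Finset.sum_comm]
    refine Finset.sum_congr rfl fun e _ => ?_
    rw [← Finset.mul_sum, Finset.sum_boole, hX, Finset.filter_filter]
  rw [h2] at h1
  refine h1.trans ?_
  have h3 : ∀ d ∈ PQ, ∀ e ∈ PQ, BTlam D d * BTlam D e *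
        ((Ioc 0 n).filter (fun x => x ≡ c [MOD Q] ∧ Nat.lcm d e ∣ x)).card
      ≤ (n : ℝ) / Q * (BTlam D d * BTlam D e * (1 / (Nat.lcm d e : ℝ))) + |BTlam D d| * |BTlam D e| := by
    intro d hd e he
    have hco : Nat.Coprime Q (Nat.lcm d e) := by
      have hd' := (mem_filter.1 hd).2
      have he' := (mem_filter.1 he).2
      exact (Nat.Coprime.coprime_dvd_left (Nat.lcm_dvd_mul d e) (Nat.Coprime.mul_left hd' he')).symm
    have hcnt := bt_count Q (Nat.lcm d e) c n hQ (Nat.lcm_pos (hpos d hd) (hpos e he)) hco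
    set K : ℝ := (((Ioc 0 n).filter (fun x => x ≡ c [MOD Q] ∧ Nat.lcm d e ∣ x)).card : ℝ)
    have h5 : BTlam D d * BTlam D e * (K - n / (Q * Nat.lcm d e)) ≤ |BTlam D d| * |BTlam D e| := by
      calc _ ≤ |BTlam D d * BTlam D e * (K - n / (Q * Nat.lcm d e))| := le_abs_self _
        _ = |BTlam D d| * |BTlam D e| * |K - n / (Q * Nat.lcm d e)| := by rw [abs_mul, abs_mul]
        _ ≤ |BTlam D d| * |BTlam D e| * 1 := by gcongr
        _ = _ := mul_one _
    have h6 : (n : ℝ) / (Q * Nat.lcm d e) = n / Q * (1 / Nat.lcm d e) := by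
      rw [div_mul_div_comm, mul_one]
    rw [h6] at h5
    linarith
  refine (Finset.sum_le_sum fun d hd => Finset.sum_le_sum (h3 d hd)).trans ?_
  simp_rw [Finset.sum_add_distrib, ← Finset.mul_sum]
  rw [← Finset.sum_mul]
  have hq := bt_quad (Q := Q) hD hQ
  rw [← hPQ] at hq
  have ha : ∑ d ∈ PQ, |BTlam D d| ≤ BTH D / BTS D :=
    (Finset.sum_le_sum_of_subset_of_nonneg (Finset.filter_subset _ _) fun _ _ _ => abs_nonneg _).trans
      (bt_sum_abs_lam hD)
  have ha0 : 0 ≤ ∑ d ∈ PQ, |BTlam D d| := Finset.sum_nonneg fun _ _ => abs_nonneg _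
  rw [sq]
  gcongr
  exact ha0.trans ha

lemma bt_prod_one_add (m : ℕ) (hm : Squarefree m) (h : ℕ → ℝ) :
    ∏ p ∈ m.primeFactors, (1 + h p) = ∑ d ∈ m.divisors, ∏ p ∈ d.primeFactors, h p := by
  have hmul : (ArithmeticFunction.prodPrimeFactors h).IsMultiplicative :=
    ArithmeticFunction.IsMultiplicative.prodPrimeFactors h
  have := hmul.prodPrimeFactors_one_add_of_squarefree hm
  rw [Finset.prod_congr rfl (fun p hp => ?_), this]
  · apply Finset.sum_congr rfl
    intro d hd
    exact ArithmeticFunction.prodPrimeFactors_apply (Nat.pos_of_mem_divisors hd).ne'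
  · have hp' := Nat.prime_of_mem_primeFactors hp
    rw [ArithmeticFunction.prodPrimeFactors_apply hp'.ne_zero, hp'.primeFactors, Finset.prod_singleton]

lemma bt_totient_sqfree (m : ℕ) (hm : Squarefree m) :
    (Nat.totient m : ℝ) = ∏ p ∈ m.primeFactors, ((p : ℝ) - 1) := by
  have h := Nat.totient_mul_prod_primeFactors m
  rw [Nat.prod_primeFactors_of_squarefree hm, mul_comm] at h
  have h' := Nat.eq_of_mul_eq_mul_left (Nat.pos_of_ne_zero hm.ne_zero) h
  rw [h', Nat.cast_prod]
  apply Finset.prod_congr rfl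
  intro p hp
  have := (Nat.prime_of_mem_primeFactors hp).one_le
  push_cast [this]; rfl

lemma bt_totient_real (m : ℕ) : (Nat.totient m : ℝ) = m * ∏ p ∈ m.primeFactors, (1 - (p : ℝ)⁻¹) := by
  have := congrArg (fun x : ℚ => (x : ℝ)) (Nat.totient_eq_mul_prod_factors m)
  push_cast at this
  exact this

lemma bt_kap_le (Q : ℕ) (hQ : 0 < Q) (h6 : 6 ∣ Q) : BTkap Q ≤ Q / (3 * Nat.totient Q) := by
  set F := (Q.primeFactors.erase 2).erase 3 with hF
  have hFp : ∀ p ∈ F, p.Prime := fun p hp =>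
    Nat.prime_of_mem_primeFactors (mem_of_mem_erase (mem_of_mem_erase hp))
  have h2Q : 2 ∈ Q.primeFactors := Nat.mem_primeFactors.2 ⟨Nat.prime_two, by omega, hQ.ne'⟩
  have h3Q : 3 ∈ Q.primeFactors := Nat.mem_primeFactors.2 ⟨Nat.prime_three, by omega, hQ.ne'⟩
  have h3Q' : 3 ∈ Q.primeFactors.erase 2 := mem_erase.2 ⟨by norm_num, h3Q⟩
  set R := ∏ p ∈ F, p with hR
  have hRpf : R.primeFactors = F := Nat.primeFactors_prod hFp
  have hR0 : R ≠ 0 := Finset.prod_ne_zero_iff.2 fun p hp => (hFp p hp).ne_zero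
  have hRsq : Squarefree R := by
    rw [hR]
    apply Finset.squarefree_prod_of_pairwise_isCoprime
    · intro a ha b hb hab
      exact Nat.coprime_iff_isRelPrime.1 ((Nat.coprime_primes (hFp a ha) (hFp b hb)).2 hab)
    · intro p hp
      exact (hFp p hp).prime.squarefree
  have h1 : BTkap Q ≤ ∑ s ∈ R.divisors, ∏ p ∈ s.primeFactors, (1 / ((p : ℝ) - 1)) := by
    rw [BTkap]
    have : ∀ s ∈ Q.divisors.filter (fun s => Squarefree s ∧ Nat.Coprime s 6),
        1 / (Nat.totient s : ℝ) = ∏ p ∈ s.primeFactors, (1 / ((p : ℝ) - 1)) := by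
      intro s hs
      rw [bt_totient_sqfree s (mem_filter.1 hs).2.1, Finset.prod_div_distrib, Finset.prod_const_one]
    rw [Finset.sum_congr rfl this]
    apply Finset.sum_le_sum_of_subset_of_nonneg
    · intro s hs
      rw [mem_filter, Nat.mem_divisors] at hs
      obtain ⟨⟨h1, h2⟩, h3, h4⟩ := hs
      refine Nat.mem_divisors.2 ⟨?_, hR0⟩
      rw [← Nat.prod_primeFactors_of_squarefree h3]
      apply Finset.prod_dvd_prod_of_subset
      intro p hp
      have hp' := Nat.mem_primeFactors.1 hp
      rw [hF, mem_erase, mem_erase]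
      refine ⟨?_, ?_, Nat.mem_primeFactors.2 ⟨hp'.1, hp'.2.1.trans h1, h2⟩⟩
      · rintro rfl
        have := Nat.dvd_gcd hp'.2.1 (show 3 ∣ 6 by norm_num)
        rw [h4] at this; omega
      · rintro rfl
        have := Nat.dvd_gcd hp'.2.1 (show 2 ∣ 6 by norm_num)
        rw [h4] at this; omega
    · intro s _ _
      apply Finset.prod_nonneg
      intro p hp
      have : (1 : ℝ) ≤ p := by exact_mod_cast (Nat.prime_of_mem_primeFactors hp).one_le
      apply div_nonneg zero_le_one; linarith
  refine h1.trans (le_of_eq ?_)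
  rw [← bt_prod_one_add R hRsq, hRpf, bt_totient_real Q]
  rw [← Finset.mul_prod_erase _ _ h2Q, ← Finset.mul_prod_erase _ _ h3Q', ← hF]
  have hQr : (Q : ℝ) ≠ 0 := by exact_mod_cast hQ.ne'
  have h5 : ∏ p ∈ F, (1 + 1 / ((p : ℝ) - 1)) = (∏ p ∈ F, (1 - (p : ℝ)⁻¹))⁻¹ := by
    rw [← Finset.prod_inv_distrib]
    apply Finset.prod_congr rfl
    intro p hp
    have h1 : (1 : ℝ) < p := by exact_mod_cast (hFp p hp).one_lt
    have h2 : (p : ℝ) - 1 ≠ 0 := by linarith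
    have h3 : (p : ℝ) ≠ 0 := by linarith
    field_simp
    ring
  rw [h5]
  have hne : (∏ p ∈ F, (1 - (p : ℝ)⁻¹)) ≠ 0 := by
    apply Finset.prod_ne_zero_iff.2
    intro p hp
    have h1 : (1 : ℝ) < p := by exact_mod_cast (hFp p hp).one_lt
    have := inv_lt_one_of_one_lt₀ h1
    linarith
  field_simp
  norm_num

lemma bt_rad_sum (m D : ℕ) (hm : Squarefree m) :
    ∑ k ∈ Icc 1 D with (∏ p ∈ k.primeFactors, p) = m, (1 : ℝ) / k ≤ 1 / Nat.totient m := by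
  have hm0 : (m : ℝ) ≠ 0 := by exact_mod_cast hm.ne_zero
  let f : ℕ →* ℝ :=
    { toFun := fun k => (k : ℝ)⁻¹
      map_one' := by simp
      map_mul' := fun a b => by push_cast; rw [mul_inv] }
  have hf : ∀ {p : ℕ}, p.Prime → ‖f p‖ < 1 := by
    intro p hp
    have h1 : (1 : ℝ) < p := by exact_mod_cast hp.one_lt
    change ‖(p : ℝ)⁻¹‖ < 1
    rw [Real.norm_of_nonneg (by positivity)]
    exact inv_lt_one_of_one_lt₀ h1
  have hs := (EulerProduct.summable_and_hasSum_factoredNumbers_prod_filter_prime_geometric hf m.primeFactors).2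
  have hfil : m.primeFactors.filter Nat.Prime = m.primeFactors :=
    Finset.filter_true_of_mem fun p hp => Nat.prime_of_mem_primeFactors hp
  rw [hfil] at hs
  set K := (Icc 1 D).filter (fun k => (∏ p ∈ k.primeFactors, p) = m) with hK
  have hmem : ∀ k ∈ K, m ∣ k ∧ k / m ∈ Nat.factoredNumbers m.primeFactors := by
    intro k hk
    rw [hK, mem_filter, mem_Icc] at hk
    have hdvd : m ∣ k := hk.2 ▸ Nat.prod_primeFactors_dvd k
    refine ⟨hdvd, ?_⟩
    have hpf : m.primeFactors = k.primeFactors := by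
      rw [← hk.2]; exact Nat.primeFactors_prod fun p hp => Nat.prime_of_mem_primeFactors hp
    have hk0 : k / m ≠ 0 := (Nat.div_pos (Nat.le_of_dvd (by omega) hdvd) (Nat.pos_of_ne_zero hm.ne_zero)).ne'
    rw [Nat.mem_factoredNumbers]
    refine ⟨hk0, fun p hp => ?_⟩
    rw [hpf]
    have := Nat.mem_primeFactorsList hk0 |>.1 hp
    exact Nat.mem_primeFactors.2 ⟨this.1, this.2.trans (Nat.div_dvd_of_dvd hdvd), by omega⟩
  have hsum : ∑ k ∈ K, ((k / m : ℕ) : ℝ)⁻¹ ≤ ∏ p ∈ m.primeFactors, (1 - f p)⁻¹ := by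
    have h1 := sum_le_hasSum (f := fun x : Nat.factoredNumbers m.primeFactors => f x)
      (K.attach.image (fun k => (⟨k.1 / m, (hmem k.1 k.2).2⟩ : Nat.factoredNumbers m.primeFactors)))
      (fun i _ => by change 0 ≤ ((i : ℕ) : ℝ)⁻¹; positivity) hs
    refine le_trans (le_of_eq ?_) h1
    rw [Finset.sum_image]
    · rw [← Finset.sum_attach]
      rfl
    · intro a _ b _ h
      simp only [Subtype.mk.injEq] at h
      have ha := Nat.mul_div_cancel' (hmem a.1 a.2).1
      have hb := Nat.mul_div_cancel' (hmem b.1 b.2).1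
      apply Subtype.ext
      rw [← ha, ← hb, h]
  have h2 : ∀ k ∈ K, (1 : ℝ) / k = 1 / m * ((k / m : ℕ) : ℝ)⁻¹ := by
    intro k hk
    have ha := Nat.mul_div_cancel' (hmem k hk).1
    have : (k : ℝ) = m * ((k / m : ℕ) : ℝ) := by exact_mod_cast ha.symm
    rw [this, one_div, mul_inv, one_div]
  rw [Finset.sum_congr rfl h2, ← Finset.mul_sum, bt_totient_real m]
  have h3 : (∏ p ∈ m.primeFactors, (1 - f p)⁻¹) = (∏ p ∈ m.primeFactors, (1 - (p : ℝ)⁻¹))⁻¹ := by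
    rw [Finset.prod_inv_distrib]; rfl
  rw [h3] at hsum
  rw [one_div, one_div, mul_inv]
  gcongr

lemma bt_S_ge (D : ℕ) : ∑ k ∈ Icc 1 D with Nat.Coprime k 6, (1 : ℝ) / k ≤ BTS D := by
  rw [BTS]
  have hmap : ∀ k ∈ (Icc 1 D).filter (fun k => Nat.Coprime k 6), (∏ p ∈ k.primeFactors, p) ∈ BTP D := by
    intro k hk
    rw [mem_filter, mem_Icc] at hk
    have hd := Nat.prod_primeFactors_dvd k
    rw [mem_BTP]
    refine ⟨⟨Nat.pos_of_dvd_of_pos hd (by omega), (Nat.le_of_dvd (by omega) hd).trans hk.1.2⟩, ?_,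
      hk.2.coprime_dvd_left hd⟩
    rw [← Nat.radical_eq_prod_primeFactors]
    exact UniqueFactorizationMonoid.squarefree_radical
  rw [← Finset.sum_fiberwise_of_maps_to hmap]
  apply Finset.sum_le_sum
  intro m hm
  refine le_trans ?_ (bt_rad_sum m D (mem_BTP.1 hm).2.1)
  apply Finset.sum_le_sum_of_subset_of_nonneg
  · intro k hk
    simp only [mem_filter] at *
    exact ⟨hk.1.1, hk.2⟩
  · intros; positivity

lemma bt_log_step (i : ℕ) (hi : 1 ≤ i) :
    Real.log (i + 1) - Real.log i ≤ 3 * (1 / (6 * i + 1 : ℝ) + 1 / (6 * i + 5)) := by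
  have hi0 : (1 : ℝ) ≤ i := by exact_mod_cast hi
  have hipos : (0 : ℝ) < i := by linarith
  have h1 := Real.hasSum_log_one_add_inv hipos
  have hlog : Real.log (i + 1) - Real.log i = Real.log (1 + (i : ℝ)⁻¹) := by
    rw [← Real.log_div (by positivity) (by positivity)]
    congr 1; field_simp
  rw [hlog]
  set x : ℝ := 1 / (2 * (i : ℝ) + 1) with hx
  have hx0 : 0 < x := by positivity
  have hx1 : x < 1 := by rw [hx, div_lt_one (by positivity)]; linarith
  have hx2 : x ^ 2 < 1 := by nlinarith
  have h2 : HasSum (fun k : ℕ => (2 / 3 * x) * (x ^ 2) ^ k) ((2 / 3 * x) * (1 - x ^ 2)⁻¹) :=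
    (hasSum_geometric_of_lt_one (by positivity) hx2).mul_left _
  have h3 : HasSum (fun k : ℕ => if k = 0 then 4 / 3 * x else 0) (4 / 3 * x) :=
    hasSum_ite_eq 0 (4 / 3 * x)
  have h4 := hasSum_le (fun k => ?_) h1 (h2.add h3)
  · refine h4.trans ?_
    have : (1 - x ^ 2)⁻¹ = (2 * (i : ℝ) + 1) ^ 2 / (4 * i * (i + 1)) := by
      rw [hx]
      have : (1 : ℝ) - (1 / (2 * (i : ℝ) + 1)) ^ 2 = (4 * i * (i + 1)) / (2 * (i : ℝ) + 1) ^ 2 := by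
        field_simp; ring
      rw [this, inv_div]
    rw [this, hx]
    rw [← sub_nonneg]
    have e : 3 * (1 / (6 * (i : ℝ) + 1) + 1 / (6 * i + 5)) - (2 / 3 * (1 / (2 * (i : ℝ) + 1)) *
        ((2 * (i : ℝ) + 1) ^ 2 / (4 * i * (i + 1))) + 4 / 3 * (1 / (2 * (i : ℝ) + 1)))
        = (3 * (12 * i + 6) * 6 * i * (i + 1) * (2 * i + 1)
          - (6 * i + 1) * (6 * i + 5) * ((2 * i + 1) ^ 2 + 8 * i * (i + 1)))
          / ((6 * i + 1) * (6 * i + 5) * 6 * i * (i + 1) * (2 * i + 1)) := by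
      field_simp; ring
    rw [e]
    apply div_nonneg _ (by positivity)
    nlinarith [mul_nonneg hipos.le (sub_nonneg.2 hi0)]
  · rcases Nat.eq_zero_or_pos k with rfl | hk
    · simp; linarith
    · have hk1 : (1 : ℝ) ≤ k := by exact_mod_cast hk
      have hne : k ≠ 0 := by omega
      simp only [hne, if_false, add_zero]
      have e : (2 / 3 * x) * (x ^ 2) ^ k = 2 / 3 * x ^ (2 * k + 1) := by
        rw [← pow_mul]; ring
      rw [e]
      have : (2 : ℝ) * (1 / (2 * k + 1)) ≤ 2 / 3 := by
        rw [mul_one_div, div_le_div_iff₀ (by positivity) (by norm_num)]; linarith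
      gcongr

lemma bt_S_ge_log (j : ℕ) (hj : 1 ≤ j) : (3.6 + Real.log j) / 3 ≤ BTS (6 * j - 1) := by
  refine le_trans ?_ (bt_S_ge (6 * j - 1))
  induction j, hj using Nat.le_induction with
  | base =>
    have : (Icc 1 (6 * 1 - 1)).filter (fun k => Nat.Coprime k 6) = {1, 5} := by decide
    rw [this]; norm_num
  | succ j hj ih =>
    have hsub : insert (6 * j + 1) (insert (6 * j + 5) ((Icc 1 (6 * j - 1)).filter (fun k => Nat.Coprime k 6)))
        ⊆ (Icc 1 (6 * (j + 1) - 1)).filter (fun k => Nat.Coprime k 6) := by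
      intro k hk
      simp only [mem_insert, mem_filter, mem_Icc] at *
      rcases hk with rfl | rfl | hk
      · refine ⟨by omega, ?_⟩
        simp
      · refine ⟨by omega, ?_⟩
        simp; decide
      · exact ⟨by omega, hk.2⟩
    refine le_trans ?_ (Finset.sum_le_sum_of_subset_of_nonneg hsub fun _ _ _ => by positivity)
    rw [Finset.sum_insert, Finset.sum_insert]
    · have := bt_log_step j hj
      push_cast
      linarith
    · simp only [mem_filter, mem_Icc]; omega
    · simp only [mem_insert, mem_filter, mem_Icc]; omega

noncomputable def BTg (d : ℕ) : ℝ := ∏ p ∈ d.primeFactors, (2 / ((p : ℝ) - 1))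

lemma BTg_nonneg (d : ℕ) : 0 ≤ BTg d := by
  apply Finset.prod_nonneg
  intro p hp
  have : (1 : ℝ) ≤ p := by exact_mod_cast (Nat.prime_of_mem_primeFactors hp).one_le
  apply div_nonneg (by norm_num); linarith

lemma bt_sigma (m : ℕ) (hm : Squarefree m) :
    (∑ d ∈ m.divisors, (d : ℝ)) / (Nat.totient m : ℝ) = ∑ d ∈ m.divisors, BTg d := by
  have h1 : (∑ d ∈ m.divisors, (d : ℝ)) = ∏ p ∈ m.primeFactors, (1 + (p : ℝ)) := by
    rw [bt_prod_one_add m hm]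
    apply Finset.sum_congr rfl
    intro d hd
    have hsq := hm.squarefree_of_dvd (Nat.dvd_of_mem_divisors hd)
    rw [← Nat.cast_prod, Nat.prod_primeFactors_of_squarefree hsq]
  have h2 : ∑ d ∈ m.divisors, BTg d = ∏ p ∈ m.primeFactors, (1 + 2 / ((p : ℝ) - 1)) :=
    (bt_prod_one_add m hm _).symm
  rw [h1, h2, bt_totient_sqfree m hm, ← Finset.prod_div_distrib]
  apply Finset.prod_congr rfl
  intro p hp
  have h1 : (1 : ℝ) < p := by exact_mod_cast (Nat.prime_of_mem_primeFactors hp).one_lt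
  have : (p : ℝ) - 1 ≠ 0 := by linarith
  field_simp; ring

lemma bt_g_sq (d : ℕ) (hd : Squarefree d) (h6 : Nat.Coprime d 6) : BTg d ^ 2 * d ≤ 5 / 4 := by
  have hpr : ∀ p ∈ d.primeFactors, p = 5 ∨ 7 ≤ p := by
    intro p hp
    have hp' := Nat.mem_primeFactors.1 hp
    by_contra! h
    have h7 : p < 7 := h.2
    have h5 := h.1
    have hpp := hp'.1
    interval_cases p
    · exact absurd hpp (by norm_num)
    · exact absurd hpp (by norm_num)
    · have := Nat.dvd_gcd hp'.2.1 (show 2 ∣ 6 by norm_num)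
      rw [h6] at this; omega
    · have := Nat.dvd_gcd hp'.2.1 (show 3 ∣ 6 by norm_num)
      rw [h6] at this; omega
    · exact absurd hpp (by norm_num)
    · exact h5 rfl
    · exact absurd hpp (by norm_num)
  have he : BTg d ^ 2 * d = ∏ p ∈ d.primeFactors, ((2 / ((p : ℝ) - 1)) ^ 2 * p) := by
    rw [Finset.prod_mul_distrib, Finset.prod_pow, ← Nat.cast_prod, Nat.prod_primeFactors_of_squarefree hd]
    rfl
  have h7 : ∀ p ∈ d.primeFactors, 7 ≤ p → (2 / ((p : ℝ) - 1)) ^ 2 * p ≤ 1 := by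
    intro p _ h
    have h' : (7 : ℝ) ≤ p := by exact_mod_cast h
    rw [div_pow, div_mul_eq_mul_div, div_le_one (by nlinarith)]
    nlinarith
  rw [he]
  by_cases h5 : 5 ∈ d.primeFactors
  · rw [← Finset.mul_prod_erase _ _ h5]
    have : ∏ p ∈ d.primeFactors.erase 5, ((2 / ((p : ℝ) - 1)) ^ 2 * p) ≤ 1 := by
      apply Finset.prod_le_one
      · intros; positivity
      · intro p hp
        rw [mem_erase] at hp
        exact h7 p hp.2 ((hpr p hp.2).resolve_left hp.1)
    push_cast
    nlinarith
  · have : ∏ p ∈ d.primeFactors, ((2 / ((p : ℝ) - 1)) ^ 2 * p) ≤ 1 := by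
      apply Finset.prod_le_one
      · intros; positivity
      · intro p hp
        exact h7 p hp ((hpr p hp).resolve_left (fun h => h5 (h ▸ hp)))
    linarith

lemma bt_card_cop (x : ℕ) : ((Icc 1 x).filter (fun k => Nat.Coprime k 6)).card ≤ (x + 2) / 3 := by
  have hmod : ∀ k, Nat.Coprime k 6 → k % 6 = 1 ∨ k % 6 = 5 := by
    intro k hk
    have h2 : ¬ 2 ∣ k := fun h => by
      have := Nat.dvd_gcd h (show 2 ∣ 6 by norm_num); rw [hk] at this; omega
    have h3 : ¬ 3 ∣ k := fun h => by
      have := Nat.dvd_gcd h (show 3 ∣ 6 by norm_num); rw [hk] at this; omega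
    omega
  rw [← Finset.card_range ((x + 2) / 3)]
  apply Finset.card_le_card_of_injOn (fun k => k / 3)
  · intro k hk
    simp only [coe_filter, mem_Icc, Set.mem_ofPred_eq] at hk
    have := hmod k hk.2
    simp only [coe_range, Set.mem_Iio]
    omega
  · intro a ha b hb h
    simp only [coe_filter, mem_Icc, Set.mem_ofPred_eq] at ha hb h
    have := hmod a ha.2
    have := hmod b hb.2
    omega

lemma bt_H_le_sum (D : ℕ) : BTH D ≤ ∑ d ∈ BTP D, BTg d * (((D : ℝ) / d + 2) / 3) := by
  have h1 : BTH D = ∑ m ∈ BTP D, ∑ d ∈ BTP D, if d ∣ m then BTg d else 0 := by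
    rw [BTH]
    apply Finset.sum_congr rfl
    intro m hm
    rw [bt_sigma m (mem_BTP.1 hm).2.1, ← Finset.sum_filter]
    apply Finset.sum_congr _ fun _ _ => rfl
    ext d
    rw [Nat.mem_divisors, mem_filter]
    constructor
    · rintro ⟨h, _⟩; exact ⟨BTP_dvd hm h, h⟩
    · rintro ⟨_, h⟩; exact ⟨h, by rw [mem_BTP] at hm; omega⟩
  rw [h1, Finset.sum_comm]
  apply Finset.sum_le_sum
  intro d hd
  have hd' := mem_BTP.1 hd
  rw [← Finset.sum_filter, Finset.sum_const, nsmul_eq_mul, mul_comm]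
  apply mul_le_mul_of_nonneg_left _ (BTg_nonneg d)
  have hc : ((BTP D).filter (fun m => d ∣ m)).card ≤ (D / d + 2) / 3 := by
    refine le_trans ?_ (bt_card_cop (D / d))
    apply Finset.card_le_card_of_injOn (fun m => m / d)
    · intro m hm
      simp only [coe_filter, Set.mem_ofPred_eq, mem_Icc] at hm ⊢
      have hm' := mem_BTP.1 hm.1
      refine ⟨⟨Nat.div_pos (Nat.le_of_dvd (by omega) hm.2) (by omega), Nat.div_le_div_right hm'.1.2⟩, ?_⟩
      exact hm'.2.2.coprime_dvd_left (Nat.div_dvd_of_dvd hm.2)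
    · intro a ha b hb h
      simp only [coe_filter, Set.mem_ofPred_eq] at ha hb h
      rw [← Nat.mul_div_cancel' ha.2, ← Nat.mul_div_cancel' hb.2, h]
  have hc' : (((BTP D).filter (fun m => d ∣ m)).card : ℝ) ≤ (((D / d + 2) / 3 : ℕ) : ℝ) := by
    exact_mod_cast hc
  refine hc'.trans (Nat.cast_div_le.trans ?_)
  push_cast
  have := @Nat.cast_div_le ℝ _ _ _ D d
  gcongr

lemma bt_g_le (d : ℕ) (hd : Squarefree d) (h6 : Nat.Coprime d 6) (v : ℝ) (hv : 0 < v)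
    (hvd : v ≤ d) : BTg d ≤ 1.1181 / Real.sqrt v := by
  have h := bt_g_sq d hd h6
  have hr : 0 < Real.sqrt v := Real.sqrt_pos.2 hv
  rw [le_div_iff₀ hr]
  apply le_of_sq_le_sq _ (by norm_num)
  rw [mul_pow, Real.sq_sqrt hv.le]
  have : BTg d ^ 2 * v ≤ BTg d ^ 2 * d := by gcongr
  norm_num
  linarith

lemma bt_tele (v : ℝ) (hv : 4 ≤ v) :
    1 / Real.sqrt v ≤ (Real.sqrt (v + 3) - Real.sqrt (v - 3)) / 3 ∧
    1 / (Real.sqrt v * v) ≤ (1 / Real.sqrt (v - 3) - 1 / Real.sqrt (v + 3)) / 3 := by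
  set r := Real.sqrt v with hr
  set A := Real.sqrt (v - 3) with hA
  set B := Real.sqrt (v + 3) with hB
  have r0 : 0 < r := Real.sqrt_pos.2 (by linarith)
  have A0 : 0 < A := Real.sqrt_pos.2 (by linarith)
  have B0 : 0 < B := Real.sqrt_pos.2 (by linarith)
  have r2 : r ^ 2 = v := Real.sq_sqrt (by linarith)
  have A2 : A ^ 2 = v - 3 := Real.sq_sqrt (by linarith)
  have B2 : B ^ 2 = v + 3 := Real.sq_sqrt (by linarith)
  have hAB : A * B ≤ v := by nlinarith [sq_nonneg (A - B)]
  have hsum : A + B ≤ 2 * r := by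
    apply le_of_sq_le_sq _ (by positivity)
    nlinarith
  have e : B - A = 6 / (A + B) := by
    rw [eq_div_iff (by positivity)]; nlinarith
  constructor
  · rw [e, div_div, div_le_div_iff₀ r0 (by positivity)]; nlinarith
  · have e2 : (1 / A - 1 / B) / 3 = 2 / ((A * B) * (A + B)) := by
      have : 1 / A - 1 / B = (B - A) / (A * B) := by field_simp
      rw [this, e]; field_simp; norm_num
    rw [e2, div_le_div_iff₀ (by positivity) (by positivity)]
    have : (A * B) * (A + B) ≤ v * (2 * r) := by gcongr
    nlinarith

lemma bt_H_ind (D : ℝ) (hD : 0 ≤ D) (k : ℕ) (hk : 1 ≤ k) :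
    ∑ d ∈ BTP (6 * k + 1), BTg d * ((D / d + 2) / 3) ≤
      (D + 2) / 3 + (D / 5 + 2) / 6 + (D / 7 + 2) / 9 +
      2 * (1.1181 / 3) * (D / 3 * (1 / Real.sqrt 8 - 1 / Real.sqrt (6 * k + 2))
        + 2 / 3 * (Real.sqrt (6 * k + 2) - Real.sqrt 8)) := by
  induction k, hk using Nat.le_induction with
  | base =>
    have h1 : BTP (6 * 1 + 1) = {1, 5, 7} := by
      ext m; rw [mem_BTP]
      simp only [mem_insert, mem_singleton]
      constructor
      · rintro ⟨⟨h1, h2⟩, h3, h4⟩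
        interval_cases m <;> simp_all <;> revert h4 <;> decide
      · rintro (rfl | rfl | rfl)
        · exact ⟨by norm_num, squarefree_one, by norm_num⟩
        · exact ⟨by norm_num, (Nat.prime_five.prime.irreducible.squarefree), by norm_num⟩
        · exact ⟨by norm_num, ((by norm_num : Nat.Prime 7).prime.irreducible.squarefree), by norm_num⟩
    have g1 : BTg 1 = 1 := by simp [BTg]
    have g5 : BTg 5 = 1 / 2 := by
      rw [BTg, Nat.Prime.primeFactors (by norm_num)]; norm_num
    have g7 : BTg 7 = 1 / 3 := by
      rw [BTg, Nat.Prime.primeFactors (by norm_num)]; norm_num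
    rw [h1, Finset.sum_insert (by decide), Finset.sum_insert (by decide), Finset.sum_singleton,
      g1, g5, g7]
    norm_num
    linarith
  | succ k hk ih =>
    have hsub : BTP (6 * (k + 1) + 1) ⊆ BTP (6 * k + 1) ∪ (({6 * k + 5, 6 * k + 7} : Finset ℕ).filter
        (fun m => Squarefree m ∧ Nat.Coprime m 6)) := by
      intro m hm
      rw [mem_BTP] at hm
      rw [mem_union, mem_BTP, mem_filter]
      obtain ⟨⟨h1, h2⟩, h3, h4⟩ := hm
      have h2' : ¬ 2 ∣ m := fun h => by
        have := Nat.dvd_gcd h (show 2 ∣ 6 by norm_num); rw [h4] at this; omega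
      have h3' : ¬ 3 ∣ m := fun h => by
        have := Nat.dvd_gcd h (show 3 ∣ 6 by norm_num); rw [h4] at this; omega
      simp only [mem_insert, mem_singleton]
      by_cases h : m ≤ 6 * k + 1
      · left; exact ⟨⟨h1, h⟩, h3, h4⟩
      · right; exact ⟨by omega, h3, h4⟩
    have hnn : ∀ d : ℕ, 0 ≤ BTg d * ((D / d + 2) / 3) := fun d => by
      have := BTg_nonneg d; positivity
    refine (Finset.sum_le_sum_of_subset_of_nonneg hsub fun d _ _ => hnn d).trans ?_
    have hun := Finset.sum_union_inter (s₁ := BTP (6 * k + 1))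
      (s₂ := (({6 * k + 5, 6 * k + 7} : Finset ℕ).filter (fun m => Squarefree m ∧ Nat.Coprime m 6)))
      (f := fun d : ℕ => BTg d * ((D / d + 2) / 3))
    have hi := Finset.sum_nonneg (s := BTP (6 * k + 1) ∩ (({6 * k + 5, 6 * k + 7} : Finset ℕ).filter
        (fun m => Squarefree m ∧ Nat.Coprime m 6))) fun d _ => hnn d
    obtain ⟨t1, t2⟩ := bt_tele (6 * k + 5) (by positivity |> fun (h : (0 : ℝ) ≤ 6 * k) => by linarith)
    have hvpos : (0 : ℝ) < 6 * k + 5 := by positivity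
    rw [show (6 * (k : ℝ) + 5 + 3) = 6 * k + 8 by ring, show (6 * (k : ℝ) + 5 - 3) = 6 * k + 2 by ring] at t1 t2
    set W : ℝ := 1.1181 / 3 * (D / 3 * (1 / Real.sqrt (6 * k + 2) - 1 / Real.sqrt (6 * k + 8))
        + 2 / 3 * (Real.sqrt (6 * k + 8) - Real.sqrt (6 * k + 2))) with hW
    have hw : ∀ d ∈ (({6 * k + 5, 6 * k + 7} : Finset ℕ).filter (fun m => Squarefree m ∧ Nat.Coprime m 6)),
        BTg d * ((D / d + 2) / 3) ≤ W := by
      intro d hd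
      simp only [mem_filter, mem_insert, mem_singleton] at hd
      have hvd : (6 * k + 5 : ℝ) ≤ d := by
        have : 6 * k + 5 ≤ d := by omega
        exact_mod_cast this
      have hg := bt_g_le d hd.2.1 hd.2.2 (6 * k + 5) hvpos hvd
      have hs : 0 < Real.sqrt (6 * k + 5) := Real.sqrt_pos.2 hvpos
      calc BTg d * ((D / d + 2) / 3) ≤ 1.1181 / Real.sqrt (6 * k + 5) * ((D / (6 * k + 5) + 2) / 3) := by
            gcongr
        _ = 1.1181 / 3 * (D * (1 / (Real.sqrt (6 * k + 5) * (6 * k + 5))) + 2 * (1 / Real.sqrt (6 * k + 5))) := by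
            field_simp
        _ ≤ 1.1181 / 3 * (D * ((1 / Real.sqrt (6 * k + 2) - 1 / Real.sqrt (6 * k + 8)) / 3)
              + 2 * ((Real.sqrt (6 * k + 8) - Real.sqrt (6 * k + 2)) / 3)) := by
            gcongr
        _ = W := by rw [hW]; ring
    have hW0 : 0 ≤ W := by
      have a1 : 0 ≤ 1 / Real.sqrt (6 * k + 5) := by positivity
      have a2 : 0 ≤ 1 / (Real.sqrt (6 * k + 5) * (6 * k + 5)) := by positivity
      have : 0 ≤ (1 / Real.sqrt (6 * k + 2) - 1 / Real.sqrt (6 * k + 8)) := by linarith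
      have : 0 ≤ Real.sqrt (6 * k + 8) - Real.sqrt (6 * k + 2) := by linarith
      positivity
    have hs2 := Finset.sum_le_card_nsmul _ _ W hw
    have hc : ((({6 * k + 5, 6 * k + 7} : Finset ℕ).filter (fun m => Squarefree m ∧ Nat.Coprime m 6)).card : ℝ) ≤ 2 := by
      have := (Finset.card_filter_le ({6 * k + 5, 6 * k + 7} : Finset ℕ) (fun m => Squarefree m ∧ Nat.Coprime m 6)).trans
        Finset.card_le_two
      exact_mod_cast this
    rw [nsmul_eq_mul] at hs2
    have hs3 := mul_le_mul_of_nonneg_right hc hW0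
    push_cast
    rw [show (6 * ((k : ℝ) + 1) + 2) = 6 * k + 8 by ring]
    rw [hW] at hs2 hs3
    linarith

lemma bt_H_le (j : ℕ) (hj : 12 ≤ j) : BTH (6 * j - 1) ≤ 3.13 * j := by
  have hj' : (12 : ℝ) ≤ j := by exact_mod_cast hj
  have hD : (((6 * j - 1 : ℕ)) : ℝ) = 6 * j - 1 := by
    rw [Nat.cast_sub (by omega)]; push_cast; ring
  have h1 := bt_H_le_sum (6 * j - 1)
  have hnn : ∀ d : ℕ, 0 ≤ BTg d * ((((6 * j - 1 : ℕ) : ℝ) / d + 2) / 3) := fun d => by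
      have := BTg_nonneg d; positivity
  have h2 : ∑ d ∈ BTP (6 * j - 1), BTg d * ((((6 * j - 1 : ℕ) : ℝ) / d + 2) / 3) ≤
      ∑ d ∈ BTP (6 * j + 1), BTg d * ((((6 * j - 1 : ℕ) : ℝ) / d + 2) / 3) := by
    apply Finset.sum_le_sum_of_subset_of_nonneg _ fun d _ _ => hnn d
    intro m hm
    rw [mem_BTP] at *
    exact ⟨by omega, hm.2⟩
  have h3 := bt_H_ind ((6 * j - 1 : ℕ) : ℝ) (by positivity) j (by omega)
  have h4 := h1.trans (h2.trans h3)
  rw [hD] at h4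
  refine h4.trans ?_
  have s8 : (2.828 : ℝ) ≤ Real.sqrt 8 := by
    apply Real.le_sqrt_of_sq_le; norm_num
  have s8' : 1 / Real.sqrt 8 ≤ 1 / 2.828 := by gcongr
  have p1 : 0 ≤ 1 / Real.sqrt (6 * j + 2) := by positivity
  have hs : Real.sqrt (6 * j + 2) ≤ (6 * j + 2 + 73.96) / 17.2 := by
    apply Real.sqrt_le_iff.2
    constructor
    · positivity
    · have : (0 : ℝ) ≤ (6 * j + 2 - 73.96) ^ 2 := sq_nonneg _
      norm_num at this ⊢
      nlinarith
  have h5 : (6 * (j : ℝ) - 1) / 3 * (1 / Real.sqrt 8 - 1 / Real.sqrt (6 * j + 2)) ≤ (6 * (j : ℝ) - 1) / 3 * (1 / 2.828) := by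
    apply mul_le_mul_of_nonneg_left <;> linarith
  norm_num at h5 hs s8 ⊢
  linarith

lemma bt_log_tan (N : ℝ) (hN : 0 < N) (k : ℕ) : Real.log N ≤ k - 1 + N * 0.36788 ^ k := by
  have h := Real.log_le_sub_one_of_pos (x := N * Real.exp (-1) ^ k) (by positivity)
  have he : Real.log (N * Real.exp (-1) ^ k) = Real.log N - k := by
    rw [Real.log_mul hN.ne' (by positivity), Real.log_pow, Real.log_exp]; ring
  rw [he] at h
  have h1 : Real.exp (-1) ≤ 0.36788 := by
    have := Real.exp_neg_one_lt_d9; norm_num at this ⊢; linarith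
  have : N * Real.exp (-1) ^ k ≤ N * 0.36788 ^ k := by gcongr
  linarith

lemma bt_vals5 : BTS 5 = 5 / 4 ∧ BTH 5 = 5 / 2 := by
  have h : BTP 5 = {1, 5} := by decide +kernel
  have d1 : Nat.divisors 1 = {1} := by decide
  have d5 : Nat.divisors 5 = {1, 5} := by decide
  have t1 : Nat.totient 1 = 1 := by decide
  have t5 : Nat.totient 5 = 4 := by decide
  simp only [BTS, BTH]
  constructor
  · rw [h]; rw [Finset.sum_insert (by decide), Finset.sum_singleton, t1, t5]; norm_num
  · rw [h]
    rw [Finset.sum_insert (by decide), Finset.sum_singleton, t1, t5, d1, d5,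
      Finset.sum_singleton, Finset.sum_insert (by decide), Finset.sum_singleton]; norm_num

lemma bt_prime_div (p : ℕ) (hp : p.Prime) :
    1 / (Nat.totient p : ℝ) = 1 / ((p : ℝ) - 1) ∧
    (∑ d ∈ p.divisors, (d : ℝ)) / (Nat.totient p : ℝ) = (p + 1) / ((p : ℝ) - 1) := by
  have : (Nat.totient p : ℝ) = (p : ℝ) - 1 := by
    rw [Nat.totient_prime hp, Nat.cast_sub hp.one_le, Nat.cast_one]
  rw [this]
  refine ⟨rfl, ?_⟩
  rw [hp.sum_divisors, Nat.cast_one]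

lemma bt_vals13 : BTS 13 = 8 / 5 ∧ BTH 13 = 31 / 5 := by
  have h : BTP 13 = BTP 5 ∪ {7, 11, 13} := by decide +kernel
  have hd : Disjoint (BTP 5) ({7, 11, 13} : Finset ℕ) := by decide +kernel
  have v := bt_vals5
  have p7 := bt_prime_div 7 (by norm_num)
  have p11 := bt_prime_div 11 (by norm_num)
  have p13 := bt_prime_div 13 (by norm_num)
  rw [BTS, BTH] at v ⊢
  constructor
  · rw [h, Finset.sum_union hd, v.1, Finset.sum_insert (by decide), Finset.sum_insert (by decide),
      Finset.sum_singleton, p7.1, p11.1, p13.1]; norm_num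
  · rw [h, Finset.sum_union hd, v.2, Finset.sum_insert (by decide), Finset.sum_insert (by decide),
      Finset.sum_singleton, p7.2, p11.2, p13.2]; norm_num

lemma bt_vals35 : BTS 35 = 103907 / 55440 ∧ BTH 35 = 378797 / 27720 := by
  have h : BTP 35 = BTP 13 ∪ {17, 19, 23, 29, 31, 35} := by decide +kernel
  have hd : Disjoint (BTP 13) ({17, 19, 23, 29, 31, 35} : Finset ℕ) := by decide +kernel
  have v := bt_vals13
  have p17 := bt_prime_div 17 (by norm_num)
  have p19 := bt_prime_div 19 (by norm_num)
  have p23 := bt_prime_div 23 (by norm_num)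
  have p29 := bt_prime_div 29 (by norm_num)
  have p31 := bt_prime_div 31 (by norm_num)
  have t35 : Nat.totient 35 = 24 := by decide +kernel
  have d35 : Nat.divisors 35 = {1, 5, 7, 35} := by decide +kernel
  rw [BTS, BTH] at v ⊢
  constructor
  · rw [h, Finset.sum_union hd, v.1]
    rw [Finset.sum_insert (by decide), Finset.sum_insert (by decide), Finset.sum_insert (by decide),
      Finset.sum_insert (by decide), Finset.sum_insert (by decide),
      Finset.sum_singleton, p17.1, p19.1, p23.1, p29.1, p31.1, t35]; norm_num
  · rw [h, Finset.sum_union hd, v.2]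
    rw [Finset.sum_insert (by decide), Finset.sum_insert (by decide), Finset.sum_insert (by decide),
      Finset.sum_insert (by decide), Finset.sum_insert (by decide),
      Finset.sum_singleton, p17.2, p19.2, p23.2, p29.2, p31.2, t35, d35]; norm_num

lemma bt_vals1 : BTS 1 = 1 ∧ BTH 1 = 1 := by
  have h : BTP 1 = {1} := by decide +kernel
  rw [BTS, BTH, h]; simp

lemma bt_piece (N s c t u lo hi : ℝ) (hN : 1 < N) (hs : 0 < s) (hc : 0 < c) (hu : 0 ≤ u)
    (hlog : Real.log N ≤ t + N * u) (hlo : lo ≤ N) (hhi : N ≤ hi)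
    (h1 : (lo / s + c) * (t + lo * u) ≤ lo) (h2 : (hi / s + c) * (t + hi * u) ≤ hi) :
    N / s + c ≤ N / Real.log N := by
  have hl : 0 < Real.log N := Real.log_pos hN
  rw [le_div_iff₀ hl]
  have h3 : (N / s + c) * Real.log N ≤ (N / s + c) * (t + N * u) := by gcongr
  refine h3.trans ?_
  rcases eq_or_lt_of_le (hlo.trans hhi) with e | e
  · have : N = lo := by linarith
    rw [this]; exact h1
  have hus : 0 ≤ u / s := by positivity
  have key : ∀ z : ℝ, (z / s + c) * (t + z * u) - z = u / s * z ^ 2 + (t / s + c * u - 1) * z + c * t := by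
    intro z; ring
  have k1 := key lo
  have k2 := key hi
  have k3 := key N
  have h4 : 0 ≤ (u / s) * ((N - lo) * (hi - N) * (hi - lo)) := by
    apply mul_nonneg hus; apply mul_nonneg <;> [apply mul_nonneg; skip] <;> linarith
  have h5 : 0 ≤ (hi - N) * (lo - (lo / s + c) * (t + lo * u)) := by
    apply mul_nonneg <;> linarith
  have h6 : 0 ≤ (N - lo) * (hi - (hi / s + c) * (t + hi * u)) := by
    apply mul_nonneg <;> linarith
  have h7 : 0 ≤ (hi - lo) * (N - (N / s + c) * (t + N * u)) := by
    have e : (hi - lo) * (N - (N / s + c) * (t + N * u)) =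
      (u / s) * ((N - lo) * (hi - N) * (hi - lo)) + (hi - N) * (lo - (lo / s + c) * (t + lo * u))
        + (N - lo) * (hi - (hi / s + c) * (t + hi * u)) := by ring
    rw [e]; positivity
  have := nonneg_of_mul_nonneg_right h7 (by linarith)
  linarith

lemma bt_small (N : ℝ) (hN : 1 < N) (hN2 : N ≤ 57600) : ∃ D : ℕ, 1 ≤ D ∧
    N / (6 * BTS D) + (BTH D / BTS D) ^ 2 + 1 + (D : ℝ) / 100000 ≤ N / Real.log N := by
  have fin : ∀ D : ℕ, 1 ≤ D → ∀ c : ℝ, (BTH D / BTS D) ^ 2 + 1 + (D : ℝ) / 100000 ≤ c → 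
      ∀ (k : ℕ) (lo hi : ℝ), lo ≤ N → N ≤ hi → 
      (lo / (6 * BTS D) + c) * ((k - 1) + lo * 0.36788 ^ k) ≤ lo →
      (hi / (6 * BTS D) + c) * ((k - 1) + hi * 0.36788 ^ k) ≤ hi → 
      ∃ D : ℕ, 1 ≤ D ∧
      N / (6 * BTS D) + (BTH D / BTS D) ^ 2 + 1 + (D : ℝ) / 100000 ≤ N / Real.log N := by
    intro D hD c hc k lo hi h1 h2 h3 h4
    refine ⟨D, hD, ?_⟩
    have hS := BTS_pos hD
    have hc0 : 0 < c := lt_of_lt_of_le (by positivity) hc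
    have := bt_piece N (6 * BTS D) c (k - 1) (0.36788 ^ k) lo hi hN (by positivity) hc0 (by positivity)
      (bt_log_tan N (by linarith) k) h1 h2 h3 h4
    linarith
  obtain ⟨s1, r1⟩ := bt_vals1
  obtain ⟨s5, r5⟩ := bt_vals5
  obtain ⟨s13, r13⟩ := bt_vals13
  obtain ⟨s35, r35⟩ := bt_vals35
  rcases le_total N 4.3 with h | h1
  · exact fin 1 le_rfl 2.00001 (by rw [s1, r1]; norm_num) 1 0 4.3 (by linarith) h
      (by rw [s1]; norm_num) (by rw [s1]; norm_num)
  rcases le_total N 20 with h | h2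
  · exact fin 1 le_rfl 2.00001 (by rw [s1, r1]; norm_num) 2 4.3 20 (by linarith) h
      (by rw [s1]; norm_num) (by rw [s1]; norm_num)
  rcases le_total N 60 with h | h3
  · exact fin 1 le_rfl 2.00001 (by rw [s1, r1]; norm_num) 3 20 60 (by linarith) h
      (by rw [s1]; norm_num) (by rw [s1]; norm_num)
  rcases le_total N 130 with h | h4
  · exact fin 1 le_rfl 2.00001 (by rw [s1, r1]; norm_num) 4 60 130 (by linarith) h
      (by rw [s1]; norm_num) (by rw [s1]; norm_num)
  rcases le_total N 400 with h | h5
  · exact fin 5 (by norm_num) 5.00005 (by rw [s5, r5]; norm_num) 5 130 400 (by linarith) h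
      (by rw [s5]; norm_num) (by rw [s5]; norm_num)
  rcases le_total N 880 with h | h6
  · exact fin 5 (by norm_num) 5.00005 (by rw [s5, r5]; norm_num) 6 400 880 (by linarith) h
      (by rw [s5]; norm_num) (by rw [s5]; norm_num)
  rcases le_total N 3500 with h | h7
  · exact fin 13 (by norm_num) 16.0158 (by rw [s13, r13]; norm_num) 7 880 3500 (by linarith) h
      (by rw [s13]; norm_num) (by rw [s13]; norm_num)
  rcases le_total N 7000 with h | h8
  · exact fin 13 (by norm_num) 16.0158 (by rw [s13, r13]; norm_num) 8 3500 7000 (by linarith) h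
      (by rw [s13]; norm_num) (by rw [s13]; norm_num)
  rcases le_total N 24000 with h | h9
  · exact fin 35 (by norm_num) 54.161 (by rw [s35, r35]; norm_num) 9 7000 24000 (by linarith) h
      (by rw [s35]; norm_num) (by rw [s35]; norm_num)
  · exact fin 35 (by norm_num) 54.161 (by rw [s35, r35]; norm_num) 11 24000 57600 (by linarith) hN2
      (by rw [s35]; norm_num) (by rw [s35]; norm_num)

set_option maxHeartbeats 600000 in
lemma bt_large (N : ℝ) (hN : 57600 ≤ N) : ∃ D : ℕ, 1 ≤ D ∧
    N / (6 * BTS D) + (BTH D / BTS D) ^ 2 + 1 + (D : ℝ) / 100000 ≤ N / Real.log N := by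
  obtain ⟨x, hx⟩ : ∃ x : ℝ, x = Real.sqrt N / 20 := ⟨_, rfl⟩
  have hx12 : 12 ≤ x := by
    have : (240 : ℝ) ≤ Real.sqrt N := Real.le_sqrt_of_sq_le (by norm_num; linarith)
    rw [hx]; linarith
  have hNx : N = 400 * x ^ 2 := by
    rw [hx, div_pow, Real.sq_sqrt (by linarith)]; ring
  obtain ⟨j, hj⟩ : ∃ j : ℕ, j = ⌊x⌋₊ := ⟨_, rfl⟩
  have hjx : (j : ℝ) ≤ x := by rw [hj]; exact Nat.floor_le (by linarith)
  have hxj : x < j + 1 := by rw [hj]; exact Nat.lt_floor_add_one x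
  have hj12 : 12 ≤ j := by rw [hj]; exact Nat.le_floor (by exact_mod_cast hx12)
  have hj12' : (12 : ℝ) ≤ j := by exact_mod_cast hj12
  have hj0 : (0 : ℝ) < j := by linarith
  refine ⟨6 * j - 1, by omega, ?_⟩
  have hS := bt_S_ge_log j (by omega)
  have hH := bt_H_le j hj12
  have hDle : ((6 * j - 1 : ℕ) : ℝ) ≤ 6 * j := by
    have : 6 * j - 1 ≤ 6 * j := by omega
    exact_mod_cast this
  have hH0 : 0 ≤ BTH (6 * j - 1) := by
    unfold BTH; positivity
  set S := BTS (6 * j - 1)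
  set H := BTH (6 * j - 1)
  set ℓ : ℝ := 3.6 + Real.log j with hℓ
  set L : ℝ := Real.log (20 * x) with hL
  have hlogj : 0 ≤ Real.log j := Real.log_nonneg (by linarith)
  have hℓ0 : 0 < ℓ := by rw [hℓ]; positivity
  have hL0 : 0 < L := Real.log_pos (by linarith)
  have hlogN : Real.log N = 2 * L := by
    rw [hNx, hL, show 400 * x ^ 2 = (20 * x) ^ 2 by ring, Real.log_pow]; norm_num
  have h20 : Real.log 20 ≤ 2.9958 := by
    have := bt_log_tan 20 (by norm_num) 3
    norm_num at this ⊢; linarith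
  have hδ : 1.6042 - x / j ≤ ℓ - L := by
    have e : L = Real.log 20 + Real.log j + Real.log (x / j) := by
      rw [hL, Real.log_mul (by norm_num) (by linarith), Real.log_div (by linarith) (by linarith)]; ring
    have := Real.log_le_sub_one_of_pos (x := x / j) (by positivity)
    rw [e, hℓ]; norm_num at h20 ⊢; linarith
  set y := x / j with hy
  have hxy : x = y * j := by rw [hy]; field_simp
  have hy1 : 1 ≤ y := by rw [hy, one_le_div hj0]; exact hjx
  have hy2 : y ≤ 13 / 12 := by rw [hy, div_le_iff₀ hj0]; linarith
  have hyc : 0.6 ≤ y ^ 2 * (1.6042 - y) := by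
    norm_num
    nlinarith [mul_nonneg (sub_nonneg.2 hy1) (sub_nonneg.2 hy2), mul_nonneg (mul_nonneg (sub_nonneg.2 hy1) (sub_nonneg.2 hy2)) (by linarith : 0 ≤ y)]
  have hNδ : 120 * (j : ℝ) ^ 2 ≤ N * (ℓ - L) / 2 := by
    have h1 : N * (1.6042 - y) ≤ N * (ℓ - L) := by gcongr
    have h2 : N * (1.6042 - y) = 400 * j ^ 2 * (y ^ 2 * (1.6042 - y)) := by rw [hNx, hxy]; ring
    have h3 : 400 * (j : ℝ) ^ 2 * 0.6 ≤ 400 * j ^ 2 * (y ^ 2 * (1.6042 - y)) := by gcongr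
    norm_num at h1 h2 h3
    linarith
  have hLℓ : L ≤ ℓ := by norm_num at hδ; linarith
  have hS0 : 0 < S := lt_of_lt_of_le (by positivity) hS
  have b1 : N / (6 * S) ≤ N / (2 * ℓ) := by
    apply div_le_div_of_nonneg_left <;> linarith
  have b2 : (H / S) ^ 2 ≤ 88.1722 * j ^ 2 / ℓ ^ 2 := by
    have : H / S ≤ (3.13 * j) / (ℓ / 3) := by gcongr
    calc (H / S) ^ 2 ≤ ((3.13 * j) / (ℓ / 3)) ^ 2 := by gcongr
      _ = 88.1721 * j ^ 2 / ℓ ^ 2 := by field_simp; norm_num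
      _ ≤ _ := by gcongr; norm_num
  have b3 : 120 * (j : ℝ) ^ 2 / ℓ ^ 2 ≤ N / (2 * L) - N / (2 * ℓ) := by
    have e : N / (2 * L) - N / (2 * ℓ) = (N * (ℓ - L) / 2) / (L * ℓ) := by field_simp
    rw [e]
    apply div_le_div₀ (le_trans (by positivity) hNδ) hNδ (by positivity)
    nlinarith
  have b4 : 1 + ((6 * j - 1 : ℕ) : ℝ) / 100000 ≤ 31.8 * (j : ℝ) ^ 2 / ℓ ^ 2 := by
    rw [le_div_iff₀ (by positivity)]
    have q : ℓ ≤ 1.6 + 2 * Real.sqrt j := by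
      have h1 := Real.log_le_sub_one_of_pos (x := Real.sqrt j) (Real.sqrt_pos.2 hj0)
      rw [Real.log_sqrt hj0.le] at h1
      rw [hℓ]; norm_num; linarith
    have q2 : ℓ ^ 2 ≤ 5.12 + 8 * j := by
      have h1 : ℓ ^ 2 ≤ (1.6 + 2 * Real.sqrt j) ^ 2 := by gcongr
      have h2 := Real.sq_sqrt hj0.le
      have h3 := sq_nonneg (1.6 - 2 * Real.sqrt j)
      have h4 : (1.6 + 2 * Real.sqrt j) ^ 2 + (1.6 - 2 * Real.sqrt j) ^ 2
          = 5.12 + 8 * Real.sqrt j ^ 2 := by ring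
      rw [h2] at h4
      linarith
    calc (1 + ((6 * j - 1 : ℕ) : ℝ) / 100000) * ℓ ^ 2 ≤ (1 + (6 * j) / 100000) * (5.12 + 8 * j) := by
          gcongr
      _ ≤ _ := by
          have h1 : 12 * (j : ℝ) ≤ j ^ 2 := by
            rw [sq]; gcongr
          norm_num
          linarith
  rw [hlogN]
  have b5 : 88.1722 * (j : ℝ) ^ 2 / ℓ ^ 2 + 31.8 * (j : ℝ) ^ 2 / ℓ ^ 2 ≤ 120 * (j : ℝ) ^ 2 / ℓ ^ 2 := by
    rw [← add_div]
    gcongr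
    have h1 : 0 ≤ (j : ℝ) ^ 2 := by positivity
    norm_num; linarith
  linarith

lemma bt_exists_D (N : ℝ) (hN : 1 < N) : ∃ D : ℕ, 1 ≤ D ∧
    N / (6 * BTS D) + (BTH D / BTS D) ^ 2 + 1 + (D : ℝ) / 100000 ≤ N / Real.log N := by
  rcases le_total N 57600 with h | h
  · exact bt_small N hN h
  · exact bt_large N h

lemma bt_one_le_kap (Q : ℕ) (hQ : 0 < Q) : 1 ≤ BTkap Q := by
  unfold BTkap
  have h1 : 1 ∈ Q.divisors.filter (fun s => Squarefree s ∧ Nat.Coprime s 6) := by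
    rw [mem_filter, Nat.mem_divisors]
    exact ⟨⟨one_dvd _, by omega⟩, squarefree_one, by norm_num⟩
  have := Finset.single_le_sum (f := fun s : ℕ => 1 / (Nat.totient s : ℝ))
    (fun s _ => by positivity) h1
  simpa using this

lemma bt_small_count (q n M : ℕ) (hq : 0 < q) :
    ((range (M + 1)).filter (fun p => p % q = n % q)).card ≤ M / q + 1 := by
  rw [← Finset.card_range (M / q + 1)]
  apply Finset.card_le_card_of_injOn (fun k => k / q)
  · intro k hk
    simp only [coe_filter, mem_range, Set.mem_ofPred_eq] at hk
    simp only [coe_range, Set.mem_Iio]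
    exact Nat.lt_succ_of_le (Nat.div_le_div_right (by omega))
  · intro x hx y hy h
    simp only [coe_filter, mem_range, Set.mem_ofPred_eq] at hx hy h
    rw [← Nat.div_add_mod x q, ← Nat.div_add_mod y q, h, hx.2, hy.2]

lemma bt_class (q n D e : ℕ) (hq : 0 < q) (hD : 1 ≤ D) :
    (((range (n + 1)).filter (fun p => (p.Prime ∧ p % q = n % q) ∧ D < p ∧ 3 < p ∧ p % 6 = e)).card : ℝ)
      ≤ (n : ℝ) / (Nat.lcm 6 q : ℕ) * (BTkap (Nat.lcm 6 q) / BTS D) + (BTH D / BTS D) ^ 2 := by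
  have hQ : 0 < Nat.lcm 6 q := Nat.lcm_pos (by norm_num) hq
  set T := (range (n + 1)).filter (fun p => (p.Prime ∧ p % q = n % q) ∧ D < p ∧ 3 < p ∧ p % 6 = e)
    with hT
  rcases T.eq_empty_or_nonempty with h | ⟨p0, hp0⟩
  · rw [h]
    have h1 := BTS_pos hD
    have h2 := bt_one_le_kap _ hQ
    simp only [card_empty, Nat.cast_zero]
    positivity
  · refine le_trans ?_ (bt_sieve (c := p0) (n := n) hD hQ)
    have : T ⊆ (Ioc 0 n).filter (fun p => p.Prime ∧ p ≡ p0 [MOD (Nat.lcm 6 q)] ∧ D < p) := by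
      intro p hp
      rw [hT, mem_filter, mem_range] at hp hp0
      rw [mem_filter, mem_Ioc]
      refine ⟨⟨hp.2.1.1.pos, by omega⟩, hp.2.1.1, ?_, hp.2.2.1⟩
      apply Nat.modEq_of_dvd
      have a1 : p ≡ p0 [MOD 6] := by
        unfold Nat.ModEq; omega
      have a2 : p ≡ p0 [MOD q] := hp.2.1.2.trans hp0.2.1.2.symm
      have b1 := a1.dvd
      have b2 := a2.dvd
      have := Int.coe_lcm_dvd b1 b2
      simpa [Int.lcm] using this
    exact_mod_cast Finset.card_le_card this

lemma bt_Z (q n : ℕ) (hq : 100000 ≤ q) (hqn : q < n) :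
    (((range (n + 1)).filter (fun p => p.Prime ∧ p % q = n % q)).card : ℝ)
      ≤ 2 * (n / (Nat.totient q : ℝ)) / Real.log (n / q) := by
  have hq0 : 0 < q := by omega
  have hqR : (0 : ℝ) < q := by exact_mod_cast hq0
  have hnR : (0 : ℝ) < n := by exact_mod_cast (by omega : 0 < n)
  have hN : (1 : ℝ) < n / q := by
    rw [one_lt_div hqR]; exact_mod_cast hqn
  obtain ⟨D, hD, hDN⟩ := bt_exists_D _ hN
  obtain ⟨N, hNd⟩ : ∃ N : ℝ, N = n / q := ⟨_, rfl⟩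
  rw [← hNd] at hN hDN ⊢
  have hlog : 0 < Real.log N := Real.log_pos hN
  have hS := BTS_pos hD
  obtain ⟨Q, hQd⟩ : ∃ Q, Q = Nat.lcm 6 q := ⟨_, rfl⟩
  have hQ : 0 < Q := by rw [hQd]; exact Nat.lcm_pos (by norm_num) hq0
  have hQR : (0 : ℝ) < Q := by exact_mod_cast hQ
  have h6Q : 6 ∣ Q := by rw [hQd]; exact Nat.dvd_lcm_left 6 q
  have hqQ : q ∣ Q := by rw [hQd]; exact Nat.dvd_lcm_right 6 q
  have hQ6 : (Q : ℝ) ≤ 6 * q := by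
    have : Q ≤ 6 * q := by
      rw [hQd]; exact Nat.le_of_dvd (by omega) (Nat.lcm_dvd_mul 6 q)
    exact_mod_cast this
  have hφQ : (0 : ℝ) < Nat.totient Q := by exact_mod_cast Nat.totient_pos.2 hQ
  have hφq : (0 : ℝ) < Nat.totient q := by exact_mod_cast Nat.totient_pos.2 hq0
  have hk1 := bt_one_le_kap Q hQ
  have hk2 := bt_kap_le Q hQ h6Q
  obtain ⟨X, hX⟩ : ∃ X : ℝ, X = n / (Nat.totient Q : ℝ) := ⟨_, rfl⟩
  have hXN : N / 2 ≤ X := by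
    have h1 := hk1.trans hk2
    rw [le_div_iff₀ (by positivity)] at h1
    rw [hX, hNd, div_div]
    apply div_le_div_of_nonneg_left hnR.le hφQ
    linarith
  obtain ⟨R, hR⟩ : ∃ R : ℝ, R = (BTH D / BTS D) ^ 2 := ⟨_, rfl⟩
  have hR0 : 0 ≤ R := by rw [hR]; positivity
  rw [← hR] at hDN
  obtain ⟨s, hs⟩ : ∃ s : ℝ, s = 1 + (D : ℝ) / 100000 := ⟨_, rfl⟩
  have hs0 : 0 ≤ s := by rw [hs]; positivity
  have hmain : X / (3 * BTS D) + R + s ≤ 2 * X / Real.log N := by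
    obtain ⟨k, hk⟩ : ∃ k : ℝ, k = 2 / Real.log N - 1 / (3 * BTS D) := ⟨_, rfl⟩
    have e1 : N / 2 * k = N / Real.log N - N / (6 * BTS D) := by
      rw [hk]; field_simp; ring
    have e2 : X * k = 2 * X / Real.log N - X / (3 * BTS D) := by
      rw [hk]; ring
    have hNk : R + s ≤ N / 2 * k := by rw [e1, hs]; linarith
    have hk0 : 0 ≤ k := by
      by_contra! h
      have : N / 2 * k < 0 := mul_neg_of_pos_of_neg (by linarith) h
      linarith
    have := mul_le_mul_of_nonneg_right hXN hk0
    linarith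
  obtain ⟨B, hB⟩ : ∃ B : ℝ, B = (n : ℝ) / Q * (BTkap Q / BTS D) + R := ⟨_, rfl⟩
  have hB0 : 0 ≤ B := by rw [hB]; positivity
  have hBX : B ≤ X / (3 * BTS D) + R := by
    rw [hB, hX]
    have : (n : ℝ) / Q * (BTkap Q / BTS D) ≤ (n : ℝ) / Q * ((Q / (3 * Nat.totient Q)) / BTS D) := by
      gcongr
    have e : (n : ℝ) / Q * ((Q / (3 * Nat.totient Q)) / BTS D) = n / (Nat.totient Q : ℝ) / (3 * BTS D) := by
      field_simp
    linarith
  have hBs : B + s ≤ 2 * X / Real.log N := by linarith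
  -- counting
  set T := (range (n + 1)).filter (fun p => p.Prime ∧ p % q = n % q) with hT
  obtain ⟨C, hC⟩ : ∃ C : ℕ → Finset ℕ, C = fun e => (range (n + 1)).filter
    (fun p => (p.Prime ∧ p % q = n % q) ∧ D < p ∧ 3 < p ∧ p % 6 = e) := ⟨_, rfl⟩
  have hCB : ∀ e, ((C e).card : ℝ) ≤ B := by
    intro e
    have := bt_class q n D e hq0 hD
    rw [hB, hR, hC, hQd]; exact this
  obtain ⟨T0, hT0⟩ : ∃ T0 : Finset ℕ, T0 = (range (max D 3 + 1)).filter (fun p => p % q = n % q) :=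
    ⟨_, rfl⟩
  have hT0s : (T0.card : ℝ) ≤ s := by
    have h1 := bt_small_count q n (max D 3) hq0
    rw [← hT0] at h1
    have h2 : (T0.card : ℝ) ≤ ((max D 3 / q : ℕ) : ℝ) + 1 := by exact_mod_cast h1
    have h3 : ((max D 3 / q : ℕ) : ℝ) ≤ (D : ℝ) / 100000 := by
      rcases le_total D 3 with h | h
      · rw [max_eq_right h, Nat.div_eq_of_lt (by omega)]
        simp only [Nat.cast_zero]; positivity
      · rw [max_eq_left h]
        refine Nat.cast_div_le.trans ?_
        have : (100000 : ℝ) ≤ q := by exact_mod_cast hq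
        gcongr
    rw [hs]; linarith
  have hcov : T ⊆ T0 ∪ (C 1 ∪ C 5) := by
    intro p hp
    rw [hT, mem_filter, mem_range] at hp
    rw [mem_union, mem_union, hT0, hC]
    simp only [mem_filter, mem_range]
    by_cases h : p ≤ max D 3
    · left; exact ⟨by omega, hp.2.2⟩
    · right
      have h3 : 3 < p ∧ D < p := by omega
      have n2 : ¬ 2 ∣ p := fun hd => by
        have := (Nat.prime_dvd_prime_iff_eq Nat.prime_two hp.2.1).1 hd; omega
      have n3 : ¬ 3 ∣ p := fun hd => by
        have := (Nat.prime_dvd_prime_iff_eq Nat.prime_three hp.2.1).1 hd; omega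
      have : p % 6 = 1 ∨ p % 6 = 5 := by omega
      rcases this with h | h
      · left; exact ⟨hp.1, hp.2, h3.2, h3.1, h⟩
      · right; exact ⟨hp.1, hp.2, h3.2, h3.1, h⟩
  have hcard : (T.card : ℝ) ≤ T0.card + ((C 1).card + (C 5).card) := by
    have := (Finset.card_le_card hcov).trans ((Finset.card_union_le _ _).trans
      (Nat.add_le_add_left (Finset.card_union_le _ _) _))
    exact_mod_cast this
  have h2X : 2 * (n / (Nat.totient q : ℝ)) / Real.log N = 2 * (n / (Nat.totient q : ℝ)) / Real.log N := rfl
  by_cases h3 : 3 ∣ q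
  · have hφ : (Nat.totient q : ℝ) ≤ Nat.totient Q := by
      exact_mod_cast Nat.le_of_dvd (Nat.totient_pos.2 hQ) (Nat.totient_dvd_of_dvd hqQ)
    have hXq : X ≤ n / (Nat.totient q : ℝ) := by
      rw [hX]; gcongr
    have hlt : ((C 1).card : ℝ) + (C 5).card ≤ B := by
      rcases (C 1).eq_empty_or_nonempty with h | ⟨x, hx⟩
      · rw [h]; simpa using hCB 5
      · have : C 5 = ∅ := by
          rw [Finset.eq_empty_iff_forall_notMem]
          intro y hy
          rw [hC] at hx hy
          simp only [mem_filter] at hx hy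
          have hxy : x ≡ y [MOD q] := hx.2.1.2.trans hy.2.1.2.symm
          have : x % 3 = y % 3 := hxy.of_dvd h3
          omega
        rw [this]; simpa using hCB 1
    calc (T.card : ℝ) ≤ B + s := by linarith
      _ ≤ 2 * X / Real.log N := hBs
      _ ≤ _ := by gcongr
  · have hφ : 2 * (Nat.totient q : ℝ) ≤ Nat.totient Q := by
      have hc : Nat.Coprime 3 q := (Nat.Prime.coprime_iff_not_dvd Nat.prime_three).2 h3
      have hd : 3 * q ∣ Q := hc.mul_dvd_of_dvd_of_dvd (dvd_trans (by norm_num) h6Q) hqQ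
      have := Nat.le_of_dvd (Nat.totient_pos.2 hQ) (Nat.totient_dvd_of_dvd hd)
      rw [Nat.totient_mul hc, Nat.totient_prime Nat.prime_three] at this
      exact_mod_cast this
    have hXq : 2 * X ≤ n / (Nat.totient q : ℝ) := by
      rw [hX, le_div_iff₀ hφq, mul_comm, ← mul_assoc, mul_div_assoc', div_le_iff₀ hφQ]
      nlinarith
    have h1 := hCB 1
    have h5 := hCB 5
    calc (T.card : ℝ) ≤ 2 * (B + s) := by linarith
      _ ≤ 2 * (2 * X / Real.log N) := by linarith
      _ = 2 * (2 * X) / Real.log N := by ring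
      _ ≤ _ := by gcongr

/-- For `0 < A < 1/2`, integers `n ≥ 2` and integers `a` with `316 < a ≤ n^A` and
`gcd(a, n) = 1`, one has `|θ(n; a², n) − n/φ(a²)| ≤ ((1+2A)/(1−2A)) n/φ(a²)`. -/
theorem abs_chebyshevThetaAP_sub_le (A : ℝ) (hA0 : 0 < A) (hA : A < 1 / 2)
    (n : ℕ) (hn : 2 ≤ n) (a : ℕ) (ha : 316 < a) (haA : (a : ℝ) ≤ (n : ℝ) ^ A)
    (han : Nat.gcd a n = 1) :
    |chebyshevThetaAP n (a ^ 2) n - (n : ℝ) / (Nat.totient (a ^ 2))| ≤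
      ((1 + 2 * A) / (1 - 2 * A)) * ((n : ℝ) / (Nat.totient (a ^ 2))) := by
  have hn1 : (1 : ℝ) < n := by exact_mod_cast (by omega : 1 < n)
  have hn0 : (0 : ℝ) < n := by linarith
  have ha0 : (0 : ℝ) < a := by exact_mod_cast (by omega : 0 < a)
  have hq : 100000 ≤ a ^ 2 := by nlinarith
  have hlogn : 0 < Real.log n := Real.log_pos hn1
  have hloga : Real.log a ≤ A * Real.log n := by
    rw [← Real.log_rpow hn0]; exact Real.log_le_log ha0 haA
  have hlogN : (1 - 2 * A) * Real.log n ≤ Real.log ((n : ℝ) / ((a ^ 2 : ℕ) : ℝ)) := by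
    rw [Real.log_div hn0.ne' (by positivity)]
    push_cast
    rw [Real.log_pow]
    push_cast
    linarith
  have h12 : 0 < 1 - 2 * A := by linarith
  have hpos : 0 < (1 - 2 * A) * Real.log n := by positivity
  have hqn : a ^ 2 < n := by
    by_contra! h
    have h1 : (n : ℝ) / ((a ^ 2 : ℕ) : ℝ) ≤ 1 := by
      apply div_le_one_of_le₀ _ (by positivity)
      exact_mod_cast h
    have := Real.log_nonpos (by positivity) h1
    linarith
  have hZ := bt_Z (a ^ 2) n hq hqn
  obtain ⟨Y, hY⟩ : ∃ Y : ℝ, Y = (n : ℝ) / (Nat.totient (a ^ 2)) := ⟨_, rfl⟩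
  rw [← hY] at hZ ⊢
  have hY0 : 0 ≤ Y := by rw [hY]; positivity
  have hθ0 : 0 ≤ chebyshevThetaAP n (a ^ 2) n := by
    unfold chebyshevThetaAP
    exact Finset.sum_nonneg fun p _ => Real.log_natCast_nonneg p
  have hθ : chebyshevThetaAP n (a ^ 2) n ≤ 2 * Y / (1 - 2 * A) := by
    have h1 : chebyshevThetaAP n (a ^ 2) n ≤
        (((range (n + 1)).filter (fun p => p.Prime ∧ p % (a ^ 2) = n % (a ^ 2))).card : ℝ) * Real.log n := by
      unfold chebyshevThetaAP
      rw [Nat.floor_natCast, ← nsmul_eq_mul]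
      apply Finset.sum_le_card_nsmul
      intro p hp
      rw [mem_filter, mem_range] at hp
      apply Real.log_le_log
      · exact_mod_cast hp.2.1.pos
      · exact_mod_cast (by omega : p ≤ n)
    calc _ ≤ _ := h1
      _ ≤ (2 * Y / Real.log ((n : ℝ) / ((a ^ 2 : ℕ) : ℝ))) * Real.log n := by gcongr
      _ ≤ (2 * Y / ((1 - 2 * A) * Real.log n)) * Real.log n := by gcongr
      _ = 2 * Y / (1 - 2 * A) := by field_simp
  have e1 : 2 * Y / (1 - 2 * A) = (1 + 2 * A) / (1 - 2 * A) * Y + Y := by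
    field_simp; ring
  have e2 : 1 ≤ (1 + 2 * A) / (1 - 2 * A) := by
    rw [one_le_div h12]; linarith
  have e3 := mul_le_mul_of_nonneg_right e2 hY0
  rw [abs_le]
  constructor <;> linarith
end

section
/- For each integer a with 2 ≤ a ≤ 316, there exist real constants c > 0 and x₀ with x₀ ≤ 4.81·10^9 such that for every integer n co-prime to a and every real x ≥ x₀, one has |θ(x; a², n) − x/φ(a²)| < c · x / log x. -/
open Finset

namespace PNTAP
open Complex Filter Topology

/-- Euler-Maclaurin type term. -/
noncomputable def T (w : ℝ) (s : ℂ) : ℂ :=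
  (w : ℂ) ^ (-s) - (((w + 1 : ℝ) : ℂ) ^ (-s + 1) / (-s + 1) - (w : ℂ) ^ (-s + 1) / (-s + 1))

lemma norm_T_le_of {w : ℝ} (hw : 0 < w) {s : ℂ} (hs : s ≠ 1) {B : ℝ}
    (hB : ∀ u ∈ Set.Icc w (w + 1), ‖(u : ℂ) ^ (-s) - (w : ℂ) ^ (-s)‖ ≤ B) : ‖T w s‖ ≤ B := by
  have hder : ∀ u ∈ Set.Icc w (w + 1), HasDerivWithinAt
      (fun u : ℝ => (u : ℂ) ^ (-s + 1) / (-s + 1) - (u : ℂ) * (w : ℂ) ^ (-s))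
      ((u : ℂ) ^ (-s) - (w : ℂ) ^ (-s)) (Set.Icc w (w + 1)) u := by
    intro u hu
    have hu0 : u ≠ 0 := (lt_of_lt_of_le hw hu.1).ne'
    have h1 := hasDerivAt_ofReal_cpow_const' (x := u) hu0 (r := -s)
      (by intro h; exact hs (by linear_combination -h))
    have h2 : HasDerivAt (fun u : ℝ => (u : ℂ) * (w : ℂ) ^ (-s)) (1 * (w : ℂ) ^ (-s)) u :=
      (HasDerivAt.ofReal_comp (hasDerivAt_id u)).mul_const _
    rw [one_mul] at h2
    exact (h1.sub h2).hasDerivWithinAt (s := Set.Icc w (w + 1))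
  have := (convex_Icc w (w + 1)).norm_image_sub_le_of_norm_hasDerivWithin_le hder hB
    (Set.left_mem_Icc.2 (by linarith)) (Set.right_mem_Icc.2 (by linarith))
  have e : T w s = -(((fun u : ℝ => (u : ℂ) ^ (-s + 1) / (-s + 1) - (u : ℂ) * (w : ℂ) ^ (-s)) (w + 1))
     - ((fun u : ℝ => (u : ℂ) ^ (-s + 1) / (-s + 1) - (u : ℂ) * (w : ℂ) ^ (-s)) w)) := by
    simp only [T]; push_cast; ring
  rw [e, norm_neg]
  simpa using this

lemma norm_cpow_le {w u : ℝ} (hw : 0 < w) (hu : w ≤ u) {s : ℂ} (hs : 0 ≤ s.re) :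
    ‖(u : ℂ) ^ (-s)‖ ≤ w ^ (-s.re) := by
  rw [Complex.norm_cpow_eq_rpow_re_of_pos (by linarith)]
  simp only [Complex.neg_re]
  exact Real.rpow_le_rpow_of_nonpos hw hu (by linarith)

lemma norm_T_le1 {w : ℝ} (hw : 0 < w) {s : ℂ} (hs : s ≠ 1) (h0 : 0 ≤ s.re) :
    ‖T w s‖ ≤ 2 * w ^ (-s.re) := by
  refine norm_T_le_of hw hs fun u hu => ?_
  refine (norm_sub_le _ _).trans ?_
  have := norm_cpow_le hw hu.1 h0
  have := norm_cpow_le hw le_rfl h0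
  linarith

lemma norm_T_le2 {w : ℝ} (hw : 0 < w) {s : ℂ} (hs : s ≠ 1) (h0 : 0 ≤ s.re) :
    ‖T w s‖ ≤ ‖s‖ * w ^ (-s.re - 1) := by
  refine norm_T_le_of hw hs fun u hu => ?_
  by_cases hs0 : s = 0
  · subst hs0; simp
  have hder : ∀ v ∈ Set.Icc w (w + 1), HasDerivWithinAt
      (fun v : ℝ => (v : ℂ) ^ (-s)) (-s * (v : ℂ) ^ (-s - 1)) (Set.Icc w (w + 1)) v := by
    intro v hv
    have hv0 : v ≠ 0 := (lt_of_lt_of_le hw hv.1).ne'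
    exact (hasDerivAt_ofReal_cpow_const hv0 (by simpa using hs0)).hasDerivWithinAt
  have hb : ∀ v ∈ Set.Icc w (w + 1), ‖-s * (v : ℂ) ^ (-s - 1)‖ ≤ ‖s‖ * w ^ (-s.re - 1) := by
    intro v hv
    rw [norm_mul, norm_neg]
    gcongr
    have := norm_cpow_le (s := s + 1) hw hv.1 (by simp; linarith)
    simpa [neg_add, sub_eq_add_neg, add_comm] using this
  have := (convex_Icc w (w + 1)).norm_image_sub_le_of_norm_hasDerivWithin_le hder hb
    (Set.left_mem_Icc.2 (by linarith)) hu
  refine this.trans ?_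
  have : ‖u - w‖ ≤ 1 := by
    rw [Real.norm_eq_abs, abs_le]; constructor <;> linarith [hu.1, hu.2]
  exact mul_le_of_le_one_right (by positivity) this

/-- The size function. -/
noncomputable def tau (s : ℂ) : ℝ := (1 + |s.im|) ^ ((1 : ℝ) / 48)

lemma one_le_tau (s : ℂ) : 1 ≤ tau s :=
  Real.one_le_rpow (by linarith [abs_nonneg s.im]) (by norm_num)

/-- The region. -/
def S : Set ℂ := {s | 1 - 1 / 96 < s.re ∧ s.re < 3 ∧ 1 / 2 < |s.im|}

lemma isOpen_S : IsOpen S :=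
  (isOpen_lt continuous_const continuous_re).inter
    ((isOpen_lt continuous_re continuous_const).inter
      (isOpen_lt continuous_const (continuous_abs.comp continuous_im)))

lemma S_ne_one {s : ℂ} (hs : s ∈ S) : s ≠ 1 := by
  rintro rfl
  have := hs.2.2
  norm_num at this

lemma norm_T_le3 {w : ℝ} (hw : 0 < w) {s : ℂ} (hs : s ∈ S) :
    ‖T w s‖ ≤ 6 * tau s * w ^ (-s.re - 1 / 48) := by
  have h0 : 0 ≤ s.re := by have := hs.1; norm_num at this; linarith
  have A := norm_T_le1 hw (S_ne_one hs) h0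
  have B := norm_T_le2 hw (S_ne_one hs) h0
  have h1 : ‖T w s‖ = ‖T w s‖ ^ ((47 : ℝ) / 48) * ‖T w s‖ ^ ((1 : ℝ) / 48) := by
    rw [← Real.rpow_add_of_nonneg (norm_nonneg _) (by norm_num) (by norm_num)]
    norm_num
  have hn : ‖s‖ ≤ 3 * (1 + |s.im|) := by
    have := Complex.norm_le_abs_re_add_abs_im s
    rw [abs_of_nonneg h0] at this
    have := hs.2.1
    linarith [abs_nonneg s.im]
  have hw' : 0 ≤ w := hw.le
  rw [h1]
  calc _ ≤ (2 * w ^ (-s.re)) ^ ((47 : ℝ) / 48) * (3 * (1 + |s.im|) * w ^ (-s.re - 1)) ^ ((1 : ℝ) / 48) := by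
        gcongr
        exact B.trans (by gcongr)
    _ = 2 ^ ((47 : ℝ) / 48) * 3 ^ ((1 : ℝ) / 48) * tau s * w ^ (-s.re - 1 / 48) := by
        rw [Real.mul_rpow (by norm_num) (by positivity), Real.mul_rpow (by positivity) (by positivity),
          Real.mul_rpow (by norm_num) (by positivity), ← Real.rpow_mul hw', ← Real.rpow_mul hw', tau]
        have : w ^ (-s.re - 1 / 48) = w ^ (-s.re * (47 / 48)) * w ^ ((-s.re - 1) * (1 / 48)) := by
          rw [← Real.rpow_add hw]; congr 1; ring
        rw [this]; ring
    _ ≤ _ := by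
        have h2 : (2 : ℝ) ^ ((47 : ℝ) / 48) ≤ 2 := by
          conv_rhs => rw [← Real.rpow_one 2]
          exact Real.rpow_le_rpow_of_exponent_le (by norm_num) (by norm_num)
        have h3 : (3 : ℝ) ^ ((1 : ℝ) / 48) ≤ 3 := by
          conv_rhs => rw [← Real.rpow_one 3]
          exact Real.rpow_le_rpow_of_exponent_le (by norm_num) (by norm_num)
        have : (2 : ℝ) ^ ((47 : ℝ) / 48) * 3 ^ ((1 : ℝ) / 48) ≤ 2 * 3 := by gcongr
        have := one_le_tau s
        gcongr
        linarith

lemma norm_T_le4 {α : ℝ} (h0 : 0 < α) (h1 : α ≤ 1) {s : ℂ} (hs : s ∈ S) (m : ℕ) :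
    ‖T (m + α) s‖ ≤ (6 * α ^ (-4 : ℝ) * ((m + 1 : ℕ) : ℝ) ^ (-(97 / 96 : ℝ))) * tau s := by
  have hw : 0 < (m : ℝ) + α := by positivity
  refine (norm_T_le3 hw hs).trans ?_
  have h2 : ((m : ℝ) + α) ^ (-s.re - 1 / 48) ≤ α ^ (-4 : ℝ) * ((m + 1 : ℕ) : ℝ) ^ (-(97 / 96 : ℝ)) := by
    have hge : α * ((m + 1 : ℕ) : ℝ) ≤ m + α := by push_cast; nlinarith [(Nat.cast_nonneg m : (0:ℝ) ≤ m)]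
    have hre := hs.1
    have hre2 := hs.2.1
    calc _ ≤ (α * ((m + 1 : ℕ) : ℝ)) ^ (-s.re - 1 / 48) :=
          Real.rpow_le_rpow_of_nonpos (by positivity) hge (by linarith)
      _ = α ^ (-s.re - 1 / 48) * ((m + 1 : ℕ) : ℝ) ^ (-s.re - 1 / 48) :=
          Real.mul_rpow h0.le (by positivity)
      _ ≤ _ := by
          gcongr ?_ * ?_
          · exact Real.rpow_le_rpow_of_exponent_ge h0 h1 (by linarith)
          · exact Real.rpow_le_rpow_of_exponent_le (by push_cast; linarith [(Nat.cast_nonneg m : (0:ℝ) ≤ m)]) (by linarith)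
  have := one_le_tau s
  calc _ ≤ 6 * tau s * (α ^ (-4 : ℝ) * ((m + 1 : ℕ) : ℝ) ^ (-(97 / 96 : ℝ))) := by gcongr
    _ = _ := by ring

lemma summable_bd (α : ℝ) :
    Summable fun m : ℕ => 6 * α ^ (-4 : ℝ) * ((m + 1 : ℕ) : ℝ) ^ (-(97 / 96 : ℝ)) := by
  apply Summable.mul_left
  exact (summable_nat_add_iff (f := fun m : ℕ => (m : ℝ) ^ (-(97 / 96 : ℝ))) 1).2
    (Real.summable_nat_rpow.2 (by norm_num))

/-- Functions on `re s > 1` extending to `S` with small growth. -/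
def Good (f : ℂ → ℂ) : Prop :=
  ∃ (E : ℂ → ℂ) (C : ℝ), DifferentiableOn ℂ E S ∧ 0 ≤ C ∧ (∀ s ∈ S, ‖E s‖ ≤ C * tau s) ∧
    ∀ s ∈ S, 1 < s.re → f s = E s

lemma differentiable_T {w : ℝ} (hw : 0 < w) : DifferentiableOn ℂ (T w) S := by
  intro s hs
  have h1 : -s + 1 ≠ 0 := by
    intro h; exact S_ne_one hs (by linear_combination -h)
  have hw1 : (w : ℂ) ≠ 0 := by exact_mod_cast hw.ne'
  have hw2 : ((w + 1 : ℝ) : ℂ) ≠ 0 := by exact_mod_cast (by linarith : w + 1 ≠ 0)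
  apply DifferentiableAt.differentiableWithinAt
  unfold T
  have a1 : DifferentiableAt ℂ (fun s : ℂ => -s) s := by fun_prop
  have a2 : DifferentiableAt ℂ (fun s : ℂ => -s + 1) s := by fun_prop
  exact (a1.const_cpow (Or.inl hw1)).sub
    (((a2.const_cpow (Or.inl hw2)).div a2 h1).sub ((a2.const_cpow (Or.inl hw1)).div a2 h1))

lemma tsum_T_eq {α : ℝ} (h0 : 0 < α) (h1 : α ≤ 1) {s : ℂ} (hs : s ∈ S) (hre : 1 < s.re) :
    HurwitzZeta.hurwitzZeta (α : UnitAddCircle) s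
      = (∑' m : ℕ, T (m + α) s) - (α : ℂ) ^ (-s + 1) / (-s + 1) := by
  have hH := HurwitzZeta.hasSum_hurwitzZeta_of_one_lt_re (a := α) ⟨h0.le, h1⟩ hre
  have hT : Summable fun m : ℕ => T (m + α) s := by
    refine Summable.of_norm_bounded ((summable_bd α).mul_right (tau s)) fun m => ?_
    exact norm_T_le4 h0 h1 hs m
  have l1 := hT.hasSum.tendsto_sum_nat
  have l2 := hH.tendsto_sum_nat
  have hpart : ∀ M : ℕ, ∑ m ∈ range M, T (m + α) s = ∑ m ∈ range M, 1 / ((m : ℂ) + α) ^ s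
      - (((M + α : ℝ) : ℂ) ^ (-s + 1) / (-s + 1) - (α : ℂ) ^ (-s + 1) / (-s + 1)) := by
    intro M
    induction M with
    | zero => simp
    | succ M ih =>
      rw [sum_range_succ, ih, sum_range_succ, T]
      have : 1 / ((M : ℂ) + α) ^ s = ((M + α : ℝ) : ℂ) ^ (-s) := by
        rw [cpow_neg]; push_cast; rw [one_div]
      rw [this]
      push_cast
      rw [show (M : ℂ) + α + 1 = M + 1 + α by ring]
      ring
  have l3 : Tendsto (fun M : ℕ => ((M + α : ℝ) : ℂ) ^ (-s + 1)) atTop (𝓝 0) := by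
    rw [tendsto_zero_iff_norm_tendsto_zero]
    have : (fun M : ℕ => ‖((M + α : ℝ) : ℂ) ^ (-s + 1)‖) = fun M : ℕ => ((M : ℝ) + α) ^ (-(s.re - 1)) := by
      ext M
      rw [Complex.norm_cpow_eq_rpow_re_of_pos (by positivity)]
      congr 1; simp; ring
    rw [this]
    exact (tendsto_rpow_neg_atTop (by linarith)).comp
      (tendsto_atTop_add_const_right _ _ tendsto_natCast_atTop_atTop)
  have l4 := l2.sub ((l3.div_const (-s + 1)).sub (tendsto_const_nhds (x := (α : ℂ) ^ (-s + 1) / (-s + 1))))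
  have := tendsto_nhds_unique l1 (l4.congr fun M => (hpart M).symm)
  rw [this]; simp

lemma good_hurwitz {α : ℝ} (h0 : 0 < α) (h1 : α ≤ 1) :
    Good (HurwitzZeta.hurwitzZeta (α : UnitAddCircle)) := by
  have hα : (α : ℂ) ≠ 0 := by exact_mod_cast h0.ne'
  refine ⟨fun s => (∑' m : ℕ, T (m + α) s) - (α : ℂ) ^ (-s + 1) / (-s + 1),
    (∑' m : ℕ, 6 * α ^ (-4 : ℝ) * ((m + 1 : ℕ) : ℝ) ^ (-(97 / 96 : ℝ))) + α ^ (-2 : ℝ) / (1 / 2), ?_, ?_, ?_, ?_⟩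
  · intro s hs
    apply DifferentiableAt.differentiableWithinAt
    apply DifferentiableAt.sub
    · have hU : IsOpen (S ∩ {z : ℂ | |z.im| < |s.im| + 1}) :=
        isOpen_S.inter (isOpen_lt (continuous_abs.comp continuous_im) continuous_const)
      have := differentiableOn_tsum_of_summable_norm (F := fun (m : ℕ) (s : ℂ) => T (m + α) s)
        (u := fun m : ℕ => (6 * α ^ (-4 : ℝ) * ((m + 1 : ℕ) : ℝ) ^ (-(97 / 96 : ℝ))) *
          (1 + (|s.im| + 1)) ^ ((1 : ℝ) / 48))
        ((summable_bd α).mul_right _) (fun m => (differentiable_T (by positivity)).mono Set.inter_subset_left)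
        hU (fun m z hz => by
          refine (norm_T_le4 h0 h1 hz.1 m).trans ?_
          have h2 : |z.im| < |s.im| + 1 := hz.2
          unfold tau
          gcongr)
      exact this.differentiableAt (hU.mem_nhds ⟨hs, by simp⟩)
    · have a2 : DifferentiableAt ℂ (fun s : ℂ => -s + 1) s := by fun_prop
      refine (a2.const_cpow (Or.inl hα)).div a2 ?_
      intro h; exact S_ne_one hs (by linear_combination -h)
  · have : 0 ≤ ∑' m : ℕ, 6 * α ^ (-4 : ℝ) * ((m + 1 : ℕ) : ℝ) ^ (-(97 / 96 : ℝ)) :=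
      tsum_nonneg fun m => by positivity
    positivity
  · intro s hs
    refine (norm_sub_le _ _).trans ?_
    have e1 : ‖∑' m : ℕ, T (m + α) s‖ ≤
        (∑' m : ℕ, 6 * α ^ (-4 : ℝ) * ((m + 1 : ℕ) : ℝ) ^ (-(97 / 96 : ℝ))) * tau s := by
      rw [← tsum_mul_right]
      exact tsum_of_norm_bounded ((summable_bd α).mul_right _).hasSum (fun m => norm_T_le4 h0 h1 hs m)
    have e2 : ‖(α : ℂ) ^ (-s + 1) / (-s + 1)‖ ≤ α ^ (-2 : ℝ) / (1 / 2) := by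
      rw [norm_div]
      gcongr
      · rw [Complex.norm_cpow_eq_rpow_re_of_pos h0]
        exact Real.rpow_le_rpow_of_exponent_ge h0 h1 (by have := hs.2.1; simp; linarith)
      · have := Complex.abs_im_le_norm (-s + 1)
        have h3 := hs.2.2
        simp only [add_im, neg_im, one_im, add_zero, abs_neg] at this
        linarith
    have e3 : α ^ (-2 : ℝ) / (1 / 2) ≤ α ^ (-2 : ℝ) / (1 / 2) * tau s :=
      le_mul_of_one_le_right (by positivity) (one_le_tau s)
    rw [add_mul]; linarith
  · intro s hs hre
    exact tsum_T_eq h0 h1 hs hre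

lemma Good.const_mul {f : ℂ → ℂ} (hf : Good f) (c : ℂ) : Good (fun s => c * f s) := by
  obtain ⟨E, C, h1, h2, h3, h4⟩ := hf
  refine ⟨fun s => c * E s, ‖c‖ * C, h1.const_mul c, by positivity, fun s hs => ?_, fun s hs hr => ?_⟩
  · rw [norm_mul, mul_assoc]; gcongr; exact h3 s hs
  · simp only [h4 s hs hr]

lemma Good.sum {ι : Type*} (A : Finset ι) {f : ι → ℂ → ℂ} (hf : ∀ i ∈ A, Good (f i)) :
    Good (fun s => ∑ i ∈ A, f i s) := by
  classical
  choose! E C h1 h2 h3 h4 using hf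
  refine ⟨fun s => ∑ i ∈ A, E i s, ∑ i ∈ A, C i, DifferentiableOn.fun_sum h1, sum_nonneg h2, fun s hs => ?_,
    fun s hs hr => sum_congr rfl fun i hi => h4 i hi s hs hr⟩
  rw [sum_mul]
  exact norm_sum_le_of_le _ fun i hi => h3 i hi s hs

lemma Good.cpow_mul {f : ℂ → ℂ} (hf : Good f) (N : ℕ) [NeZero N] :
    Good (fun s => (N : ℂ) ^ (-s) * f s) := by
  have hN : (N : ℂ) ≠ 0 := by exact_mod_cast NeZero.ne N
  obtain ⟨E, C, h1, h2, h3, h4⟩ := hf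
  refine ⟨fun s => (N : ℂ) ^ (-s) * E s, C, ?_, h2, fun s hs => ?_, fun s hs hr => ?_⟩
  · refine DifferentiableOn.mul (fun s hs => ?_) h1
    have a1 : DifferentiableAt ℂ (fun s : ℂ => -s) s := by fun_prop
    exact (a1.const_cpow (Or.inl hN)).differentiableWithinAt
  · rw [norm_mul]
    have hN1 : (1 : ℝ) ≤ N := by exact_mod_cast NeZero.one_le
    have : ‖(N : ℂ) ^ (-s)‖ ≤ 1 := by
      have := Complex.norm_cpow_eq_rpow_re_of_pos (x := (N : ℝ)) (by linarith) (-s)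
      push_cast at this
      rw [this]
      exact Real.rpow_le_one_of_one_le_of_nonpos hN1 (by have := hs.1; simp; linarith)
    calc _ ≤ 1 * ‖E s‖ := by gcongr
      _ ≤ _ := by rw [one_mul]; exact h3 s hs
  · simp only [h4 s hs hr]

lemma good_L {N : ℕ} [NeZero N] (χ : DirichletCharacter ℂ N) : Good χ.LFunction := by
  unfold DirichletCharacter.LFunction ZMod.LFunction
  refine Good.cpow_mul (Good.sum _ fun j _ => Good.const_mul ?_ _) N
  rw [ZMod.toAddCircle_apply]
  have hN : (0 : ℝ) < N := by exact_mod_cast NeZero.pos N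
  rcases Nat.eq_zero_or_pos j.val with h | h
  · have := good_hurwitz one_pos le_rfl
    rw [h]
    have e : ((1 : ℝ) : UnitAddCircle) = 0 := AddCircle.coe_period 1
    rw [e] at this
    simpa using this
  · exact good_hurwitz (by positivity) (by rw [div_le_one hN]; exact_mod_cast (ZMod.val_lt j).le)

lemma good_zeta : Good riemannZeta := by
  have := good_L (1 : DirichletCharacter ℂ 1)
  rwa [DirichletCharacter.LFunction_modOne_eq] at this

/-- Bounds for derivatives. -/
lemma Good.deriv_bound {f : ℂ → ℂ} (hf : Good f) (k : ℕ) :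
    ∃ C : ℝ, 0 ≤ C ∧ ∀ s : ℂ, 1 < s.re → s.re ≤ 2 → 1 ≤ |s.im| →
      ‖iteratedDeriv k f s‖ ≤ C * tau s := by
  obtain ⟨E, C, h1, h2, h3, h4⟩ := hf
  refine ⟨k.factorial * (C * 2) / (1 / 100) ^ k, by positivity, fun s hs hs2 hs3 => ?_⟩
  have hsub : Metric.closedBall s (1 / 100) ⊆ S := by
    intro z hz
    rw [Metric.mem_closedBall, dist_eq_norm] at hz
    have a1 := (Complex.abs_re_le_norm (z - s)).trans hz
    have a2 := (Complex.abs_im_le_norm (z - s)).trans hz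
    rw [sub_re, abs_le] at a1
    rw [sub_im] at a2
    have a3 : |s.im| - |z.im| ≤ |z.im - s.im| := by rw [abs_sub_comm]; exact abs_sub_abs_le_abs_sub _ _
    exact ⟨by linarith, by linarith, by linarith⟩
  have htau : ∀ z ∈ Metric.sphere s (1 / 100), ‖E z‖ ≤ C * 2 * tau s := by
    intro z hz
    have hz' := Metric.sphere_subset_closedBall hz
    refine (h3 z (hsub hz')).trans ?_
    rw [mul_assoc]
    gcongr
    rw [Metric.mem_closedBall, dist_eq_norm] at hz'
    have a2 := (Complex.abs_im_le_norm (z - s)).trans hz'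
    rw [sub_im] at a2
    have a3 : |z.im| - |s.im| ≤ |z.im - s.im| := abs_sub_abs_le_abs_sub _ _
    unfold tau
    calc (1 + |z.im|) ^ ((1 : ℝ) / 48) ≤ (2 * (1 + |s.im|)) ^ ((1 : ℝ) / 48) := by
          gcongr; linarith [abs_nonneg s.im]
      _ = 2 ^ ((1 : ℝ) / 48) * (1 + |s.im|) ^ ((1 : ℝ) / 48) := Real.mul_rpow (by norm_num) (by positivity)
      _ ≤ _ := by
          gcongr
          conv_rhs => rw [← Real.rpow_one 2]
          exact Real.rpow_le_rpow_of_exponent_le (by norm_num) (by norm_num)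
  have hd : DiffContOnCl ℂ E (Metric.ball s (1 / 100)) :=
    (h1.mono (hsub)).diffContOnCl_ball subset_rfl
  have := norm_iteratedDeriv_le_of_forall_mem_sphere_norm_le k (by norm_num) hd htau
  have heq : f =ᶠ[𝓝 s] E := by
    have hS : S ∈ 𝓝 s := isOpen_S.mem_nhds (hsub (Metric.mem_closedBall_self (by norm_num)))
    filter_upwards [hS, (isOpen_lt continuous_const continuous_re).mem_nhds hs] with z hz1 hz2
    exact h4 z hz1 hz2
  rw [heq.iteratedDeriv_eq]
  refine this.trans (le_of_eq ?_)
  ring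

end PNTAP

namespace PNTAP
open Complex Filter Topology

lemma tau_double {s z : ℂ} (h : z.im = 2 * s.im) : tau z ≤ 2 * tau s := by
  unfold tau
  calc (1 + |z.im|) ^ ((1 : ℝ) / 48) ≤ (2 * (1 + |s.im|)) ^ ((1 : ℝ) / 48) := by
        gcongr; rw [h, abs_mul, abs_two]; linarith [abs_nonneg s.im]
    _ = 2 ^ ((1 : ℝ) / 48) * (1 + |s.im|) ^ ((1 : ℝ) / 48) := Real.mul_rpow (by norm_num) (by positivity)
    _ ≤ _ := by
        gcongr
        conv_rhs => rw [← Real.rpow_one 2]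
        exact Real.rpow_le_rpow_of_exponent_le (by norm_num) (by norm_num)

lemma triv_bound (N : ℕ) [NeZero N] : ∃ A r : ℝ, 0 < A ∧ 0 < r ∧ ∀ x : ℝ, 0 < x → x < r →
    ‖DirichletCharacter.LFunctionTrivChar N (1 + x)‖ ≤ A / x := by
  obtain ⟨A, hA, h⟩ := (DirichletCharacter.LFunctionTrivChar_isBigO_near_one_horizontal (N := N)).exists_pos
  rw [Asymptotics.IsBigOWith] at h
  rw [eventually_nhdsWithin_iff, Metric.eventually_nhds_iff] at h
  obtain ⟨r, hr, h⟩ := h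
  refine ⟨A, r, hA, hr, fun x hx hxr => ?_⟩
  have := h (y := x) (by simpa [abs_of_pos hx] using hxr) hx
  simpa [abs_of_pos hx, div_eq_mul_inv] using this

lemma norm_sub_le_horizontal {f : ℂ → ℂ} {B : ℝ} {s : ℂ} {k : ℝ} (hk : 0 ≤ k)
    (hd : ∀ z : ℂ, s.re ≤ z.re → z.re ≤ s.re + k → z.im = s.im → DifferentiableAt ℂ f z)
    (hb : ∀ z : ℂ, s.re ≤ z.re → z.re ≤ s.re + k → z.im = s.im → ‖deriv f z‖ ≤ B) :
    ‖f (s + k) - f s‖ ≤ B * k := by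
  have hc : Convex ℝ ((Complex.reLm ⁻¹' Set.Icc s.re (s.re + k)) ∩ (Complex.imLm ⁻¹' {s.im})) :=
    ((convex_Icc _ _).linear_preimage _).inter ((convex_singleton _).linear_preimage _)
  have := hc.norm_image_sub_le_of_norm_deriv_le (𝕜 := ℂ) (f := f) (C := B) (x := s) (y := s + k)
    (fun z hz => hd z hz.1.1 hz.1.2 hz.2) (fun z hz => hb z hz.1.1 hz.1.2 hz.2)
    (by simp [hk]) (by simp [hk])
  simpa [abs_of_nonneg hk] using this

lemma L_lower {N : ℕ} [NeZero N] (χ : DirichletCharacter ℂ N) :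
    ∃ κ₁ C : ℝ, 0 < κ₁ ∧ κ₁ ≤ 1 ∧ 0 < C ∧ ∀ s : ℂ, 1 < s.re → s.re ≤ 1 + κ₁ → 1 ≤ |s.im| →
      1 ≤ C * tau s ^ 7 * ‖χ.LFunction s‖ := by
  obtain ⟨A, r, hA, hr, htriv⟩ := triv_bound N
  obtain ⟨C0, hC0, hb0⟩ := (good_L (χ ^ 2)).deriv_bound 0
  obtain ⟨C1, hC1, hb1⟩ := (good_L χ).deriv_bound 1
  set M : ℝ := A ^ 3 * C0 * 2 + 1 with hM
  have hM1 : 1 ≤ M := by have : 0 ≤ A ^ 3 * C0 * 2 := by positivity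
                         linarith
  set ε : ℝ := min (1 / (2 * M * (C1 + 1))) (min (r / 3) (1 / 2)) with hε
  have hε0 : 0 < ε := by positivity
  have hε1 : ε ≤ 1 / (2 * M * (C1 + 1)) := min_le_left _ _
  have hε2 : ε ≤ r / 3 := (min_le_right _ _).trans (min_le_left _ _)
  have hε3 : ε ≤ 1 / 2 := (min_le_right _ _).trans (min_le_right _ _)
  refine ⟨min (r / 3) (1 / 2), 2 * M / ε ^ 3, by positivity, (min_le_right _ _).trans (by norm_num), by positivity, ?_⟩
  intro s hs1 hs2 hs3
  have hs2a : s.re ≤ 1 + r / 3 := hs2.trans (by gcongr; exact min_le_left _ _)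
  have hs2b : s.re ≤ 1 + 1 / 2 := hs2.trans (by gcongr; exact min_le_right _ _)
  have hτ := one_le_tau s
  set τ := tau s with hτd
  have hτ0 : 0 < τ := by linarith
  set κ : ℝ := ε ^ 4 / τ ^ 8 with hκ
  have hκ0 : 0 < κ := by positivity
  have hκε : κ ≤ ε := by
    rw [hκ, div_le_iff₀ (by positivity)]
    calc ε ^ 4 ≤ ε ^ 1 := pow_le_pow_of_le_one hε0.le (by linarith) (by norm_num)
      _ = ε * 1 := by ring
      _ ≤ _ := by gcongr; exact one_le_pow₀ hτ
  -- the point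
  set x : ℝ := s.re - 1 + κ with hx
  have hx0 : κ ≤ x := by linarith
  have h341 := DirichletCharacter.norm_LFunction_product_ge_one χ (x := x) (by linarith) s.im
  have e1 : (1 + x + I * s.im : ℂ) = s + κ := by
    apply Complex.ext
    · simp [hx]; ring
    · simp [hx]
  rw [e1, norm_mul, norm_mul, norm_pow, norm_pow] at h341
  have t1 := htriv x (by linarith) (by linarith)
  have t2 : ‖(χ ^ 2).LFunction (1 + x + 2 * I * s.im)‖ ≤ C0 * (2 * τ) := by
    have := hb0 (1 + x + 2 * I * s.im) (by simp; linarith) (by simp; linarith)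
      (by simp [abs_mul]; linarith)
    rw [iteratedDeriv_zero] at this
    refine this.trans ?_
    gcongr
    exact tau_double (by simp)
  have t3 : 1 ≤ (A / κ) ^ 3 * ‖χ.LFunction (s + κ)‖ ^ 4 * (C0 * (2 * τ)) := by
    refine h341.le.trans ?_
    have : A / x ≤ A / κ := by gcongr
    gcongr
    exact t1.trans this
  set ℓ := ‖χ.LFunction (s + κ)‖ with hℓ
  have hℓ0 : 0 ≤ ℓ := norm_nonneg _
  -- lower bound for ℓ
  have t4 : ε ^ 3 / (M * τ ^ 7) ≤ ℓ := by
    refine le_of_pow_le_pow_left₀ (n := 4) (by norm_num) hℓ0 ?_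
    have h5 : κ ^ 3 ≤ M * τ * ℓ ^ 4 := by
      have : κ ^ 3 ≤ A ^ 3 * ℓ ^ 4 * (C0 * (2 * τ)) := by
        have := mul_le_mul_of_nonneg_left t3 (by positivity : 0 ≤ κ ^ 3)
        rw [mul_one] at this
        refine this.trans (le_of_eq ?_)
        field_simp
      refine this.trans ?_
      have : 0 ≤ τ * ℓ ^ 4 := by positivity
      rw [hM]; nlinarith
    have h6 : κ ^ 3 = ε ^ 12 / τ ^ 24 := by rw [hκ]; ring
    rw [h6, div_le_iff₀ (by positivity)] at h5
    rw [div_pow, div_le_iff₀ (by positivity)]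
    calc (ε ^ 3) ^ 4 = ε ^ 12 := by ring
      _ ≤ M * τ * ℓ ^ 4 * τ ^ 24 := h5
      _ = ℓ ^ 4 * (M * τ ^ 25) := by ring
      _ ≤ ℓ ^ 4 * (M ^ 4 * τ ^ 28) := by
          gcongr
          · exact le_self_pow₀ hM1 (by norm_num)
          · norm_num
      _ = _ := by ring
  have t5 : ‖χ.LFunction (s + κ) - χ.LFunction s‖ ≤ C1 * τ * κ := by
    refine norm_sub_le_horizontal hκ0.le (fun z h1 h2 h3 => ?_) (fun z h1 h2 h3 => ?_)
    · refine DirichletCharacter.differentiableAt_LFunction _ _ (Or.inl ?_)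
      rintro rfl
      simp at h1; linarith
    · have := hb1 z (by linarith) (by linarith) (by rw [h3]; exact hs3)
      rw [iteratedDeriv_one] at this
      refine this.trans (le_of_eq ?_)
      rw [hτd, tau, tau, h3]
  have t6 : ℓ - ‖χ.LFunction s‖ ≤ C1 * τ * κ := (norm_sub_norm_le _ _).trans t5
  have t7 : C1 * τ * κ ≤ ε ^ 3 / (2 * M * τ ^ 7) := by
    rw [hκ]
    rw [le_div_iff₀ (by positivity)] at hε1
    have : C1 * τ * (ε ^ 4 / τ ^ 8) = (ε * C1) * (ε ^ 3 / τ ^ 7) := by field_simp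
    rw [this]
    have h8 : ε ^ 3 / (2 * M * τ ^ 7) = (1 / (2 * M)) * (ε ^ 3 / τ ^ 7) := by field_simp
    rw [h8]
    gcongr
    rw [le_div_iff₀ (by positivity)]
    nlinarith
  have t8 : ε ^ 3 / (2 * M * τ ^ 7) ≤ ‖χ.LFunction s‖ := by
    have : ε ^ 3 / (M * τ ^ 7) = 2 * (ε ^ 3 / (2 * M * τ ^ 7)) := by field_simp
    linarith
  rw [div_le_iff₀ (by positivity)] at t8
  rw [show 2 * M / ε ^ 3 * τ ^ 7 * ‖χ.LFunction s‖ = (‖χ.LFunction s‖ * (2 * M * τ ^ 7)) / ε ^ 3 by ring,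
    le_div_iff₀ (by positivity)]
  linarith

/-- second derivative of a logarithmic derivative -/
lemma iteratedDeriv_two_logDeriv {f : ℂ → ℂ} {V : Set ℂ} (hV : IsOpen V) (hf : DifferentiableOn ℂ f V)
    (h0 : ∀ z ∈ V, f z ≠ 0) {s : ℂ} (hs : s ∈ V) :
    iteratedDeriv 2 (fun z => deriv f z / f z) s =
      iteratedDeriv 3 f s / f s - 3 * (iteratedDeriv 2 f s * iteratedDeriv 1 f s / f s ^ 2)
        + 2 * (iteratedDeriv 1 f s ^ 3 / f s ^ 3) := by
  have d1 : DifferentiableOn ℂ (deriv f) V := hf.deriv hV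
  have d2 : DifferentiableOn ℂ (deriv (deriv f)) V := d1.deriv hV
  have H0 : ∀ z ∈ V, HasDerivAt f (deriv f z) z := fun z hz =>
    (hf.differentiableAt (hV.mem_nhds hz)).hasDerivAt
  have H1 : ∀ z ∈ V, HasDerivAt (deriv f) (deriv (deriv f) z) z := fun z hz =>
    (d1.differentiableAt (hV.mem_nhds hz)).hasDerivAt
  have H2 : ∀ z ∈ V, HasDerivAt (deriv (deriv f)) (deriv (deriv (deriv f)) z) z := fun z hz =>
    (d2.differentiableAt (hV.mem_nhds hz)).hasDerivAt
  have E1 : deriv (fun z => deriv f z / f z) =ᶠ[𝓝 s]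
      fun z => (deriv (deriv f) z * f z - deriv f z * deriv f z) / f z ^ 2 := by
    filter_upwards [hV.mem_nhds hs] with z hz
    exact ((H1 z hz).div (H0 z hz) (h0 z hz)).deriv
  have n0 := h0 s hs
  have E2 : iteratedDeriv 2 (fun z => deriv f z / f z) s = deriv (deriv (fun z => deriv f z / f z)) s := by
    rw [iteratedDeriv_succ, iteratedDeriv_one]
  rw [E2, E1.deriv_eq]
  have H3 := ((((H2 s hs).mul (H0 s hs)).sub ((H1 s hs).mul (H1 s hs))).div ((H0 s hs).pow 2)
    (pow_ne_zero 2 n0)).deriv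
  have i2 : iteratedDeriv 2 f = deriv (deriv f) := by rw [iteratedDeriv_succ, iteratedDeriv_one]
  have i3 : iteratedDeriv 3 f = deriv (deriv (deriv f)) := by rw [iteratedDeriv_succ, i2]
  rw [i2, i3, iteratedDeriv_one]
  refine H3.trans ?_
  simp only [Pi.mul_apply, Pi.sub_apply, Pi.pow_apply]
  field_simp
  push_cast
  ring

lemma isOpen_V : IsOpen {s : ℂ | 1 < s.re} := isOpen_lt continuous_const continuous_re

lemma ne_one_of_re {s : ℂ} (h : 1 < s.re) : s ≠ 1 := by rintro rfl; simp at h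

lemma logDeriv_bound {N : ℕ} [NeZero N] (χ : DirichletCharacter ℂ N) :
    ∃ κ₁ C : ℝ, 0 < κ₁ ∧ κ₁ ≤ 1 ∧ 0 ≤ C ∧ ∀ s : ℂ, 1 < s.re → s.re ≤ 1 + κ₁ → 1 ≤ |s.im| →
      ‖iteratedDeriv 2 (fun z => deriv χ.LFunction z / χ.LFunction z) s‖ ≤ C * tau s ^ 24 := by
  obtain ⟨κ₁, C, h1, h2, h3, h4⟩ := L_lower χ
  obtain ⟨C1, hC1, hb1⟩ := (good_L χ).deriv_bound 1
  obtain ⟨C2, hC2, hb2⟩ := (good_L χ).deriv_bound 2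
  obtain ⟨C3, hC3, hb3⟩ := (good_L χ).deriv_bound 3
  refine ⟨κ₁, C3 * C + 3 * (C2 * C1 * C ^ 2) + 2 * (C1 ^ 3 * C ^ 3), h1, h2, by positivity, fun s hs1 hs2 hs3 => ?_⟩
  rw [iteratedDeriv_two_logDeriv isOpen_V (fun z hz => (DirichletCharacter.differentiableAt_LFunction χ z
    (Or.inl (ne_one_of_re hz))).differentiableWithinAt) (fun z hz =>
    DirichletCharacter.LFunction_ne_zero_of_one_le_re χ (Or.inr (ne_one_of_re hz)) (le_of_lt hz)) hs1]
  have hne : χ.LFunction s ≠ 0 :=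
    DirichletCharacter.LFunction_ne_zero_of_one_le_re χ (Or.inr (ne_one_of_re hs1)) (le_of_lt hs1)
  have hτ := one_le_tau s
  have b0 : ‖(χ.LFunction s)⁻¹‖ ≤ C * tau s ^ 7 := by
    rw [norm_inv, inv_le_iff_one_le_mul₀ (norm_pos_iff.2 hne)]
    exact h4 s hs1 hs2 hs3
  have b1 := hb1 s hs1 (by linarith) hs3
  have b2 := hb2 s hs1 (by linarith) hs3
  have b3 := hb3 s hs1 (by linarith) hs3
  set τ := tau s
  have hτ0 : 0 ≤ τ := by linarith
  have c1 : ‖iteratedDeriv 3 χ.LFunction s / χ.LFunction s‖ ≤ C3 * C * τ ^ 24 := by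
    rw [div_eq_mul_inv, norm_mul]
    calc _ ≤ (C3 * τ) * (C * τ ^ 7) := by gcongr
      _ = C3 * C * τ ^ 8 := by ring
      _ ≤ _ := by gcongr; norm_num
  have c2 : ‖iteratedDeriv 2 χ.LFunction s * iteratedDeriv 1 χ.LFunction s / χ.LFunction s ^ 2‖
      ≤ C2 * C1 * C ^ 2 * τ ^ 24 := by
    rw [div_eq_mul_inv, ← inv_pow, norm_mul, norm_mul, norm_pow]
    calc _ ≤ ((C2 * τ) * (C1 * τ)) * (C * τ ^ 7) ^ 2 := by gcongr
      _ = C2 * C1 * C ^ 2 * τ ^ 16 := by ring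
      _ ≤ _ := by gcongr; norm_num
  have c3 : ‖iteratedDeriv 1 χ.LFunction s ^ 3 / χ.LFunction s ^ 3‖
      ≤ C1 ^ 3 * C ^ 3 * τ ^ 24 := by
    rw [div_eq_mul_inv, ← inv_pow, norm_mul, norm_pow, norm_pow]
    calc _ ≤ (C1 * τ) ^ 3 * (C * τ ^ 7) ^ 3 := by gcongr
      _ = _ := by ring
  refine (norm_add_le _ _).trans ?_
  refine (add_le_add_left (norm_sub_le _ _) _).trans ?_
  rw [norm_mul, norm_mul]
  simp only [Complex.norm_ofNat]
  nlinarith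

end PNTAP

namespace PNTAP
open Complex Filter Topology
open ArithmeticFunction.vonMangoldt (residueClass LFunctionResidueClassAux)

/-- The coefficients. -/
noncomputable def cR (q : ℕ) (b : ZMod q) (n : ℕ) : ℝ := residueClass b n - (q.totient : ℝ)⁻¹

/-- Complex coefficients. -/
noncomputable def cC (q : ℕ) (b : ZMod q) (n : ℕ) : ℂ := (cR q b n : ℂ)

section
set_option linter.unusedSectionVars false
variable {q : ℕ} [NeZero q] {b : ZMod q}

lemma summable_cC {s : ℂ} (hs : 1 < s.re) : LSeriesSummable (cC q b) s := by
  have h1 : LSeriesSummable (fun n => (residueClass b n : ℂ)) s :=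
    LSeriesSummable_of_abscissaOfAbsConv_lt_re <|
      (ArithmeticFunction.vonMangoldt.abscissaOfAbsConv_residueClass_le_one b).trans_lt
        (by exact_mod_cast hs)
  have h2 : LSeriesSummable ((q.totient : ℂ)⁻¹ • (1 : ℕ → ℂ)) s :=
    (LSeriesSummable_one_iff.2 hs).smul _
  have := h1.sub h2
  convert this using 1
  funext n
  simp [cC, cR]

lemma LSeries_cC {s : ℂ} (hs : 1 < s.re) : LSeries (cC q b) s =
    LSeries (fun n => (residueClass b n : ℂ)) s - (q.totient : ℂ)⁻¹ * riemannZeta s := by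
  have h1 : LSeriesSummable (fun n => (residueClass b n : ℂ)) s :=
    LSeriesSummable_of_abscissaOfAbsConv_lt_re <|
      (ArithmeticFunction.vonMangoldt.abscissaOfAbsConv_residueClass_le_one b).trans_lt
        (by exact_mod_cast hs)
  have h2 : LSeriesSummable ((q.totient : ℂ)⁻¹ • (1 : ℕ → ℂ)) s :=
    (LSeriesSummable_one_iff.2 hs).smul _
  rw [← LSeries_one_eq_riemannZeta hs, ← LSeries_smul, ← LSeries_sub h1 h2]
  congr 1
  funext n
  simp [cC, cR]

lemma abscissa_cC : LSeries.abscissaOfAbsConv (cC q b) ≤ 1 := by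
  refine LSeries.abscissaOfAbsConv_le_of_forall_lt_LSeriesSummable fun y hy => summable_cC ?_
  simpa using hy

open scoped Classical in
lemma low_bound (hb : IsUnit b) : ∃ C : ℝ, 0 ≤ C ∧ ∀ s : ℂ, 1 < s.re → s.re ≤ 2 → |s.im| ≤ 1 →
    ‖iteratedDeriv 2 (LSeries (cC q b)) s‖ ≤ C := by
  set G : ℂ → ℂ := fun s => LFunctionResidueClassAux b s -
    (q.totient : ℂ)⁻¹ * dslope (DirichletCharacter.LFunctionTrivChar₁ 1) 1 s with hG
  have hA1 : ∀ s, AnalyticAt ℂ (DirichletCharacter.LFunctionTrivChar₁ q) s := fun s =>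
    (DirichletCharacter.differentiable_LFunctionTrivChar₁ q).analyticAt s
  have hA2 : ∀ s, AnalyticAt ℂ (dslope (DirichletCharacter.LFunctionTrivChar₁ 1) 1) s := by
    intro s
    have : DifferentiableOn ℂ (dslope (DirichletCharacter.LFunctionTrivChar₁ 1) 1) Set.univ :=
      (Complex.differentiableOn_dslope univ_mem).2
        (DirichletCharacter.differentiable_LFunctionTrivChar₁ 1).differentiableOn
    exact (differentiableOn_univ.1 this).analyticAt s
  have hGA : ∀ s : ℂ, 1 ≤ s.re → AnalyticAt ℂ G s := by
    intro s hs
    refine AnalyticAt.sub ?_ (analyticAt_const.mul (hA2 s))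
    refine analyticAt_const.mul (AnalyticAt.sub ?_ ?_)
    · refine ((hA1 s).deriv.neg).div (hA1 s) ?_
      rcases eq_or_ne s 1 with rfl | h1
      · exact DirichletCharacter.LFunctionTrivChar₁_apply_one_ne_zero q
      · rw [DirichletCharacter.LFunctionTrivChar₁, Function.update_of_ne h1]
        exact mul_ne_zero (sub_ne_zero.2 h1)
          (DirichletCharacter.LFunction_ne_zero_of_one_le_re _ (Or.inr h1) hs)
    · refine Finset.analyticAt_fun_sum _ fun χ hχ => ?_
      have hχ' : χ ≠ 1 := by simpa using hχ
      have hd := (DirichletCharacter.differentiable_LFunction hχ').analyticAt s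
      exact (analyticAt_const.mul hd.deriv).div hd
        (DirichletCharacter.LFunction_ne_zero_of_one_le_re χ (Or.inl hχ') hs)
  have hEq : Set.EqOn (LSeries (cC q b)) G {s : ℂ | 1 < s.re} := by
    intro s hs
    have h1 : s ≠ 1 := ne_one_of_re hs
    have h1' : s - 1 ≠ 0 := sub_ne_zero.2 h1
    have e := ArithmeticFunction.vonMangoldt.eqOn_LFunctionResidueClassAux hb hs
    simp only [hG]
    rw [LSeries_cC hs, e, dslope_of_ne _ h1, slope_def_field, DirichletCharacter.LFunctionTrivChar₁,
      Function.update_of_ne h1, Function.update_self, DirichletCharacter.LFunctionTrivChar,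
      DirichletCharacter.LFunction_modOne_eq]
    simp
    field_simp
    ring
  have hcont : ContinuousOn (fun s => ‖iteratedDeriv 2 G s‖) (Set.Icc 1 2 ×ℂ Set.Icc (-1) 1) := by
    intro s hs
    have := hGA s (by have := hs.1; exact this.1)
    rw [iteratedDeriv_eq_iterate]
    exact (this.iterated_deriv 2).continuousAt.norm.continuousWithinAt
  obtain ⟨C, hC⟩ := (isCompact_Icc.reProdIm isCompact_Icc).bddAbove_image hcont
  refine ⟨max C 0, le_max_right _ _, fun s h1 h2 h3 => ?_⟩
  have : LSeries (cC q b) =ᶠ[𝓝 s] G := by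
    filter_upwards [isOpen_V.mem_nhds h1] with z hz using hEq hz
  rw [this.iteratedDeriv_eq 2]
  refine le_trans (hC ⟨s, ?_, rfl⟩) (le_max_left _ _)
  exact ⟨⟨h1.le, h2⟩, abs_le.1 h3⟩

lemma high_bound (hb : IsUnit b) : ∃ κ₁ C : ℝ, 0 < κ₁ ∧ κ₁ ≤ 1 ∧ 0 ≤ C ∧
    ∀ s : ℂ, 1 < s.re → s.re ≤ 1 + κ₁ → 1 ≤ |s.im| →
    ‖iteratedDeriv 2 (LSeries (cC q b)) s‖ ≤ C * tau s ^ 24 := by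
  classical
  choose κ C hκ0 hκ1 hC hbd using fun χ : DirichletCharacter ℂ q => logDeriv_bound χ
  obtain ⟨Cz, hCz, hz⟩ := good_zeta.deriv_bound 2
  set κ₁ := Finset.univ.inf' ⟨1, Finset.mem_univ _⟩ κ with hκ
  have hle : ∀ χ, κ₁ ≤ κ χ := fun χ => Finset.inf'_le _ (Finset.mem_univ χ)
  refine ⟨κ₁, ‖(q.totient : ℂ)⁻¹‖ * ∑ χ : DirichletCharacter ℂ q, ‖χ b⁻¹‖ * C χ +
    ‖(q.totient : ℂ)⁻¹‖ * Cz, ?_, (hle 1).trans (hκ1 1), ?_, ?_⟩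
  · exact (Finset.lt_inf'_iff _).2 fun χ _ => hκ0 χ
  · have : ∀ χ, 0 ≤ ‖χ b⁻¹‖ * C χ := fun χ => mul_nonneg (norm_nonneg _) (hC χ)
    have := Finset.sum_nonneg fun χ (_ : χ ∈ Finset.univ) => this χ
    positivity
  intro s hs1 hs2 hs3
  have hs2' : s.re ≤ 2 := by linarith [(hle 1).trans (hκ1 1)]
  have hs0 : s ≠ 1 := ne_one_of_re hs1
  have hE : LSeries (cC q b) =ᶠ[𝓝 s] fun s => -(q.totient : ℂ)⁻¹ *
      ∑ χ : DirichletCharacter ℂ q, χ b⁻¹ * (deriv χ.LFunction s / χ.LFunction s) -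
      (q.totient : ℂ)⁻¹ * riemannZeta s := by
    filter_upwards [isOpen_V.mem_nhds hs1] with z hz
    rw [LSeries_cC hz, ArithmeticFunction.vonMangoldt.LSeries_residueClass_eq hb hz]
  have hL : ∀ (N : ℕ) [NeZero N] (χ : DirichletCharacter ℂ N), AnalyticAt ℂ χ.LFunction s := by
    intro N _ χ
    have : DifferentiableOn ℂ χ.LFunction {s : ℂ | 1 < s.re} := fun z hz =>
      (DirichletCharacter.differentiableAt_LFunction χ z
        (Or.inl (ne_one_of_re hz))).differentiableWithinAt
    exact this.analyticAt (isOpen_V.mem_nhds hs1)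
  have hq : ∀ χ : DirichletCharacter ℂ q, AnalyticAt ℂ
      (fun s => deriv χ.LFunction s / χ.LFunction s) s := fun χ =>
    (hL q χ).deriv.div (hL q χ)
      (DirichletCharacter.LFunction_ne_zero_of_one_le_re χ (Or.inr hs0) hs1.le)
  have hzA : AnalyticAt ℂ riemannZeta s := by
    have := hL 1 1
    rwa [DirichletCharacter.LFunction_modOne_eq] at this
  have hsumA : AnalyticAt ℂ (fun s => ∑ χ : DirichletCharacter ℂ q,
      χ b⁻¹ * (deriv χ.LFunction s / χ.LFunction s)) s :=
    Finset.analyticAt_fun_sum _ fun χ _ => analyticAt_const.mul (hq χ)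
  have hA : AnalyticAt ℂ (fun s => -(q.totient : ℂ)⁻¹ * ∑ χ : DirichletCharacter ℂ q,
      χ b⁻¹ * (deriv χ.LFunction s / χ.LFunction s)) s := analyticAt_const.mul hsumA
  have hB : AnalyticAt ℂ (fun s => (q.totient : ℂ)⁻¹ * riemannZeta s) s := analyticAt_const.mul hzA
  have hD : ∀ χ : DirichletCharacter ℂ q, AnalyticAt ℂ (fun s =>
      χ b⁻¹ * (deriv χ.LFunction s / χ.LFunction s)) s := fun χ => analyticAt_const.mul (hq χ)
  rw [hE.iteratedDeriv_eq 2, iteratedDeriv_fun_sub hA.contDiffAt hB.contDiffAt, iteratedDeriv_const_mul_field,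
    iteratedDeriv_const_mul_field,
    iteratedDeriv_fun_sum fun χ _ => (hD χ).contDiffAt]
  refine (norm_sub_le _ _).trans ?_
  rw [add_mul, norm_mul, norm_mul, norm_neg, mul_assoc, mul_assoc, Finset.sum_mul]
  have hτ := one_le_tau s
  gcongr
  · refine norm_sum_le_of_le _ fun χ _ => ?_
    rw [iteratedDeriv_const_mul_field, norm_mul, mul_assoc]
    gcongr
    exact hbd χ s hs1 (by linarith [hle χ]) hs3
  · refine (hz s hs1 hs2' hs3).trans ?_
    gcongr
    exact le_self_pow₀ hτ (by norm_num)

lemma tau24 (s : ℂ) : tau s ^ 24 = (1 + |s.im|) ^ ((1 : ℝ) / 2) := by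
  unfold tau
  rw [← Real.rpow_natCast, ← Real.rpow_mul (by positivity)]
  norm_num

lemma full_bound (hb : IsUnit b) : ∃ κ₁ C : ℝ, 0 < κ₁ ∧ κ₁ ≤ 1 ∧ 0 ≤ C ∧
    ∀ s : ℂ, 1 < s.re → s.re ≤ 1 + κ₁ →
    ‖LSeries (fun n => cC q b n * (Real.log n : ℂ) ^ 2) s‖ ≤ C * (1 + |s.im|) ^ ((1 : ℝ) / 2) := by
  obtain ⟨C0, hC0, h0⟩ := low_bound hb
  obtain ⟨κ₁, C1, h1, h2, h3, h4⟩ := high_bound hb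
  refine ⟨κ₁, C0 + C1, h1, h2, by positivity, fun s hs1 hs2 => ?_⟩
  have e : LSeries (fun n => cC q b n * (Real.log n : ℂ) ^ 2) s =
      iteratedDeriv 2 (LSeries (cC q b)) s := by
    rw [LSeries_iteratedDeriv 2 (abscissa_cC.trans_lt (by exact_mod_cast hs1))]
    simp only [Function.iterate_succ, Function.iterate_zero, Function.comp_apply, id_eq]
    norm_num
    congr 1
    funext n
    simp [LSeries.logMul]
    ring
  rw [e, ← tau24]
  have hτ : 1 ≤ tau s ^ 24 := one_le_pow₀ (one_le_tau s)
  rcases le_total |s.im| 1 with h | h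
  · have := h0 s hs1 (by linarith) h
    nlinarith
  · have := h4 s hs1 hs2 h
    nlinarith

end
end PNTAP

namespace PNTAP
open Complex Filter Topology

/-- Fejer type kernel. -/
noncomputable def ker (u : ℝ) : ℂ := ((max (1 - u) 0 : ℝ) : ℂ)

lemma continuous_ker : Continuous ker := by
  unfold ker
  fun_prop

lemma hasMellin_ker {s : ℂ} (hs : 0 < s.re) : HasMellin ker s (1 / (s * (s + 1))) := by
  have h1 := hasMellin_one_Ioc hs
  have h2 := hasMellin_cpow_Ioc 1 (s := s) (by simp; linarith)
  have h3 := hasMellin_sub h1.1 h2.1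
  rw [h1.2, h2.2] at h3
  have he : Set.EqOn (fun t : ℝ => (t : ℂ) ^ (s - 1) • ((Set.Ioc (0:ℝ) 1).indicator (fun _ => (1 : ℂ)) t -
      (Set.Ioc (0:ℝ) 1).indicator (fun t : ℝ => (t : ℂ) ^ (1 : ℂ)) t))
      (fun t : ℝ => (t : ℂ) ^ (s - 1) • ker t) (Set.Ioi 0) := by
    intro t ht
    have ht' : (0:ℝ) < t := ht
    simp only
    congr 1
    by_cases h : t ≤ 1
    · have hm : t ∈ Set.Ioc (0:ℝ) 1 := ⟨ht', h⟩
      rw [Set.indicator_of_mem hm, Set.indicator_of_mem hm, ker, max_eq_left (by linarith)]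
      simp
    · have hm : t ∉ Set.Ioc (0:ℝ) 1 := fun h' => h h'.2
      rw [Set.indicator_of_notMem hm, Set.indicator_of_notMem hm, ker, max_eq_right (by linarith)]
      simp
  have hs0 : s ≠ 0 := by rintro rfl; simp at hs
  have hs1 : s + 1 ≠ 0 := by
    intro h
    have := congrArg Complex.re h
    simp at this
    linarith
  constructor
  · exact (MeasureTheory.integrableOn_congr_fun he measurableSet_Ioi).1 h3.1
  · have := MeasureTheory.setIntegral_congr_fun (μ := MeasureTheory.volume) measurableSet_Ioi he
    unfold mellin
    rw [← this]
    have h4 := h3.2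
    unfold mellin at h4
    rw [h4]
    field_simp
    ring

lemma norm_g_le {σ : ℝ} (hσ : 1 ≤ σ) (t : ℝ) :
    ‖1 / (((σ : ℂ) + t * I) * ((σ : ℂ) + t * I + 1))‖ ≤ 2 * (1 + |t|) ^ (-2 : ℝ) := by
  set s : ℂ := (σ : ℂ) + t * I with hs
  have hre : s.re = σ := by simp [hs]
  have him : s.im = t := by simp [hs]
  have h1 : ‖s‖ ^ 2 = σ ^ 2 + t ^ 2 := by
    rw [Complex.sq_norm, Complex.normSq_apply, hre, him]; ring
  have h2 : ‖s + 1‖ ^ 2 = (σ + 1) ^ 2 + t ^ 2 := by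
    rw [Complex.sq_norm, Complex.normSq_apply]; simp [hre, him]; ring
  have h3 : ‖s‖ ≤ ‖s + 1‖ := by
    apply le_of_sq_le_sq _ (norm_nonneg _)
    rw [h1, h2]; nlinarith
  have h4 : (1 + |t|) ^ 2 / 2 ≤ ‖s‖ * ‖s + 1‖ := by
    have : (1 + |t|) ^ 2 / 2 ≤ ‖s‖ ^ 2 := by
      rw [h1]
      nlinarith [sq_abs t, sq_nonneg (1 - |t|)]
    nlinarith [norm_nonneg s]
  rw [norm_div, norm_one, norm_mul, Real.rpow_neg (by positivity)]
  rw [show (2 : ℝ) * ((1 + |t|) ^ (2 : ℝ))⁻¹ = 1 / ((1 + |t|) ^ 2 / 2) by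
    rw [show ((1 + |t|) ^ (2 : ℝ)) = (1 + |t|) ^ 2 from Real.rpow_natCast _ 2]
    field_simp]
  gcongr

lemma continuous_line (σ : ℝ) : Continuous (fun t : ℝ => (σ : ℂ) + t * I) := by fun_prop

lemma line_ne {σ : ℝ} (hσ : 1 ≤ σ) (t : ℝ) :
    ((σ : ℂ) + t * I) * ((σ : ℂ) + t * I + 1) ≠ 0 := by
  refine mul_ne_zero ?_ ?_ <;>
  · intro h
    have := congrArg Complex.re h
    simp at this
    linarith

lemma continuous_g {σ : ℝ} (hσ : 1 ≤ σ) :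
    Continuous (fun t : ℝ => 1 / (((σ : ℂ) + t * I) * ((σ : ℂ) + t * I + 1))) :=
  continuous_const.div (by fun_prop) (line_ne hσ)

lemma integrable_pow {r : ℝ} (hr : 1 < r) :
    MeasureTheory.Integrable (fun t : ℝ => (1 + |t|) ^ (-r)) := by
  have := integrable_one_add_norm (E := ℝ) (μ := MeasureTheory.volume) (r := r) (by simpa using hr)
  simpa using this

lemma integrable_g {σ : ℝ} (hσ : 1 ≤ σ) : MeasureTheory.Integrable
    (fun t : ℝ => 1 / (((σ : ℂ) + t * I) * ((σ : ℂ) + t * I + 1))) := by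
  refine ((integrable_pow (r := 2) (by norm_num)).const_mul 2).mono'
    (continuous_g hσ).aestronglyMeasurable (Eventually.of_forall fun t => norm_g_le hσ t)

lemma mellin_ker_line {σ : ℝ} (hσ : 1 ≤ σ) (t : ℝ) : mellin ker ((σ : ℂ) + t * I) =
    1 / (((σ : ℂ) + t * I) * ((σ : ℂ) + t * I + 1)) :=
  (hasMellin_ker (by simp; linarith)).2

lemma ker_eq {σ : ℝ} (hσ : 1 ≤ σ) {u : ℝ} (hu : 0 < u) :
    ker u = (1 / (2 * Real.pi)) • ∫ t : ℝ, (u : ℂ) ^ (-((σ : ℂ) + t * I)) *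
      (1 / (((σ : ℂ) + t * I) * ((σ : ℂ) + t * I + 1))) := by
  have := mellinInv_mellin_eq σ ker hu (hasMellin_ker (by simp; linarith)).1 (by
    unfold Complex.VerticalIntegrable
    simp only [mellin_ker_line hσ]
    exact integrable_g hσ) continuous_ker.continuousAt
  rw [← this, mellinInv]
  simp only [mellin_ker_line hσ, smul_eq_mul]

/-- The constant. -/
noncomputable def I0 : ℝ := ∫ t : ℝ, (1 + |t|) ^ (-(3 / 2) : ℝ)

lemma perron {a : ℕ → ℂ} (ha0 : a 0 = 0) {σ X K : ℝ} (hσ : 1 ≤ σ) (hX : 0 < X)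
    (ha : LSeriesSummable a σ)
    (hK : ∀ t : ℝ, ‖LSeries a (σ + t * I)‖ ≤ K * (1 + |t|) ^ ((1 : ℝ) / 2)) :
    ‖∑' n : ℕ, a n * ker (n / X)‖ ≤ K * X ^ σ * I0 := by
  set g : ℝ → ℂ := fun t => 1 / (((σ : ℂ) + t * I) * ((σ : ℂ) + t * I + 1)) with hg
  set F : ℕ → ℝ → ℂ := fun n t => LSeries.term a ((σ : ℂ) + t * I) n *
    ((X : ℂ) ^ ((σ : ℂ) + t * I) * g t) with hF
  have hXc : (X : ℂ) ≠ 0 := by exact_mod_cast hX.ne'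
  have hnX : ∀ t : ℝ, ‖(X : ℂ) ^ ((σ : ℂ) + t * I)‖ = X ^ σ := by
    intro t
    rw [Complex.norm_cpow_eq_rpow_re_of_pos hX]; simp
  have hnt : ∀ n (t : ℝ), ‖LSeries.term a ((σ : ℂ) + t * I) n‖ = ‖LSeries.term a (σ : ℂ) n‖ := by
    intro n t
    rw [LSeries.norm_term_eq, LSeries.norm_term_eq]; simp
  have hnF : ∀ n t, ‖F n t‖ = ‖LSeries.term a (σ : ℂ) n‖ * (X ^ σ * ‖g t‖) := by
    intro n t
    simp only [hF]
    rw [norm_mul, norm_mul, hnX, hnt]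
  have hct : ∀ n, Continuous (fun t : ℝ => LSeries.term a ((σ : ℂ) + t * I) n) := by
    intro n
    rcases eq_or_ne n 0 with rfl | hn
    · simp only [LSeries.term_zero]; exact continuous_const
    · simp only [LSeries.term_of_ne_zero hn]
      have hn' : (n : ℂ) ≠ 0 := by exact_mod_cast hn
      refine continuous_const.div ((continuous_line σ).const_cpow (Or.inl hn')) fun t => ?_
      rw [Complex.cpow_ne_zero_iff]; exact Or.inl hn'
  have hFi : ∀ n, MeasureTheory.Integrable (F n) := by
    intro n
    refine (((integrable_g hσ).norm.const_mul (X ^ σ)).const_mul ‖LSeries.term a (σ : ℂ) n‖).mono'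
      ?_ (Eventually.of_forall fun t => (hnF n t).le)
    exact ((hct n).mul (((continuous_line σ).const_cpow (Or.inl hXc)).mul
      (continuous_g hσ))).aestronglyMeasurable
  have hsum := MeasureTheory.hasSum_integral_of_summable_integral_norm hFi (by
    simp only [hnF]
    simp only [MeasureTheory.integral_const_mul]
    exact ha.norm.mul_right _)
  have hterm : ∀ n, a n * ker (n / X) = (1 / (2 * Real.pi)) • ∫ t, F n t := by
    intro n
    rcases eq_or_ne n 0 with rfl | hn
    · simp [hF, ha0]
    · have hn' : (0 : ℝ) < n := by exact_mod_cast Nat.pos_of_ne_zero hn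
      rw [ker_eq hσ (by positivity : (0 : ℝ) < n / X), mul_smul_comm,
        ← MeasureTheory.integral_const_mul]
      congr 1
      congr 1
      funext t
      simp only [hF, LSeries.term_of_ne_zero hn]
      have : ((n / X : ℝ) : ℂ) ^ (-((σ : ℂ) + t * I)) =
          (X : ℂ) ^ ((σ : ℂ) + t * I) / (n : ℂ) ^ ((σ : ℂ) + t * I) := by
        rw [Complex.cpow_neg, div_eq_mul_inv (n : ℝ) X, Complex.ofReal_mul,
          Complex.mul_cpow_ofReal_nonneg hn'.le (by positivity), Complex.ofReal_inv,
          Complex.inv_cpow _ _ (by rw [Complex.arg_ofReal_of_nonneg hX.le]; exact Real.pi_pos.ne)]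
        rw [mul_inv, inv_inv, Complex.ofReal_natCast]
        ring
      rw [this]
      ring
  simp only [hterm]
  have h2 := hsum.const_smul (1 / (2 * Real.pi))
  rw [h2.tsum_eq]
  have hLs : ∀ t : ℝ, ∑' n, F n t = LSeries a ((σ : ℂ) + t * I) *
      ((X : ℂ) ^ ((σ : ℂ) + t * I) * g t) := by
    intro t
    simp only [hF]
    rw [tsum_mul_right]
    rfl
  simp only [hLs]
  rw [norm_smul]
  have hI0 : 0 ≤ I0 := MeasureTheory.integral_nonneg fun t => by positivity
  have hK0 : 0 ≤ K := by
    have := (norm_nonneg _).trans (hK 0)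
    simpa using this
  have hbd : ‖∫ t : ℝ, LSeries a ((σ : ℂ) + t * I) * ((X : ℂ) ^ ((σ : ℂ) + t * I) * g t)‖ ≤
      ∫ t : ℝ, (2 * K * X ^ σ) * (1 + |t|) ^ (-(3 / 2) : ℝ) := by
    refine MeasureTheory.norm_integral_le_of_norm_le
      ((integrable_pow (r := 3 / 2) (by norm_num)).const_mul _) (Eventually.of_forall fun t => ?_)
    rw [norm_mul, norm_mul, hnX]
    calc _ ≤ (K * (1 + |t|) ^ ((1 : ℝ) / 2)) * (X ^ σ * (2 * (1 + |t|) ^ (-2 : ℝ))) := by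
          gcongr
          · exact hK t
          · exact norm_g_le hσ t
      _ = (2 * K * X ^ σ) * ((1 + |t|) ^ ((1 : ℝ) / 2) * (1 + |t|) ^ (-2 : ℝ)) := by ring
      _ = _ := by
          rw [← Real.rpow_add (by positivity)]; norm_num
  rw [MeasureTheory.integral_const_mul] at hbd
  have hpi : ‖(1 / (2 * Real.pi) : ℝ)‖ ≤ 1 / 2 := by
    rw [Real.norm_of_nonneg (by positivity)]
    apply one_div_le_one_div_of_le (by norm_num)
    linarith [Real.pi_gt_three]
  calc _ ≤ (1 / 2) * (2 * K * X ^ σ * I0) := by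
        gcongr
        exact hbd
    _ = _ := by ring

end PNTAP

namespace PNTAP
open Complex Filter Topology

section
variable {q : ℕ} [NeZero q] {b : ZMod q}

/-- Weighted coefficients. -/
noncomputable def aR (q : ℕ) (b : ZMod q) (n : ℕ) : ℝ := cR q b n * Real.log n ^ 2

lemma T_bound (hb : IsUnit b) : ∃ C X₁ : ℝ, 0 ≤ C ∧ ∀ X : ℝ, X₁ ≤ X →
    |∑ n ∈ Finset.Ioc 0 ⌊X⌋₊, aR q b n * (X - n)| ≤ C * X ^ 2 := by
  obtain ⟨κ, K, hκ0, hκ1, hK0, hK⟩ := full_bound hb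
  have hI0 : 0 ≤ I0 := MeasureTheory.integral_nonneg fun t => by positivity
  refine ⟨K * Real.exp 1 * I0, Real.exp (1 / κ), by positivity, fun X hX => ?_⟩
  have hX0 : 0 < X := (Real.exp_pos _).trans_le hX
  have hlog : 1 / κ ≤ Real.log X := by rwa [Real.le_log_iff_exp_le hX0]
  have hk : 0 < 1 / κ := by positivity
  have hl0 : 0 < Real.log X := hk.trans_le hlog
  set σ : ℝ := 1 + 1 / Real.log X with hσ
  have hσ1 : 1 < σ := by rw [hσ]; have : 0 < 1 / Real.log X := by positivity
                         linarith
  have hσ2 : σ ≤ 1 + κ := by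
    rw [hσ]; gcongr
    rw [div_le_iff₀ hl0]
    rw [div_le_iff₀ hκ0] at hlog
    linarith
  set a : ℕ → ℂ := fun n => cC q b n * (Real.log n : ℂ) ^ 2 with ha
  have haR : ∀ n, a n = (aR q b n : ℂ) := by
    intro n; simp [ha, aR, cC]
  have hsum : LSeriesSummable a σ := by
    have e : a = LSeries.logMul^[2] (cC q b) := by
      funext n
      simp [LSeries.logMul, ha]
      ring
    rw [e]
    apply LSeriesSummable_of_abscissaOfAbsConv_lt_re
    rw [LSeries.absicssaOfAbsConv_logPowMul]
    exact abscissa_cC.trans_lt (by simpa using mod_cast hσ1)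
  have hp := perron (a := a) (by simp [ha]) hσ1.le hX0 hsum (K := K) (fun t => by
    have := hK ((σ : ℂ) + t * I) (by simpa using hσ1) (by simpa using hσ2)
    simpa using this)
  have hXσ : X ^ σ = X * Real.exp 1 := by
    rw [hσ, Real.rpow_add hX0, Real.rpow_one, Real.rpow_def_of_pos hX0]
    congr 2
    field_simp
  have htsum : ∑' n : ℕ, a n * ker (n / X) =
      ((∑ n ∈ Finset.Ioc 0 ⌊X⌋₊, aR q b n * (1 - n / X) : ℝ) : ℂ) := by
    rw [tsum_eq_sum (s := Finset.Ioc 0 ⌊X⌋₊)]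
    · push_cast
      refine Finset.sum_congr rfl fun n hn => ?_
      rw [haR, ker, max_eq_left]
      · push_cast; rfl
      · have : (n : ℝ) ≤ X := (Nat.le_floor_iff hX0.le).1 (Finset.mem_Ioc.1 hn).2
        have : n / X ≤ 1 := by rwa [div_le_one hX0]
        linarith
    · intro n hn
      rcases eq_or_ne n 0 with rfl | h0
      · simp [ha]
      · have : X < n := by
          rw [← Nat.floor_lt hX0.le]
          by_contra h
          exact hn (Finset.mem_Ioc.2 ⟨Nat.pos_of_ne_zero h0, by omega⟩)
        rw [ker, max_eq_right]
        · simp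
        · have : 1 < n / X := by rwa [one_lt_div hX0]
          linarith
  rw [htsum, Complex.norm_real, Real.norm_eq_abs, hXσ] at hp
  have e2 : ∑ n ∈ Finset.Ioc 0 ⌊X⌋₊, aR q b n * (X - n) =
      X * ∑ n ∈ Finset.Ioc 0 ⌊X⌋₊, aR q b n * (1 - n / X) := by
    rw [Finset.mul_sum]
    refine Finset.sum_congr rfl fun n _ => ?_
    field_simp
  rw [e2, abs_mul, abs_of_pos hX0]
  calc _ ≤ X * (K * (X * Real.exp 1) * I0) := by gcongr
    _ = _ := by ring

end

section
variable (a : ℕ → ℝ)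

/-- Partial sums. -/
noncomputable def PS (x : ℝ) : ℝ := ∑ n ∈ Finset.Ioc 0 ⌊x⌋₊, a n

/-- Weighted partial sums. -/
noncomputable def PT (x : ℝ) : ℝ := ∑ n ∈ Finset.Ioc 0 ⌊x⌋₊, a n * (x - n)

variable {a}

lemma card_le {x y : ℝ} (hx : 0 ≤ x) (hxy : x ≤ y) :
    (((Finset.Ioc ⌊x⌋₊ ⌊y⌋₊).card : ℕ) : ℝ) ≤ y - x + 1 := by
  rw [Nat.card_Ioc, Nat.cast_sub (Nat.floor_mono hxy)]
  linarith [Nat.floor_le (hx.trans hxy), Nat.lt_floor_add_one x]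

lemma mem_Ioc_floor {x y : ℝ} (hx : 0 ≤ x) (hxy : x ≤ y) {n : ℕ}
    (hn : n ∈ Finset.Ioc ⌊x⌋₊ ⌊y⌋₊) : x < n ∧ (n : ℝ) ≤ y := by
  rw [Finset.mem_Ioc] at hn
  exact ⟨(Nat.floor_lt hx).1 hn.1, (Nat.le_floor_iff (hx.trans hxy)).1 hn.2⟩

lemma diff_upper {x y L : ℝ} (hx : 0 ≤ x) (hxy : x ≤ y) (hL : 0 ≤ L)
    (ha : ∀ n ∈ Finset.Ioc ⌊x⌋₊ ⌊y⌋₊, -L ≤ a n) :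
    (y - x) * PS a x ≤ PT a y - PT a x + (y - x) * (y - x + 1) * L := by
  have h1 : PT a y = ∑ n ∈ Finset.Ioc 0 ⌊x⌋₊, a n * (y - n) +
      ∑ n ∈ Finset.Ioc ⌊x⌋₊ ⌊y⌋₊, a n * (y - n) :=
    (Finset.sum_Ioc_consecutive _ (Nat.zero_le _) (Nat.floor_mono hxy)).symm
  have h2 : ∑ n ∈ Finset.Ioc 0 ⌊x⌋₊, a n * (y - n) - PT a x = (y - x) * PS a x := by
    rw [PT, PS, ← Finset.sum_sub_distrib, Finset.mul_sum]
    exact Finset.sum_congr rfl fun n _ => by ring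
  have h3 : ∑ n ∈ Finset.Ioc ⌊x⌋₊ ⌊y⌋₊, (-(L * (y - x))) ≤
      ∑ n ∈ Finset.Ioc ⌊x⌋₊ ⌊y⌋₊, a n * (y - n) := by
    refine Finset.sum_le_sum fun n hn => ?_
    have := mem_Ioc_floor hx hxy hn
    have h := ha n hn
    nlinarith
  rw [Finset.sum_const, nsmul_eq_mul] at h3
  have h4 := card_le hx hxy
  have h5 : 0 ≤ L * (y - x) := mul_nonneg hL (by linarith)
  nlinarith

lemma diff_lower {x y L : ℝ} (hx : 0 ≤ x) (hxy : x ≤ y) (hL : 0 ≤ L)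
    (ha : ∀ n ∈ Finset.Ioc ⌊x⌋₊ ⌊y⌋₊, -L ≤ a n) :
    PT a y - PT a x - (y - x) * (y - x + 1) * L ≤ (y - x) * PS a y := by
  have h0 : PS a y = PS a x + ∑ n ∈ Finset.Ioc ⌊x⌋₊ ⌊y⌋₊, a n :=
    (Finset.sum_Ioc_consecutive _ (Nat.zero_le _) (Nat.floor_mono hxy)).symm
  have h1 : PT a y = ∑ n ∈ Finset.Ioc 0 ⌊x⌋₊, a n * (y - n) +
      ∑ n ∈ Finset.Ioc ⌊x⌋₊ ⌊y⌋₊, a n * (y - n) :=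
    (Finset.sum_Ioc_consecutive _ (Nat.zero_le _) (Nat.floor_mono hxy)).symm
  have h2 : ∑ n ∈ Finset.Ioc 0 ⌊x⌋₊, a n * (y - n) - PT a x = (y - x) * PS a x := by
    rw [PT, PS, ← Finset.sum_sub_distrib, Finset.mul_sum]
    exact Finset.sum_congr rfl fun n _ => by ring
  have h3 : ∑ n ∈ Finset.Ioc ⌊x⌋₊ ⌊y⌋₊, (-(L * (y - x))) ≤
      ∑ n ∈ Finset.Ioc ⌊x⌋₊ ⌊y⌋₊, a n * (n - x) := by
    refine Finset.sum_le_sum fun n hn => ?_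
    have := mem_Ioc_floor hx hxy hn
    have h := ha n hn
    nlinarith
  have h6 : (y - x) * ∑ n ∈ Finset.Ioc ⌊x⌋₊ ⌊y⌋₊, a n =
      ∑ n ∈ Finset.Ioc ⌊x⌋₊ ⌊y⌋₊, a n * (y - n) + ∑ n ∈ Finset.Ioc ⌊x⌋₊ ⌊y⌋₊, a n * (n - x) := by
    rw [Finset.mul_sum, ← Finset.sum_add_distrib]
    exact Finset.sum_congr rfl fun n _ => by ring
  rw [Finset.sum_const, nsmul_eq_mul] at h3
  have h4 := card_le hx hxy
  have h5 : 0 ≤ L * (y - x) := mul_nonneg hL (by linarith)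
  nlinarith

lemma unsmooth (ha : ∀ n : ℕ, 1 ≤ n → -(Real.log n ^ 2) ≤ a n) {C X₁ : ℝ} (hC : 0 ≤ C)
    (hT : ∀ X, X₁ ≤ X → |PT a X| ≤ C * X ^ 2) :
    ∃ x₁ : ℝ, ∀ x, x₁ ≤ x → |PS a x| ≤ (8 * C + 8) * (x * Real.log x) := by
  refine ⟨max (2 * X₁) (Real.exp 2), fun x hx => ?_⟩
  have hx1 : 2 * X₁ ≤ x := (le_max_left _ _).trans hx
  have hx2 : Real.exp 2 ≤ x := (le_max_right _ _).trans hx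
  have hx3 : 3 ≤ x := by
    have := Real.add_one_le_exp (2 : ℝ); linarith
  have hx0 : 0 < x := by linarith
  have hl : 2 ≤ Real.log x := by rwa [Real.le_log_iff_exp_le hx0]
  have hlx : Real.log x ≤ x := (Real.log_le_sub_one_of_pos hx0).trans (by linarith)
  set l := Real.log x with hld
  set h := x / l with hh
  have hh1 : 1 ≤ h := by rw [hh, one_le_div (by linarith)]; exact hlx
  have hh2 : h ≤ x / 2 := by rw [hh]; gcongr
  have hhl : h * l = x := by rw [hh]; field_simp
  have hlog2 : Real.log (x + h) ≤ 2 * l := by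
    have : Real.log (x + h) ≤ Real.log (x ^ 2) := Real.log_le_log (by linarith) (by nlinarith)
    rwa [Real.log_pow] at this
  have haL : ∀ n : ℕ, 1 ≤ n → (n : ℝ) ≤ x + h → -(4 * l ^ 2) ≤ a n := by
    intro n hn hn2
    refine le_trans ?_ (ha n hn)
    have h0 : 0 ≤ Real.log n := Real.log_natCast_nonneg n
    have : Real.log n ≤ 2 * l := (Real.log_le_log (by exact_mod_cast hn) hn2).trans hlog2
    nlinarith
  have u := diff_upper (a := a) (x := x) (y := x + h) (L := 4 * l ^ 2) hx0.le (by linarith)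
    (by positivity) (fun n hn => haL n (by rw [Finset.mem_Ioc] at hn; omega)
      (mem_Ioc_floor hx0.le (by linarith) hn).2)
  have w := diff_lower (a := a) (x := x - h) (y := x) (L := 4 * l ^ 2) (by linarith) (by linarith)
    (by positivity) (fun n hn => haL n (by rw [Finset.mem_Ioc] at hn; omega)
      ((mem_Ioc_floor (by linarith) (by linarith) hn).2.trans (by linarith)))
  have t1 := abs_le.1 (hT (x + h) (by by_contra h; nlinarith))
  have t2 := abs_le.1 (hT x (by by_contra h; nlinarith))
  have t3 := abs_le.1 (hT (x - h) (by linarith))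
  have e1 : x + h - x = h := by ring
  have e2 : x - (x - h) = h := by ring
  rw [e1] at u
  rw [e2] at w
  have hh0 : 0 < h := by linarith
  have s1 : C * (x + h) ^ 2 ≤ C * (4 * x ^ 2) := by
    apply mul_le_mul_of_nonneg_left _ hC; nlinarith
  have s2 : C * (x - h) ^ 2 ≤ C * (x ^ 2) := by
    apply mul_le_mul_of_nonneg_left _ hC; nlinarith
  have s3 : h * (h + 1) * (4 * l ^ 2) ≤ 8 * x ^ 2 := by
    have : h * (h + 1) ≤ 2 * h ^ 2 := by nlinarith
    calc _ ≤ 2 * h ^ 2 * (4 * l ^ 2) := by gcongr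
      _ = 8 * (h * l) ^ 2 := by ring
      _ = _ := by rw [hhl]
  have key : h * ((8 * C + 8) * (x * l)) = (8 * C + 8) * x ^ 2 := by
    rw [← hhl]; ring
  have hCx : 0 ≤ C * x ^ 2 := by positivity
  rw [abs_le]
  constructor
  · refine le_of_mul_le_mul_left ?_ hh0
    rw [mul_neg, key]
    linarith
  · refine le_of_mul_le_mul_left ?_ hh0
    rw [key]
    linarith

end
end PNTAP

namespace PNTAP
open ArithmeticFunction (vonMangoldt)
open ArithmeticFunction.vonMangoldt (residueClass)

lemma log_le_sum {y : ℝ} (hy : 0 ≤ y) : Real.log y ≤ ∑ k ∈ Finset.Ioc 0 ⌊y⌋₊, (k : ℝ)⁻¹ := by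
  have := log_le_harmonic_floor y hy
  rw [harmonic_eq_sum_Icc] at this
  push_cast at this
  exact this

lemma log_weight_bound : ∃ D : ℝ, 0 ≤ D ∧ ∀ x : ℝ, 1 ≤ x →
    ∑ n ∈ Finset.Ioc 0 ⌊x⌋₊, (vonMangoldt n + 1) * Real.log (x / n) ≤ D * x := by
  have hsumm : Summable (fun k : ℕ => ((k : ℝ) ^ 2)⁻¹) := Real.summable_nat_pow_inv.2 (by norm_num)
  have hlog4 : 0 ≤ Real.log 4 := Real.log_nonneg (by norm_num)
  have hD : 0 ≤ ∑' k : ℕ, ((k : ℝ) ^ 2)⁻¹ := tsum_nonneg fun k => by positivity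
  refine ⟨(Real.log 4 + 5) * ∑' k : ℕ, ((k : ℝ) ^ 2)⁻¹, by positivity, fun x hx => ?_⟩
  have hx0 : 0 ≤ x := by linarith
  calc _ ≤ ∑ n ∈ Finset.Ioc 0 ⌊x⌋₊, ∑ k ∈ Finset.Ioc 0 ⌊x / n⌋₊,
        (vonMangoldt n + 1) * (k : ℝ)⁻¹ := by
        refine Finset.sum_le_sum fun n _ => ?_
        rw [← Finset.mul_sum]
        have : 0 ≤ vonMangoldt n := ArithmeticFunction.vonMangoldt_nonneg
        gcongr
        exact log_le_sum (by positivity)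
    _ = ∑ k ∈ Finset.Ioc 0 ⌊x⌋₊, ∑ n ∈ Finset.Ioc 0 ⌊x / k⌋₊,
        (vonMangoldt n + 1) * (k : ℝ)⁻¹ := by
        refine Finset.sum_comm' fun n k => ?_
        simp only [Finset.mem_Ioc, Nat.floor_div_natCast]
        constructor
        · rintro ⟨⟨h1, h2⟩, h3, h4⟩
          rw [Nat.le_div_iff_mul_le h1] at h4
          refine ⟨⟨h1, ?_⟩, h3, ?_⟩
          · rw [Nat.le_div_iff_mul_le h3]; linarith
          · nlinarith
        · rintro ⟨⟨h1, h2⟩, h3, h4⟩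
          rw [Nat.le_div_iff_mul_le h3] at h2
          refine ⟨⟨h1, ?_⟩, h3, ?_⟩
          · nlinarith
          · rw [Nat.le_div_iff_mul_le h1]; linarith
    _ ≤ ∑ k ∈ Finset.Ioc 0 ⌊x⌋₊, (Real.log 4 + 5) * x * ((k : ℝ) ^ 2)⁻¹ := by
        refine Finset.sum_le_sum fun k hk => ?_
        have hk0 : (0 : ℝ) < k := by exact_mod_cast (Finset.mem_Ioc.1 hk).1
        rw [← Finset.sum_mul, Finset.sum_add_distrib]
        have h1 := Chebyshev.psi_le_const_mul_self (x := x / k) (by positivity)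
        rw [Chebyshev.psi] at h1
        have h2 : ∑ n ∈ Finset.Ioc 0 ⌊x / k⌋₊, (1 : ℝ) ≤ x / k := by
          simp
          exact Nat.floor_le (by positivity)
        calc _ ≤ ((Real.log 4 + 4) * (x / k) + x / k) * (k : ℝ)⁻¹ := by gcongr
          _ = _ := by field_simp; ring
    _ = (Real.log 4 + 5) * x * ∑ k ∈ Finset.Ioc 0 ⌊x⌋₊, ((k : ℝ) ^ 2)⁻¹ := by
        rw [Finset.mul_sum]
    _ ≤ (Real.log 4 + 5) * x * ∑' k : ℕ, ((k : ℝ) ^ 2)⁻¹ := by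
        gcongr
        exact hsumm.sum_le_tsum _ fun k _ => by positivity
    _ = _ := by ring

section
variable {q : ℕ} [NeZero q] {b : ZMod q}

lemma inv_totient_bounds (q : ℕ) [NeZero q] :
    0 ≤ (q.totient : ℝ)⁻¹ ∧ (q.totient : ℝ)⁻¹ ≤ 1 := by
  refine ⟨by positivity, inv_le_one_of_one_le₀ ?_⟩
  exact_mod_cast Nat.totient_pos.2 (NeZero.pos q)

lemma abs_cR_le (n : ℕ) : |cR q b n| ≤ vonMangoldt n + 1 := by
  have h := inv_totient_bounds q
  have h1 := ArithmeticFunction.vonMangoldt.residueClass_nonneg b n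
  have h2 := ArithmeticFunction.vonMangoldt.residueClass_le b n
  rw [cR, abs_le]
  constructor <;> linarith

lemma PS_cR (hb : IsUnit b) : ∃ C x₁ : ℝ, 0 ≤ C ∧ ∀ x, x₁ ≤ x →
    |PS (cR q b) x| ≤ C * (x / Real.log x) := by
  obtain ⟨C, X₁, hC, hT⟩ := T_bound hb
  obtain ⟨x₁, hA⟩ := unsmooth (a := aR q b) (C := C) (X₁ := X₁) (by
    intro n _
    have h := inv_totient_bounds q
    have h1 := ArithmeticFunction.vonMangoldt.residueClass_nonneg b n
    have : -1 ≤ cR q b n := by rw [cR]; linarith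
    have h3 : 0 ≤ Real.log n ^ 2 := by positivity
    rw [aR]; nlinarith) hC hT
  obtain ⟨D, hD, hW⟩ := log_weight_bound
  refine ⟨8 * C + 8 + 2 * D, max x₁ 3, by positivity, fun x hx => ?_⟩
  have hx1 := hA x ((le_max_left _ _).trans hx)
  have hx3 : 3 ≤ x := (le_max_right _ _).trans hx
  have hx0 : 0 < x := by linarith
  have hl : 0 < Real.log x := Real.log_pos (by linarith)
  have hdiff : |PS (cR q b) x * Real.log x ^ 2 - PS (aR q b) x| ≤ 2 * Real.log x * (D * x) := by
    rw [PS, PS, Finset.sum_mul, ← Finset.sum_sub_distrib]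
    refine (Finset.abs_sum_le_sum_abs _ _).trans ?_
    refine le_trans ?_ (mul_le_mul_of_nonneg_left (hW x (by linarith)) (by positivity))
    rw [Finset.mul_sum]
    refine Finset.sum_le_sum fun n hn => ?_
    rw [Finset.mem_Ioc] at hn
    have hn0 : (0 : ℝ) < n := by exact_mod_cast hn.1
    have hnx : (n : ℝ) ≤ x := (Nat.le_floor_iff hx0.le).1 hn.2
    have hln : 0 ≤ Real.log n := Real.log_natCast_nonneg n
    have hlnx : Real.log n ≤ Real.log x := Real.log_le_log hn0 hnx
    rw [aR, ← mul_sub, abs_mul, Real.log_div hx0.ne' hn0.ne']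
    have e : Real.log x ^ 2 - Real.log n ^ 2 ≤ 2 * Real.log x * (Real.log x - Real.log n) := by
      nlinarith
    rw [abs_of_nonneg (by nlinarith : 0 ≤ Real.log x ^ 2 - Real.log n ^ 2)]
    calc _ ≤ (vonMangoldt n + 1) * (2 * Real.log x * (Real.log x - Real.log n)) :=
          mul_le_mul (abs_cR_le n) e (by nlinarith) ((abs_nonneg _).trans (abs_cR_le (b := b) n))
      _ = _ := by ring
  have h3 : |PS (cR q b) x| * Real.log x ^ 2 ≤ (8 * C + 8 + 2 * D) * (x * Real.log x) := by
    have : |PS (cR q b) x| * Real.log x ^ 2 = |PS (cR q b) x * Real.log x ^ 2| := by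
      rw [abs_mul, abs_of_nonneg (by positivity : 0 ≤ Real.log x ^ 2)]
    rw [this]
    have := abs_sub_abs_le_abs_sub (PS (cR q b) x * Real.log x ^ 2) (PS (aR q b) x)
    linarith
  rw [← mul_div_assoc, le_div_iff₀ hl]
  refine le_of_mul_le_mul_right ?_ hl
  linarith

lemma theta_eq (x : ℝ) (n : ℕ) : chebyshevThetaAP x q n =
    ∑ k ∈ Finset.Ioc 0 ⌊x⌋₊, if k.Prime then residueClass (n : ZMod q) k else 0 := by
  rw [chebyshevThetaAP, Finset.sum_filter, Finset.range_eq_Ico, Finset.sum_eq_sum_Ico_succ_bot (by omega)]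
  simp only [Nat.not_prime_zero, false_and, if_false, zero_add]
  refine Finset.sum_congr (by ext; simp; omega) fun k _ => ?_
  by_cases hk : k.Prime
  · simp only [hk, true_and, if_true, residueClass, Set.indicator_apply, Set.mem_setOf_eq,
      ArithmeticFunction.vonMangoldt_apply_prime hk]
    have : k % q = n % q ↔ (k : ZMod q) = n := (ZMod.natCast_eq_natCast_iff' k n q).symm
    simp only [this]
  · simp [hk]

lemma theta_bounds {x : ℝ} (hx : 1 ≤ x) (n : ℕ) :
    0 ≤ chebyshevThetaAP x q n ∧ chebyshevThetaAP x q n ≤ (Real.log 4 + 4) * x ∧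
    |chebyshevThetaAP x q n - ∑ k ∈ Finset.Ioc 0 ⌊x⌋₊, residueClass (n : ZMod q) k| ≤
      2 * √x * Real.log x := by
  have h0 := fun k => ArithmeticFunction.vonMangoldt.residueClass_nonneg (n : ZMod q) k
  have h1 := fun k => ArithmeticFunction.vonMangoldt.residueClass_le (n : ZMod q) k
  rw [theta_eq]
  refine ⟨Finset.sum_nonneg fun k _ => ?_, ?_, ?_⟩
  · split_ifs
    · exact h0 k
    · exact le_rfl
  · refine le_trans ?_ (Chebyshev.psi_le_const_mul_self (by linarith))
    rw [Chebyshev.psi]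
    refine Finset.sum_le_sum fun k _ => ?_
    split_ifs
    · exact h1 k
    · exact ArithmeticFunction.vonMangoldt_nonneg
  · refine le_trans ?_ (Chebyshev.psi_sub_theta_le hx)
    rw [Chebyshev.psi_sub_theta_eq_sum_not_prime, Finset.sum_filter, ← Finset.sum_sub_distrib]
    refine (Finset.abs_sum_le_sum_abs _ _).trans (Finset.sum_le_sum fun k _ => ?_)
    by_cases hk : k.Prime
    · simp [hk]
    · simp only [hk, if_false, zero_sub, abs_neg, not_false_eq_true, if_true]
      rw [abs_of_nonneg (h0 k)]
      exact h1 k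

lemma final_one (n : ℕ) (hn : IsUnit (n : ZMod q)) : ∃ C : ℝ, 0 ≤ C ∧ ∀ x : ℝ, 3 ≤ x →
    |chebyshevThetaAP x q n - x / q.totient| ≤ C * (x / Real.log x) := by
  obtain ⟨C, x₁, hC, hP⟩ := PS_cR hn
  have hlog4 : 0 ≤ Real.log 4 := Real.log_nonneg (by norm_num)
  set M := max x₁ 3 with hM
  have hM0 : 0 ≤ Real.log M := Real.log_nonneg (by linarith [le_max_right x₁ 3])
  refine ⟨(C + 33) + (Real.log 4 + 5) * Real.log M, by positivity, fun x hx => ?_⟩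
  have hx0 : 0 < x := by linarith
  have hl : 0 < Real.log x := Real.log_pos (by linarith)
  have hφ := inv_totient_bounds q
  obtain ⟨b1, b2, b3⟩ := theta_bounds (q := q) (by linarith : 1 ≤ x) n
  have hxl : 0 ≤ x / Real.log x := by positivity
  have hxφ : x / q.totient = x * (q.totient : ℝ)⁻¹ := div_eq_mul_inv _ _
  rcases le_total x M with h | h
  · have h1 : |chebyshevThetaAP x q n - x / q.totient| ≤ (Real.log 4 + 5) * x := by
      rw [hxφ, abs_le]
      constructor <;> nlinarith [mul_nonneg hlog4 hx0.le]
    have h2 : x ≤ Real.log M * (x / Real.log x) := by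
      rw [← mul_div_assoc, le_div_iff₀ hl, mul_comm]
      gcongr
    calc _ ≤ (Real.log 4 + 5) * x := h1
      _ ≤ (Real.log 4 + 5) * (Real.log M * (x / Real.log x)) := by gcongr
      _ ≤ _ := by nlinarith [mul_nonneg (by linarith : 0 ≤ C + 33) hxl]
  · have hp := hP x ((le_max_left _ _).trans h)
    have hPS : PS (cR q (n : ZMod q)) x = ∑ k ∈ Finset.Ioc 0 ⌊x⌋₊, residueClass (n : ZMod q) k -
        ⌊x⌋₊ * (q.totient : ℝ)⁻¹ := by
      unfold PS cR
      rw [Finset.sum_sub_distrib]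
      simp
    have h1 : |(⌊x⌋₊ : ℝ) * (q.totient : ℝ)⁻¹ - x / q.totient| ≤ 1 := by
      rw [hxφ, ← sub_mul, abs_mul, abs_of_nonneg hφ.1]
      have := Nat.floor_le hx0.le
      have := Nat.lt_floor_add_one x
      have : |(⌊x⌋₊ : ℝ) - x| ≤ 1 := by rw [abs_le]; constructor <;> linarith
      nlinarith [abs_nonneg ((⌊x⌋₊ : ℝ) - x)]
    have h2 : 1 ≤ x / Real.log x := by
      rw [one_le_div hl]
      linarith [Real.log_le_sub_one_of_pos hx0]
    have h3 : 2 * √x * Real.log x ≤ 32 * (x / Real.log x) := by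
      have h4 := Real.log_le_rpow_div hx0.le (by norm_num : (0 : ℝ) < 1 / 4)
      set r := x ^ ((1 : ℝ) / 4) with hr
      have hr0 : 0 ≤ r := by positivity
      have hr2 : r ^ 2 = √x := by
        rw [hr, ← Real.rpow_natCast, ← Real.rpow_mul hx0.le, Real.sqrt_eq_rpow]; norm_num
      have h5 : Real.log x ^ 2 ≤ 16 * √x := by
        rw [← hr2]
        have : Real.log x ≤ 4 * r := by linarith
        nlinarith
      rw [← mul_div_assoc, le_div_iff₀ hl]
      have h6 : √x * √x = x := Real.mul_self_sqrt hx0.le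
      nlinarith [Real.sqrt_nonneg x]
    have htri : |chebyshevThetaAP x q n - x / q.totient| ≤
        2 * √x * Real.log x + C * (x / Real.log x) + 1 := by
      rw [hPS] at hp
      rw [abs_le] at *
      constructor <;> linarith
    nlinarith [mul_nonneg (mul_nonneg (by linarith : 0 ≤ Real.log 4 + 5) hM0) hxl]

end
end PNTAP

/-- For each integer `2 ≤ a ≤ 316` there exist constants `c > 0` and
`x₀ ≤ 4.81·10^9` such that for every integer `n` co-prime to `a` and every real
`x ≥ x₀`, `|θ(x; a², n) − x/φ(a²)| < c x / log x`. -/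
theorem exists_theta_AP_bound (a : ℕ) (ha2 : 2 ≤ a) (ha : a ≤ 316) :
    ∃ c x₀ : ℝ, 0 < c ∧ x₀ ≤ 4.81 * 10 ^ 9 ∧
      ∀ n : ℕ, Nat.gcd n a = 1 → ∀ x : ℝ, x₀ ≤ x →
        |chebyshevThetaAP x (a ^ 2) n - x / (Nat.totient (a ^ 2))| < c * x / Real.log x := by
  have hq0 : a ^ 2 ≠ 0 := by positivity
  haveI : NeZero (a ^ 2) := ⟨hq0⟩
  have hmain : ∀ m : ℕ, ∃ C : ℝ, 0 ≤ C ∧ (IsUnit (m : ZMod (a ^ 2)) → ∀ x : ℝ, 3 ≤ x →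
      |chebyshevThetaAP x (a ^ 2) m - x / (Nat.totient (a ^ 2))| ≤ C * (x / Real.log x)) := by
    intro m
    by_cases hm : IsUnit (m : ZMod (a ^ 2))
    · obtain ⟨C, h1, h2⟩ := PNTAP.final_one m hm
      exact ⟨C, h1, fun _ => h2⟩
    · exact ⟨0, le_rfl, fun h => absurd h hm⟩
  choose C hC0 hC using hmain
  have hS : 0 ≤ ∑ m ∈ Finset.range (a ^ 2), C m := Finset.sum_nonneg fun m _ => hC0 m
  refine ⟨∑ m ∈ Finset.range (a ^ 2), C m + 1, 3, by linarith, by norm_num, fun n hn x hx => ?_⟩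
  have hl : 0 < Real.log x := Real.log_pos (by linarith)
  have hxl : 0 < x / Real.log x := by have : 0 < x := by linarith
                                      positivity
  have hcop : Nat.Coprime n (a ^ 2) := Nat.Coprime.pow_right 2 hn
  have hmod : chebyshevThetaAP x (a ^ 2) n = chebyshevThetaAP x (a ^ 2) (n % a ^ 2) := by
    simp [chebyshevThetaAP]
  have hu : IsUnit ((n % a ^ 2 : ℕ) : ZMod (a ^ 2)) := by
    rw [ZMod.natCast_mod]
    exact (ZMod.isUnit_iff_coprime n (a ^ 2)).2 hcop
  have h1 := hC _ hu x hx
  have h2 : C (n % a ^ 2) ≤ ∑ m ∈ Finset.range (a ^ 2), C m :=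
    Finset.single_le_sum (f := C) (fun m _ => hC0 m)
      (Finset.mem_range.2 (Nat.mod_lt _ (Nat.pos_of_ne_zero hq0)))
  rw [hmod, mul_div_assoc]
  refine h1.trans_lt ?_
  apply mul_lt_mul_of_pos_right _ hxl
  linarith
end
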